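/- Let u(y) = s*_ε(Ty) for y ∈ ℝ^d∖{0} and u(0) = 0. There exist constants C > 0 and Θ₀ ∈ (0,π), depending only on d and α, such that for every Θ ∈ (0,Θ₀) (in particular ε = tan(Θ/2) < 1/20) and every θ ∈ V_Θ with |θ - e_d/2| = 1/2: the fractional Laplacian Δ^{α/2}u(θ) exists and |Δ^{α/2}u(θ) + |θ|^{-2α}| ≤ C·ω(ε). -/

import Mathlib

open MeasureTheory Metric Real Set Filter RealInnerProductSpace
open scoped ENNReal

noncomputable section

/-- Euclidean space ℝ^d. -/
abbrev Ed (d : ℕ) := EuclideanSpace ℝ (Fin d)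

/-- The constant `A_{d,α}`. -/
noncomputable def fracConst (d : ℕ) (α : ℝ) : ℝ :=
  α * 2 ^ (α - 1) * π ^ (-(d : ℝ) / 2) * Real.Gamma (((d : ℝ) + α) / 2) / Real.Gamma (1 - α / 2)

/-- The fractional Laplacian `Δ^{α/2} Φ (x)` exists and equals `L`. -/
def fracLapAt (d : ℕ) (α : ℝ) (Φ : Ed d → ℝ) (x : Ed d) (L : ℝ) : Prop :=
  Filter.Tendsto
    (fun ε : ℝ => fracConst d α *
      ∫ y in {y : Ed d | ε < ‖y - x‖}, (Φ y - Φ x) * ‖y - x‖ ^ (-(d : ℝ) - α))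
    (nhdsWithin 0 (Set.Ioi 0)) (nhds L)

/-- The last coordinate of a vector in ℝ^d. -/
def lastCoord (d : ℕ) (x : Ed d) : ℝ :=
  if h : 0 < d then x ⟨d - 1, Nat.sub_lt h Nat.one_pos⟩ else 0

/-- The unit vector `e_d = (0,…,0,1)`. -/
def eLast (d : ℕ) : Ed d :=
  if h : 0 < d then EuclideanSpace.single ⟨d - 1, Nat.sub_lt h Nat.one_pos⟩ (1 : ℝ) else 0

/-- The right circular cone `Γ_Θ` of angle `Θ`. -/
def cone (d : ℕ) (Θ : ℝ) : Set (Ed d) := {x | ‖x‖ * Real.cos Θ < lastCoord d x}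

/-- The unit sphere `S^{d-1}` in ℝ^d. -/
def unitSphere (d : ℕ) : Set (Ed d) := Metric.sphere (0 : Ed d) 1

/-- The spherical cap `B_Θ`. -/
def capB (d : ℕ) (Θ : ℝ) : Set (Ed d) := {θ | θ ∈ unitSphere d ∧ Real.cos Θ < lastCoord d θ}

/-- The surface measure `σ`: the (d-1)-dimensional Hausdorff measure. -/
noncomputable def sphMeasure (d : ℕ) : Measure (Ed d) := μH[(d : ℝ) - 1]

/-- The kernel `u_λ(t)`. -/
noncomputable def uKernel (d : ℕ) (α lam t : ℝ) : ℝ :=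
  ∫ r in Set.Ioi (0 : ℝ), r ^ ((d : ℝ) + lam - 1) * (r ^ 2 - 2 * r * t + 1) ^ (-((d : ℝ) + α) / 2)

/-- The kernel `u_λ(t)` as a value in `[0,∞]`. -/
noncomputable def uKernelE (d : ℕ) (α lam t : ℝ) : ℝ≥0∞ :=
  ∫⁻ r in Set.Ioi (0 : ℝ),
    ENNReal.ofReal (r ^ ((d : ℝ) + lam - 1) * (r ^ 2 - 2 * r * t + 1) ^ (-((d : ℝ) + α) / 2))

/-- The spherical fractional Laplacian `Δ_S^{α/2} φ (η)` exists and equals `L`. -/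
def sphFracLapAt (d : ℕ) (α : ℝ) (φ : Ed d → ℝ) (η : Ed d) (L : ℝ) : Prop :=
  Filter.Tendsto
    (fun ε : ℝ => fracConst d α *
      ∫ θ in {θ : Ed d | θ ∈ unitSphere d ∧ ⟪θ, η⟫ ≤ Real.cos ε},
        (φ θ - φ η) * uKernel d α 0 ⟪θ, η⟫ ∂(sphMeasure d))
    (nhdsWithin 0 (Set.Ioi 0)) (nhds L)

/-- The integrand of the radial operator `R_λ`. -/
noncomputable def RopIntegrand (d : ℕ) (α lam : ℝ) (φ : Ed d → ℝ) (η θ : Ed d) : ℝ :=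
  φ θ * (uKernel d α lam ⟪θ, η⟫ - uKernel d α 0 ⟪θ, η⟫)

/-- The radial operator `R_λ φ (η)`. -/
noncomputable def Rop (d : ℕ) (α lam : ℝ) (φ : Ed d → ℝ) (η : Ed d) : ℝ :=
  fracConst d α * ∫ θ in unitSphere d, RopIntegrand d α lam φ η θ ∂(sphMeasure d)

/-- The modulus `ω`. -/
noncomputable def omegaFn (α Θ : ℝ) : ℝ :=
  if α < 1 then Θ ^ α else if α = 1 then Θ * |Real.log Θ| else Θ

/-- The Euler beta function. -/
noncomputable def eulerBeta (a b : ℝ) : ℝ := Real.Gamma a * Real.Gamma b / Real.Gamma (a + b)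

/-- The constant `B_{d,α}`. -/
noncomputable def Bconst (d : ℕ) (α : ℝ) : ℝ :=
  Real.Gamma (((d : ℝ) + α) / 2) / (π ^ ((3 : ℝ) / 2) * Real.Gamma (((d : ℝ) - 1 + α) / 2)) *
    Real.sin (π * α / 2) * eulerBeta (1 + α / 2) (((d : ℝ) - 1) / 2)

/-- The constant `C_{d-1,α}`. -/
noncomputable def Cexit (d : ℕ) (α : ℝ) : ℝ :=
  Real.Gamma (((d : ℝ) - 1) / 2) /
    (2 ^ α * Real.Gamma (((d : ℝ) - 1 + α) / 2) * Real.Gamma (1 + α / 2))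

/-- The constant `C̃_{d,α}`. -/
noncomputable def Ctilde (d : ℕ) (α : ℝ) : ℝ :=
  π ^ (((d : ℝ) - 1) / 2) / Real.Gamma (((d : ℝ) - 1) / 2) * Cexit d α *
    eulerBeta (1 + α / 2) (((d : ℝ) - 1) / 2)

/-- The norm `|ỹ|` of the first `d-1` coordinates of `y`. -/
noncomputable def tnorm (d : ℕ) (y : Ed d) : ℝ :=
  Real.sqrt (∑ i : Fin d, if (i : ℕ) < d - 1 then (y i) ^ 2 else 0)

/-- The function `s_ε`. -/
noncomputable def sExit (d : ℕ) (α ε : ℝ) (y : Ed d) : ℝ :=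
  Cexit d α * (max (ε ^ 2 - tnorm d y ^ 2) 0) ^ (α / 2)

/-- The cylinder `Π_ε`. -/
def cylPi (d : ℕ) (ε : ℝ) : Set (Ed d) := {y | tnorm d y < ε}

/-- The hyperplane `F = {y : y_d = 1}`. -/
def hyperF (d : ℕ) : Set (Ed d) := {y | lastCoord d y = 1}

/-- The Riesz kernel `h(y) = |y|^{α-d}`. -/
noncomputable def rieszH (d : ℕ) (α : ℝ) (y : Ed d) : ℝ := ‖y‖ ^ (α - (d : ℝ))

/-- The inversion `T x = x/|x|²`. -/
noncomputable def inversion (d : ℕ) (x : Ed d) : Ed d := (‖x‖ ^ 2)⁻¹ • x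

/-- The shifted cone `V_Θ = Γ_Θ + e_d/2`. -/
def Vcone (d : ℕ) (Θ : ℝ) : Set (Ed d) := {y | y - (1 / 2 : ℝ) • eLast d ∈ cone d Θ}

/-- The spindle `L_ε = T(V_Θ)` with `ε = tan(Θ/2)`, i.e. `Θ = 2 arctan ε`. -/
def Lspindle (d : ℕ) (ε : ℝ) : Set (Ed d) := inversion d '' Vcone d (2 * Real.arctan ε)

/-- The curvilinear projection `y* = T(e_d/2 + (Ty - e_d/2)/(2|Ty - e_d/2|))`. -/
noncomputable def ystar (d : ℕ) (y : Ed d) : Ed d :=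
  inversion d ((1 / 2 : ℝ) • eLast d +
    (2 * ‖inversion d y - (1 / 2 : ℝ) • eLast d‖)⁻¹ • (inversion d y - (1 / 2 : ℝ) • eLast d))

open scoped Classical in
/-- The function `s*_ε`. -/
noncomputable def sStar (d : ℕ) (α ε : ℝ) (y : Ed d) : ℝ :=
  if y ∈ Lspindle d ε then Cexit d α * (max (ε ^ 2 - tnorm d (ystar d y) ^ 2) 0) ^ (α / 2)
  else 0

open scoped Classical in
/-- The function `u = K(h s*_ε)`, i.e. `u(y) = s*_ε(Ty)`, `u(0) = 0`. -/
noncomputable def uFn (d : ℕ) (α ε : ℝ) (y : Ed d) : ℝ :=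
  if y = 0 then 0 else sStar d α ε (inversion d y)

/-- The spherical profile `φ_Θ`. -/
noncomputable def profileFn (d : ℕ) (α Θ : ℝ) (θ : Ed d) : ℝ :=
  2 ^ α * Cexit d α *
    (max (Real.tan (Θ / 2) ^ 2 - ‖eLast d - θ‖ ^ 2 / ‖eLast d + θ‖ ^ 2) 0) ^ (α / 2)

/-- Laplacian on ℝ^d as the sum of pure second partial derivatives. -/
noncomputable def lapE (d : ℕ) (u : Ed d → ℝ) (x : Ed d) : ℝ :=
  ∑ i : Fin d,
    iteratedFDeriv ℝ 2 u x ![EuclideanSpace.single i (1 : ℝ), EuclideanSpace.single i (1 : ℝ)]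

/-- Laplacian on ℝ^d × ℝ as the sum of the d+1 pure second partial derivatives. -/
noncomputable def lapProd (d : ℕ) (U : Ed d × ℝ → ℝ) (p : Ed d × ℝ) : ℝ :=
  (∑ i : Fin d, iteratedFDeriv ℝ 2 U p
      ![(EuclideanSpace.single i (1 : ℝ), (0 : ℝ)), (EuclideanSpace.single i (1 : ℝ), (0 : ℝ))]) +
    iteratedFDeriv ℝ 2 U p ![((0 : Ed d), (1 : ℝ)), ((0 : Ed d), (1 : ℝ))]

/-- The Poisson kernel `P_t(x)` for the upper half-space. -/
noncomputable def poissonK (d : ℕ) (t : ℝ) (x : Ed d) : ℝ :=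
  Real.Gamma (((d : ℝ) + 1) / 2) / π ^ (((d : ℝ) + 1) / 2) * t *
    (‖x‖ ^ 2 + t ^ 2) ^ (-((d : ℝ) + 1) / 2)

end

/-!
The function `w ↦ u (e_d / 2 + w)` is homogeneous of degree `0` on the cone `Γ_Θ`, so polar
coordinates around `θ` reduce `Δ^{α/2} u (θ)` to integrals of second differences of `u` along the
lines through `θ`. On each line a projective change of the parameter turns `u` into
`(R - q)₊ ^ (α / 2)` times a smooth factor, with `q` a quadratic polynomial. For
`(R - q)₊ ^ (α / 2)` alone the second-difference integral is explicit (Getoor's formula): it is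
`-Γ(α/2) Γ(1 - α/2) κ ^ α`, where `κ²` is the leading coefficient of `q`, independently of the
base point. The projective weight and the smooth factor cost `O(ω(ε))`. Finally `κ ^ α` is close to
`|h̃| ^ α` in the direction `h`, and integrating this over the sphere the constants multiply to `1`.
-/

open Asymptotics Topology
open scoped NNReal

/-! ### Second differences -/

section SecondDiff

variable {E : Type*} [NormedAddCommGroup E] {f : E → ℝ} {x h : E}

/-- The symmetric second difference of `f` at `x` with increment `h`. -/
def secondDiff (f : E → ℝ) (x h : E) : ℝ := f (x + h) + f (x - h) - 2 * f x

theorem secondDiff_mul (f g : E → ℝ) (x h : E) :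
    secondDiff (fun y ↦ f y * g y) x h =
      f x * secondDiff g x h + g x * secondDiff f x h +
        (f (x + h) - f x) * (g (x + h) - g x) + (f (x - h) - f x) * (g (x - h) - g x) := by
  simp only [secondDiff]
  ring

theorem abs_secondDiff_le_of_bounded {B : ℝ} (hB : ∀ y, |f y| ≤ B) :
    |secondDiff f x h| ≤ 4 * B := by
  have h₁ := abs_le.1 (hB (x + h))
  have h₂ := abs_le.1 (hB (x - h))
  have h₃ := abs_le.1 (hB x)
  rw [secondDiff, abs_le]
  constructor <;> linarith [h₁.1, h₁.2, h₂.1, h₂.2, h₃.1, h₃.2]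

variable [NormedSpace ℝ E]

/-- The one-dimensional fractional Laplacian of order `α` of `f` at `x` along the direction `h`, up
to a constant factor. -/
noncomputable def secondDiffIntegral (α : ℝ) (f : E → ℝ) (x h : E) : ℝ :=
  ∫ t in Ioi (0 : ℝ), secondDiff f x (t • h) * t ^ (-1 - α)

theorem secondDiffIntegral_congr_line {F : Type*} [NormedAddCommGroup F] [NormedSpace ℝ F]
    {g : F → ℝ} {y k : F} (α : ℝ) (hfg : ∀ t : ℝ, f (x + t • h) = g (y + t • k)) :
    secondDiffIntegral α f x h = secondDiffIntegral α g y k := by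
  have hneg : ∀ t : ℝ, f (x - t • h) = g (y - t • k) := fun t ↦ by
    simpa only [neg_smul, ← sub_eq_add_neg] using hfg (-t)
  have h0 : f x = g y := by simpa using hfg 0
  simp only [secondDiffIntegral, secondDiff, hfg, hneg, h0]

theorem secondDiffIntegral_const_mul (α a : ℝ) (f : E → ℝ) (x h : E) :
    secondDiffIntegral α (fun y ↦ a * f y) x h = a * secondDiffIntegral α f x h := by
  rw [secondDiffIntegral, secondDiffIntegral, ← integral_const_mul]
  congr 1 with t
  simp only [secondDiff]
  ring

theorem secondDiffIntegral_smul_right (α : ℝ) (f : E → ℝ) (x h : E) {b : ℝ} (hb : 0 < b) :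
    secondDiffIntegral α f x (b • h) = b ^ α * secondDiffIntegral α f x h := by
  have hcomp := integral_comp_mul_left_Ioi (fun t ↦ secondDiff f x (t • h) * t ^ (-1 - α)) 0 hb
  rw [mul_zero, smul_eq_mul] at hcomp
  have hpt : ∀ t ∈ Ioi (0 : ℝ), secondDiff f x (t • b • h) * t ^ (-1 - α) =
      b ^ (1 + α) * (secondDiff f x ((b * t) • h) * (b * t) ^ (-1 - α)) := by
    intro t ht
    have hbb : b ^ (1 + α) * b ^ (-1 - α) = 1 := by rw [← rpow_add hb]; simp
    rw [mul_rpow hb.le (le_of_lt ht), smul_smul, mul_comm t b]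
    linear_combination -(secondDiff f x ((b * t) • h) * t ^ (-1 - α)) * hbb
  rw [secondDiffIntegral, secondDiffIntegral, setIntegral_congr_fun measurableSet_Ioi hpt,
    integral_const_mul, hcomp, ← mul_assoc, rpow_add hb, rpow_one, mul_right_comm b,
    mul_inv_cancel₀ hb.ne', one_mul]

theorem abs_sub_sub_fderiv_le_of_lipschitzOnWith {S : Set E} {K : ℝ≥0} (hS : Convex ℝ S)
    (hf : ∀ y ∈ S, DifferentiableAt ℝ f y) (hK : LipschitzOnWith K (fderiv ℝ f) S)
    (hx : x ∈ S) (hxh : x + h ∈ S) : |f (x + h) - f x - fderiv ℝ f x h| ≤ K * ‖h‖ ^ 2 := by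
  have hmv := (hS.inter (convex_closedBall x ‖h‖)).norm_image_sub_le_of_norm_hasFDerivWithin_le'
    (f := f) (f' := fderiv ℝ f) (C := K * ‖h‖) (φ := fderiv ℝ f x) (x := x) (y := x + h)
    (fun y hy ↦ (hf y hy.1).hasFDerivAt.hasFDerivWithinAt)
    (fun y hy ↦ by
      rw [← dist_eq_norm]
      exact (hK.dist_le_mul y hy.1 x hx).trans (mul_le_mul_of_nonneg_left hy.2 K.2))
    ⟨hx, mem_closedBall_self (norm_nonneg _)⟩ ⟨hxh, by simp⟩
  rw [add_sub_cancel_left, Real.norm_eq_abs] at hmv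
  exact hmv.trans_eq (by ring)

theorem abs_secondDiff_le_of_lipschitzOnWith {S : Set E} {K : ℝ≥0} (hS : Convex ℝ S)
    (hf : ∀ y ∈ S, DifferentiableAt ℝ f y) (hK : LipschitzOnWith K (fderiv ℝ f) S)
    (hx : x ∈ S) (hadd : x + h ∈ S) (hsub : x - h ∈ S) :
    |secondDiff f x h| ≤ 2 * K * ‖h‖ ^ 2 := by
  have h₁ := abs_sub_sub_fderiv_le_of_lipschitzOnWith hS hf hK hx hadd
  have h₂ := abs_sub_sub_fderiv_le_of_lipschitzOnWith hS hf hK hx (sub_eq_add_neg x h ▸ hsub)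
  rw [norm_neg, map_neg, ← sub_eq_add_neg] at h₂
  rw [secondDiff]
  rw [abs_le] at *
  constructor <;> linarith [h₁.1, h₁.2, h₂.1, h₂.2]

theorem secondDiff_isBigO_sq (hf : ContDiffAt ℝ 2 f x) :
    (fun h ↦ secondDiff f x h) =O[𝓝 0] fun h ↦ ‖h‖ ^ 2 := by
  obtain ⟨K, t, ht, hK⟩ := (hf.fderiv_right (m := 1) (by norm_num)).exists_lipschitzOnWith
  have hdiff : ∀ᶠ y in 𝓝 x, DifferentiableAt ℝ f y :=
    (hf.eventually (by simp)).mono fun y hy ↦ hy.differentiableAt (by simp)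
  obtain ⟨r, hr, hball⟩ := Metric.mem_nhds_iff.1 (inter_mem ht hdiff)
  refine IsBigO.of_bound (2 * K) ?_
  filter_upwards [ball_mem_nhds 0 hr] with h hh
  rw [Real.norm_eq_abs, norm_pow, norm_norm]
  rw [mem_ball_zero_iff] at hh
  exact abs_secondDiff_le_of_lipschitzOnWith (convex_ball x r) (fun y hy ↦ (hball hy).2)
    (hK.mono fun y hy ↦ (hball hy).1) (mem_ball_self hr) (by simpa using hh) (by simpa using hh)

theorem exists_lipschitzOnWith_of_contDiffAt {F : Type*} [NormedAddCommGroup F] [NormedSpace ℝ F]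
    {S : Set E} {φ : E → F} (hS : IsCompact S) (hφ : ∀ y ∈ S, ContDiffAt ℝ 1 φ y) :
    ∃ K : ℝ≥0, LipschitzOnWith K φ S :=
  LocallyLipschitzOn.exists_lipschitzOnWith_of_compact hS fun y hy ↦ by
    obtain ⟨K, t, ht, hK⟩ := (hφ y hy).exists_lipschitzOnWith
    exact ⟨K, t, mem_nhdsWithin_of_mem_nhds ht, hK⟩

theorem exists_abs_secondDiff_le_of_isCompact {S : Set E} (hS : IsCompact S) (hconv : Convex ℝ S)
    (hf : ∀ y ∈ S, ContDiffAt ℝ 2 f y) :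
    ∃ K : ℝ≥0, LipschitzOnWith K f S ∧ ∀ x ∈ S, ∀ h, x + h ∈ S → x - h ∈ S →
      |secondDiff f x h| ≤ K * ‖h‖ ^ 2 := by
  obtain ⟨K₁, hK₁⟩ := exists_lipschitzOnWith_of_contDiffAt hS
    fun y hy ↦ (hf y hy).of_le (by norm_num)
  obtain ⟨K₂, hK₂⟩ := exists_lipschitzOnWith_of_contDiffAt hS
    fun y hy ↦ (hf y hy).fderiv_right (m := 1) (by norm_num)
  refine ⟨max K₁ (2 * K₂), hK₁.weaken (le_max_left _ _), fun x hx h hadd hsub ↦ ?_⟩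
  refine (abs_secondDiff_le_of_lipschitzOnWith hconv
    (fun y hy ↦ (hf y hy).differentiableAt (by simp)) hK₂ hx hadd hsub).trans ?_
  gcongr
  exact_mod_cast le_max_right K₁ (2 * K₂)

theorem exists_abs_secondDiff_le_min {B : ℝ} (hB : ∀ y, |f y| ≤ B) (hf : ContDiffAt ℝ 2 f x) :
    ∃ K, ∀ h, |secondDiff f x h| ≤ K * min (‖h‖ ^ 2) 1 := by
  obtain ⟨K, hK⟩ := (secondDiff_isBigO_sq hf).bound
  obtain ⟨r, hr, hball⟩ := Metric.mem_nhds_iff.1 hK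
  have hB0 : 0 ≤ B := (abs_nonneg _).trans (hB x)
  refine ⟨max |K| (4 * B) + 4 * B / r ^ 2, fun h ↦ ?_⟩
  have hle : 4 * B ≤ max |K| (4 * B) + 4 * B / r ^ 2 :=
    (le_max_right _ _).trans (le_add_of_nonneg_right (by positivity))
  have hbd : |secondDiff f x h| ≤ 4 * B := abs_secondDiff_le_of_bounded hB
  rw [mul_min_of_nonneg _ _ (by positivity), mul_one]
  refine le_min ?_ (hbd.trans hle)
  rw [add_mul]
  rcases lt_or_ge ‖h‖ r with hh | hh
  · have hKh : |secondDiff f x h| ≤ K * ‖‖h‖ ^ 2‖ := hball (mem_ball_zero_iff.2 hh)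
    rw [norm_pow, norm_norm] at hKh
    have hKle : K * ‖h‖ ^ 2 ≤ max |K| (4 * B) * ‖h‖ ^ 2 := by
      gcongr; exact (le_abs_self K).trans (le_max_left _ _)
    have : 0 ≤ 4 * B / r ^ 2 * ‖h‖ ^ 2 := by positivity
    linarith
  · have hfar : 4 * B ≤ 4 * B / r ^ 2 * ‖h‖ ^ 2 := by
      rw [div_mul_eq_mul_div, le_div_iff₀ (by positivity)]
      gcongr
    have : 0 ≤ max |K| (4 * B) * ‖h‖ ^ 2 := by positivity
    linarith

end SecondDiff

/-! ### Integrals against `t ^ (-1 - α)` -/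

section Tails

variable {α : ℝ}

theorem integrableOn_Ioi_min_sq_one_mul_rpow (hα : 0 < α) (hα2 : α < 2) :
    IntegrableOn (fun t : ℝ ↦ min (t ^ 2) 1 * t ^ (-1 - α)) (Ioi 0) := by
  rw [← Ioc_union_Ioi_eq_Ioi zero_le_one]
  refine IntegrableOn.union ?_ ?_
  · have hint : IntegrableOn (fun t : ℝ ↦ t ^ (1 - α)) (Ioc 0 1) :=
      (intervalIntegrable_iff_integrableOn_Ioc_of_le zero_le_one).1
        (intervalIntegral.intervalIntegrable_rpow' (by linarith))
    refine hint.congr_fun (fun t ht ↦ ?_) measurableSet_Ioc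
    simp only
    rw [min_eq_left (pow_le_one₀ ht.1.le ht.2), ← rpow_natCast, ← rpow_add ht.1]
    congr 1; push_cast; ring
  · refine (integrableOn_Ioi_rpow_of_lt (by linarith : -1 - α < -1) one_pos).congr_fun
      (fun t ht ↦ ?_) measurableSet_Ioi
    simp only
    rw [min_eq_right (one_le_pow₀ (le_of_lt ht)), one_mul]

theorem integrableOn_mul_rpow_of_le_min {g : ℝ → ℝ} {s : Set ℝ} {K : ℝ} (hα : 0 < α) (hα2 : α < 2)
    (hs : MeasurableSet s) (hs0 : s ⊆ Ioi 0) (hm : AEStronglyMeasurable g (volume.restrict s))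
    (hg : ∀ t ∈ s, |g t| ≤ K * min (t ^ 2) 1) : IntegrableOn (fun t ↦ g t * t ^ (-1 - α)) s := by
  refine Integrable.mono' (((integrableOn_Ioi_min_sq_one_mul_rpow hα hα2).mono_set hs0).const_mul K)
    (hm.mul (by fun_prop)) ((ae_restrict_iff' hs).2 (.of_forall fun t ht ↦ ?_))
  have ht0 : 0 < t := hs0 ht
  rw [norm_mul, Real.norm_eq_abs, Real.norm_of_nonneg (by positivity), ← mul_assoc]
  exact mul_le_mul_of_nonneg_right (hg t ht) (by positivity)

theorem integrableOn_secondDiff_mul_rpow {E : Type*} [NormedAddCommGroup E] [NormedSpace ℝ E]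
    [MeasurableSpace E] [BorelSpace E] {f : E → ℝ} {x : E} {B : ℝ} (hα : 0 < α)
    (hα2 : α < 2) (hm : Measurable f) (hB : ∀ y, |f y| ≤ B) (hf : ContDiffAt ℝ 2 f x) (h : E) :
    IntegrableOn (fun t : ℝ ↦ secondDiff f x (t • h) * t ^ (-1 - α)) (Ioi 0) := by
  obtain ⟨K, hK⟩ := exists_abs_secondDiff_le_min hB hf
  have hline : ∀ k : E, Measurable fun t : ℝ ↦ f (x + t • k) := fun k ↦
    hm.comp (by fun_prop : Continuous fun t : ℝ ↦ x + t • k).measurable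
  refine integrableOn_mul_rpow_of_le_min (K := |K| * max (‖h‖ ^ 2) 1) hα hα2 measurableSet_Ioi
    Subset.rfl ?_ fun t _ ↦ (hK _).trans ?_
  · have := hline (-h)
    simp only [smul_neg, ← sub_eq_add_neg] at this
    exact (((hline h).add this).sub_const _).aestronglyMeasurable
  · rw [norm_smul, mul_pow, Real.norm_eq_abs, sq_abs, mul_assoc]
    refine mul_le_mul (le_abs_self K) ?_ (by positivity) (abs_nonneg K)
    rw [mul_min_of_nonneg _ _ (by positivity), mul_one, mul_comm]
    refine min_le_min ?_ (le_max_right _ _)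
    gcongr
    exact le_max_left _ _

theorem integrableOn_Ioi_mul_rpow_of_bounded {g : ℝ → ℝ} {a K : ℝ} (ha : 0 < a) (hα : 0 < α)
    (hm : AEStronglyMeasurable g (volume.restrict (Ioi a))) (hg : ∀ t ∈ Ioi a, |g t| ≤ K) :
    IntegrableOn (fun t ↦ g t * t ^ (-1 - α)) (Ioi a) :=
  (integrableOn_Ioi_rpow_of_lt (by linarith) ha).bdd_mul hm
    ((ae_restrict_iff' measurableSet_Ioi).2 (.of_forall hg))

theorem integral_Ioi_rpow_neg_one_sub {a : ℝ} (ha : 0 < a) (hα : 0 < α) :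
    ∫ t in Ioi a, t ^ (-1 - α) = a ^ (-α) / α := by
  rw [integral_Ioi_rpow_of_lt (by linarith) ha, show -1 - α + 1 = -α by ring, neg_div_neg_eq]

theorem abs_integral_Ioi_mul_rpow_le {g : ℝ → ℝ} {a K : ℝ} (ha : 0 < a) (hα : 0 < α)
    (hg : ∀ t ∈ Ioi a, |g t| ≤ K) :
    |∫ t in Ioi a, g t * t ^ (-1 - α)| ≤ K * (a ^ (-α) / α) := by
  rw [← integral_Ioi_rpow_neg_one_sub ha hα, ← integral_const_mul, ← Real.norm_eq_abs]
  refine norm_integral_le_of_norm_le ((integrableOn_Ioi_rpow_of_lt (by linarith) ha).const_mul K)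
    ((ae_restrict_iff' measurableSet_Ioi).2 (.of_forall fun t ht ↦ ?_))
  have ht0 : 0 < t := ha.trans ht
  rw [norm_mul, Real.norm_eq_abs, Real.norm_of_nonneg (by positivity)]
  exact mul_le_mul_of_nonneg_right (hg t ht) (by positivity)

end Tails

theorem tendsto_setIntegral_Ioi_nhdsGT {g : ℝ → ℝ} {a : ℝ} (hg : IntegrableOn g (Ioi a)) :
    Tendsto (fun δ ↦ ∫ t in Ioi δ, g t) (𝓝[>] a) (𝓝 (∫ t in Ioi a, g t)) := by
  have hcover : AECover (volume.restrict (Ioi a)) (𝓝[>] a) fun δ ↦ Ioi δ :=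
    aecover_Ioi_of_Ioi (tendsto_nhdsWithin_of_tendsto_nhds tendsto_id)
  refine (hcover.integral_tendsto_of_countably_generated hg).congr' ?_
  filter_upwards [self_mem_nhdsWithin] with δ hδ
  rw [Measure.restrict_restrict measurableSet_Ioi, inter_eq_left.2 (Ioi_subset_Ioi (le_of_lt hδ))]

/-! ### Euler integrals -/

theorem integral_Ioo_rpow_mul_one_sub_rpow {a b : ℝ} (ha : 0 < a) (hb : 0 < b) :
    ∫ x in Ioo (0 : ℝ) 1, x ^ (a - 1) * (1 - x) ^ (b - 1) = Gamma a * Gamma b / Gamma (a + b) := by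
  have hbeta := ProbabilityTheory.beta_pos ha hb
  have hone : ∫ x in Ioo (0 : ℝ) 1,
      1 / ProbabilityTheory.beta a b * x ^ (a - 1) * (1 - x) ^ (b - 1) = 1 := by
    rw [integral_eq_lintegral_of_nonneg_ae, ← ProbabilityTheory.lintegral_betaPDF,
      ProbabilityTheory.lintegral_betaPDF_eq_one ha hb, ENNReal.toReal_one]
    · refine (ae_restrict_iff' measurableSet_Ioo).2 (.of_forall fun x hx ↦ ?_)
      exact mul_nonneg (mul_nonneg (by positivity) (rpow_nonneg hx.1.le _))
        (rpow_nonneg (by linarith [hx.2]) _)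
    · exact Measurable.aestronglyMeasurable (by fun_prop)
  simp_rw [mul_assoc, integral_const_mul] at hone
  rwa [one_div, inv_mul_eq_one₀ hbeta.ne', eq_comm] at hone

theorem hasDerivAt_one_sub_sq_div {a z : ℝ} (h : 1 - a * z ^ 2 ≠ 0) :
    HasDerivAt (fun z : ℝ ↦ (1 - z ^ 2) / (1 - a * z ^ 2))
      (-(2 * z * (1 - a) / (1 - a * z ^ 2) ^ 2)) z := by
  have hnum : HasDerivAt (fun z : ℝ ↦ 1 - z ^ 2) (-(2 * z)) z := by
    simpa using (hasDerivAt_pow 2 z).const_sub 1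
  have hden : HasDerivAt (fun z : ℝ ↦ 1 - a * z ^ 2) (-(a * (2 * z))) z := by
    simpa using ((hasDerivAt_pow 2 z).const_mul a).const_sub 1
  exact (hnum.fun_div hden h).congr_deriv (by field_simp; ring)

theorem one_sub_sq_rpow_mul_rpow_div_eq {p a z : ℝ} (hz : z ∈ Ioo (0 : ℝ) 1) (ha1 : a < 1)
    (hD : 0 < 1 - a * z ^ 2) :
    (1 - z ^ 2) ^ (p - 1) * z ^ (1 - 2 * p) / (1 - a * z ^ 2) =
      (1 - a) ^ (p - 1) * (2 * z * (1 - a) / (1 - a * z ^ 2) ^ 2 *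
        (((1 - z ^ 2) / (1 - a * z ^ 2)) ^ (p - 1) *
          (1 - (1 - z ^ 2) / (1 - a * z ^ 2)) ^ (-p)) / 2) := by
  have hz0 : 0 < z := hz.1
  have h1z : 0 < 1 - z ^ 2 := by nlinarith [hz.2]
  have h1a : 0 < 1 - a := by linarith
  have hcompl : 1 - (1 - z ^ 2) / (1 - a * z ^ 2) = (1 - a) * z ^ 2 / (1 - a * z ^ 2) := by
    rw [one_sub_div hD.ne']; ring
  have hzp : z ^ (1 - 2 * p) = z * z ^ (2 * -p) := by
    rw [sub_eq_add_neg, ← mul_neg, rpow_add hz0, rpow_one]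
  rw [hcompl]
  generalize 1 - a * z ^ 2 = D at hD ⊢
  rw [div_rpow h1z.le hD.le, div_rpow (by positivity) hD.le,
    mul_rpow h1a.le (by positivity), ← rpow_natCast_mul hz0.le, Nat.cast_ofNat, hzp,
    rpow_neg h1a.le, rpow_neg hD.le, rpow_sub_one h1a.ne', rpow_sub_one hD.ne']
  field_simp

theorem integral_Ioo_one_sub_sq_rpow_mul_rpow_div {p a : ℝ} (hp : 0 < p) (hp1 : p < 1)
    (ha : 0 ≤ a) (ha1 : a < 1) :
    ∫ z in Ioo (0 : ℝ) 1, (1 - z ^ 2) ^ (p - 1) * z ^ (1 - 2 * p) / (1 - a * z ^ 2) =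
      (1 - a) ^ (p - 1) * (Gamma p * Gamma (1 - p)) / 2 := by
  have hden : ∀ z ∈ Icc (0 : ℝ) 1, 0 < 1 - a * z ^ 2 := fun z hz ↦ by
    have : z ^ 2 ≤ 1 := pow_le_one₀ hz.1 hz.2
    nlinarith
  have hbeta := integral_Ioo_rpow_mul_one_sub_rpow hp (by linarith : 0 < 1 - p)
  rw [add_sub_cancel, Gamma_one, div_one, sub_sub_cancel_left] at hbeta
  -- Substitute `x = (1 - z ^ 2) / (1 - a * z ^ 2)` in the beta integral.
  have hsub := integral_Icc_deriv_smul_of_deriv_nonpos (a := 0) (b := 1)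
    (f := fun z ↦ (1 - z ^ 2) / (1 - a * z ^ 2))
    (g := fun x : ℝ ↦ x ^ (p - 1) * (1 - x) ^ (-p))
    (fun z hz ↦ (hasDerivAt_one_sub_sq_div (hden z hz).ne').continuousAt.continuousWithinAt)
    (fun z hz ↦ hasDerivAt_one_sub_sq_div (hden z (Ioo_subset_Icc_self hz)).ne')
    (fun z hz ↦ neg_nonpos.2 (by have := hz.1; have := sub_pos.2 ha1; positivity)) zero_le_one
  norm_num at hsub
  rw [integral_neg, neg_inj, integral_Icc_eq_integral_Ioo, integral_Icc_eq_integral_Ioo,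
    hbeta] at hsub
  rw [← hsub, mul_div_assoc, ← integral_div, ← integral_const_mul]
  exact setIntegral_congr_fun measurableSet_Ioo fun z hz ↦
    one_sub_sq_rpow_mul_rpow_div_eq hz ha1 (hden z (Ioo_subset_Icc_self hz))

theorem integrableOn_Ioo_one_sub_sq_rpow_mul_rpow_div {p a : ℝ} (hp : 0 < p) (hp1 : p < 1)
    (ha : 0 ≤ a) (ha1 : a < 1) :
    IntegrableOn (fun z : ℝ ↦ (1 - z ^ 2) ^ (p - 1) * z ^ (1 - 2 * p) / (1 - a * z ^ 2))
      (Ioo 0 1) := by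
  refine Integrable.of_integral_ne_zero ?_
  rw [integral_Ioo_one_sub_sq_rpow_mul_rpow_div hp hp1 ha ha1]
  have := rpow_pos_of_pos (sub_pos.2 ha1) (p - 1)
  have := Gamma_pos_of_pos hp
  have := Gamma_pos_of_pos (sub_pos.2 hp1)
  positivity

/-! ### Projective substitution -/

section Projective

variable {f F G g : ℝ → ℝ} {α ρ c a b B δ : ℝ}

/-- The increment of `F` from `0`, weighted by the density which the substitution
`τ = t / (ρ + c * t)` produces out of `t ^ (-1 - α) dt`, relative to
`ρ ^ (-α) * τ ^ (-1 - α) dτ`. -/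
noncomputable def projIncrement (α c : ℝ) (F : ℝ → ℝ) (τ : ℝ) : ℝ :=
  (F τ - F 0) * (1 - c * τ) ^ (α - 1)

theorem projIncrement_zero (α c : ℝ) (F : ℝ → ℝ) : projIncrement α c F 0 = 0 := by
  simp [projIncrement]

theorem projIncrement_neg (α c : ℝ) (F : ℝ → ℝ) (τ : ℝ) :
    projIncrement α c F (-τ) = projIncrement α (-c) (fun σ ↦ F (-σ)) τ := by
  simp [projIncrement]

theorem one_sub_mul_pos_of_le {τ : ℝ} (hca : c * a < 1) (hτ : 0 ≤ τ) (hτa : τ ≤ a) :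
    0 < 1 - c * τ := by
  rcases le_total c 0 with hc | hc
  · linarith [mul_nonpos_of_nonpos_of_nonneg hc hτ]
  · linarith [mul_le_mul_of_nonneg_left hτa hc]

theorem add_mul_projective_inv {τ : ℝ} (hτ : 1 - c * τ ≠ 0) :
    ρ + c * (ρ * τ / (1 - c * τ)) = ρ / (1 - c * τ) := by
  field_simp; ring

theorem projective_projective_inv {τ : ℝ} (hρ : ρ ≠ 0) (hτ : 1 - c * τ ≠ 0) :
    ρ * τ / (1 - c * τ) / (ρ + c * (ρ * τ / (1 - c * τ))) = τ := by
  rw [add_mul_projective_inv hτ, div_div_div_cancel_right₀ hτ, mul_div_cancel_left₀ _ hρ]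

theorem projective_inv_projective {t : ℝ} (hρ : ρ ≠ 0) (ht : ρ + c * t ≠ 0) :
    ρ * (t / (ρ + c * t)) / (1 - c * (t / (ρ + c * t))) = t := by
  have hden : 1 - c * (t / (ρ + c * t)) = ρ / (ρ + c * t) := by field_simp; ring
  rw [hden, mul_div_assoc', div_div_div_cancel_right₀ ht, mul_div_cancel_left₀ _ hρ]

theorem hasDerivAt_projective_inv {τ : ℝ} (hτ : 1 - c * τ ≠ 0) :
    HasDerivAt (fun τ ↦ ρ * τ / (1 - c * τ)) (ρ / (1 - c * τ) ^ 2) τ := by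
  have hnum : HasDerivAt (fun τ : ℝ ↦ ρ * τ) ρ τ := by simpa using (hasDerivAt_id τ).const_mul ρ
  have hden : HasDerivAt (fun τ : ℝ ↦ 1 - c * τ) (-c) τ := by
    simpa using ((hasDerivAt_id τ).const_mul c).const_sub 1
  exact (hnum.fun_div hden hτ).congr_deriv (by ring)

theorem deriv_projective_inv_mul_rpow {τ : ℝ} (hρ : 0 < ρ) (hτ0 : 0 < τ) (hτ : 0 < 1 - c * τ) :
    ρ / (1 - c * τ) ^ 2 * (ρ * τ / (1 - c * τ)) ^ (-1 - α) =
      ρ ^ (-α) * ((1 - c * τ) ^ (α - 1) * τ ^ (-1 - α)) := by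
  have hdens : (1 - c * τ) ^ (α - 1) = ((1 - c * τ) ^ (-1 - α))⁻¹ * ((1 - c * τ) ^ 2)⁻¹ := by
    rw [← rpow_natCast, ← rpow_neg hτ.le, ← rpow_neg hτ.le, ← rpow_add hτ]
    congr 1; push_cast; ring
  have hρα : ρ ^ (-α) = ρ ^ (-1 - α) * ρ := by
    rw [← rpow_add_one hρ.ne']; congr 1; ring
  rw [div_rpow (by positivity) hτ.le, mul_rpow hρ.le hτ0.le, hdens, hρα]
  ring

theorem projective_inv_le_projective_inv (hρ : 0 < ρ) (hb : 0 ≤ b) (hba : b ≤ a)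
    (hca : c * a < 1) : ρ * b / (1 - c * b) ≤ ρ * a / (1 - c * a) := by
  rw [div_le_div_iff₀ (one_sub_mul_pos_of_le hca hb hba)
    (one_sub_mul_pos_of_le hca (hb.trans hba) le_rfl)]
  linarith [mul_le_mul_of_nonneg_left hba hρ.le]

theorem intervalIntegral_comp_projective (hρ : 0 < ρ) (hb : 0 < b) (hba : b ≤ a) (hca : c * a < 1) :
    ∫ t in (ρ * b / (1 - c * b))..(ρ * a / (1 - c * a)), g (t / (ρ + c * t)) * t ^ (-1 - α) =
      ρ ^ (-α) * ∫ τ in b..a, g τ * (1 - c * τ) ^ (α - 1) * τ ^ (-1 - α) := by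
  have hpos : ∀ τ ∈ Icc b a, 0 < 1 - c * τ := fun τ hτ ↦
    one_sub_mul_pos_of_le hca (hb.le.trans hτ.1) hτ.2
  have hder : ∀ τ ∈ Icc b a, HasDerivAt (fun τ ↦ ρ * τ / (1 - c * τ)) (ρ / (1 - c * τ) ^ 2) τ :=
    fun τ hτ ↦ hasDerivAt_projective_inv (hpos τ hτ).ne'
  rw [← intervalIntegral.integral_const_mul, intervalIntegral.integral_of_le
    (projective_inv_le_projective_inv hρ hb.le hba hca),
    intervalIntegral.integral_of_le hba, ← integral_Icc_eq_integral_Ioc,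
    ← integral_Icc_deriv_smul_of_deriv_nonneg
      (fun τ hτ ↦ (hder τ hτ).continuousAt.continuousWithinAt)
      (fun τ hτ ↦ hder τ (Ioo_subset_Icc_self hτ)) (fun τ _ ↦ by positivity) hba,
    integral_Icc_eq_integral_Ioc]
  refine setIntegral_congr_fun measurableSet_Ioc fun τ hτ ↦ ?_
  have hτpos := hpos τ (Ioc_subset_Icc_self hτ)
  simp only [projective_projective_inv hρ.ne' hτpos.ne', smul_eq_mul]
  rw [mul_left_comm, deriv_projective_inv_mul_rpow hρ (hb.trans hτ.1) hτpos]
  ring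

theorem integrableOn_Ioi_sub_mul_rpow (hα : 0 < α) (hδ : 0 < δ) (hfm : Measurable f)
    (hfB : ∀ t, |f t| ≤ B) : IntegrableOn (fun t ↦ (f t - f 0) * t ^ (-1 - α)) (Ioi δ) :=
  integrableOn_Ioi_mul_rpow_of_bounded (K := B + B) hδ hα
    (by fun_prop : Measurable fun t ↦ f t - f 0).aestronglyMeasurable
    fun t _ ↦ (abs_sub _ _).trans (add_le_add (hfB t) (hfB 0))

theorem integral_Ioi_projective (hα : 0 < α) (hρ : 0 < ρ) (hδ : 0 < δ) (hδρ : 0 < ρ + c * δ)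
    (hδa : δ / (ρ + c * δ) ≤ a) (hca : c * a < 1) (hfm : Measurable f) (hfB : ∀ t, |f t| ≤ B)
    (hfF : ∀ t ∈ Icc 0 (ρ * a / (1 - c * a)), f t = F (t / (ρ + c * t))) :
    ∫ t in Ioi δ, (f t - f 0) * t ^ (-1 - α) =
      ρ ^ (-α) * (∫ τ in (δ / (ρ + c * δ))..a, projIncrement α c F τ * τ ^ (-1 - α)) +
        ∫ t in Ioi (ρ * a / (1 - c * a)), (f t - f 0) * t ^ (-1 - α) := by
  have hb : 0 < δ / (ρ + c * δ) := div_pos hδ hδρ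
  have hle := projective_inv_le_projective_inv hρ hb.le hδa hca
  rw [projective_inv_projective hρ.ne' hδρ.ne'] at hle
  have hf0 : f 0 = F 0 := by simpa using hfF 0 ⟨le_rfl, hδ.le.trans hle⟩
  have hsub := intervalIntegral_comp_projective (α := α) (g := fun τ ↦ F τ - F 0) hρ hb hδa hca
  rw [projective_inv_projective hρ.ne' hδρ.ne'] at hsub
  rw [← sub_eq_iff_eq_add,
    intervalIntegral.integral_Ioi_sub_Ioi (integrableOn_Ioi_sub_mul_rpow hα hδ hfm hfB) hle]
  refine Eq.trans (intervalIntegral.integral_congr fun t ht ↦ ?_) hsub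
  rw [uIcc_of_le hle] at ht
  simp only [hf0, hfF t ⟨hδ.le.trans ht.1, ht.2⟩]

theorem tendsto_div_add_mul_nhdsGT (c : ℝ) (hρ : 0 < ρ) :
    Tendsto (fun δ : ℝ ↦ δ / (ρ + c * δ)) (𝓝[>] 0) (𝓝[>] 0) := by
  have hden : Tendsto (fun δ : ℝ ↦ ρ + c * δ) (𝓝 0) (𝓝 ρ) :=
    Continuous.tendsto' (by fun_prop) 0 ρ (by simp)
  refine tendsto_nhdsWithin_iff.2 ⟨?_, ?_⟩
  · have := (tendsto_id.div hden hρ.ne').mono_left (nhdsWithin_le_nhds (s := Ioi (0 : ℝ)))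
    rwa [zero_div] at this
  · filter_upwards [nhdsWithin_le_nhds (hden.eventually_const_lt hρ), self_mem_nhdsWithin]
      with δ hδρ hδ using div_pos hδ hδρ

theorem tendsto_intervalIntegral_nhdsGT (ha : 0 < a) (hg : IntegrableOn g (Ioc 0 a)) :
    Tendsto (fun b ↦ ∫ τ in b..a, g τ) (𝓝[>] 0) (𝓝 (∫ τ in Ioc 0 a, g τ)) := by
  have hg' : IntegrableOn g (uIcc 0 a) := by
    rwa [uIcc_of_le ha.le, integrableOn_Icc_iff_integrableOn_Ioc]
  have hcont := intervalIntegral.continuousOn_primitive_interval_left hg' 0 left_mem_uIcc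
  rw [uIcc_of_le ha.le] at hcont
  rw [← intervalIntegral.integral_of_le ha.le]
  exact hcont.tendsto.mono_left (nhdsWithin_le_of_mem (Icc_mem_nhdsGT ha))

theorem div_add_mem_Icc {x : ℝ} (hδ : 0 ≤ δ) (hρ : 0 < ρ) (hx : |x| ≤ ρ / 2) :
    δ / (ρ + x) ∈ Icc (δ / (2 * ρ)) (2 * δ / ρ) := by
  have hx' := abs_le.1 hx
  have hpos : 0 < ρ + x := by linarith [hx'.1]
  refine ⟨div_le_div_of_nonneg_left hδ hpos (by linarith [hx'.2]), ?_⟩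
  rw [div_le_div_iff₀ hpos hρ]
  nlinarith [mul_le_mul_of_nonneg_left hx'.1 hδ]

theorem abs_div_sub_sub_div_add_le {x : ℝ} (hδ : 0 ≤ δ) (hρ : 0 < ρ) (hx : |x| ≤ ρ / 2) :
    |δ / (ρ - x) - δ / (ρ + x)| ≤ 8 * |x| * δ / ρ ^ 2 := by
  have hx' := abs_le.1 hx
  have hadd : ρ / 2 ≤ ρ + x := by linarith [hx'.1]
  have hsub : ρ / 2 ≤ ρ - x := by linarith [hx'.2]
  have hadd0 : 0 < ρ + x := by linarith
  have hsub0 : 0 < ρ - x := by linarith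
  calc |δ / (ρ - x) - δ / (ρ + x)| = |2 * x * δ / ((ρ - x) * (ρ + x))| := by
        rw [div_sub_div _ _ hsub0.ne' hadd0.ne']; ring_nf
    _ = 2 * |x| * δ / ((ρ - x) * (ρ + x)) := by
        rw [abs_div, abs_mul, abs_mul, abs_two, abs_of_nonneg hδ, abs_of_pos (mul_pos hsub0 hadd0)]
    _ ≤ 2 * |x| * δ / (ρ / 2 * (ρ / 2)) := by gcongr
    _ = 8 * |x| * δ / ρ ^ 2 := by field_simp; ring

/- The two cutoffs `δ / (ρ ± c * δ)` differ by `O(δ ^ 2)`, while `g τ * τ ^ (-1 - α)` is of order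
`δ ^ (-α)` between them. -/
theorem abs_integral_between_cutoffs_le {K : ℝ} (hα : 0 < α) (hρ : 0 < ρ) (hδ : 0 < δ)
    (hc : |c * δ| ≤ ρ / 2) (hK : 0 ≤ K) (hg : ∀ τ ∈ Ioc 0 (2 * δ / ρ), |g τ| ≤ K * τ) :
    |∫ τ in (δ / (ρ + c * δ))..(δ / (ρ - c * δ)), g τ * τ ^ (-1 - α)| ≤
      K * (2 * ρ) ^ α * (8 * |c| / ρ ^ 2) * δ ^ (2 - α) := by
  have hmem₁ := div_add_mem_Icc hδ.le hρ hc
  have hmem₂ := div_add_mem_Icc hδ.le hρ ((abs_neg (c * δ)).trans_le hc)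
  rw [← sub_eq_add_neg] at hmem₂
  have hbound : ∀ τ ∈ uIoc (δ / (ρ + c * δ)) (δ / (ρ - c * δ)),
      ‖g τ * τ ^ (-1 - α)‖ ≤ K * (δ / (2 * ρ)) ^ (-α) := fun τ hτ ↦ by
    have hτmem := uIcc_subset_Icc hmem₁ hmem₂ (uIoc_subset_uIcc hτ)
    have hτ0 : 0 < τ := (by positivity : 0 < δ / (2 * ρ)).trans_le hτmem.1
    have hpow : τ * τ ^ (-1 - α) = τ ^ (-α) := by
      rw [← rpow_one_add' hτ0.le (by linarith)]; ring_nf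
    calc ‖g τ * τ ^ (-1 - α)‖ = |g τ| * τ ^ (-1 - α) := by
          rw [norm_mul, Real.norm_of_nonneg (rpow_nonneg hτ0.le _), Real.norm_eq_abs]
      _ ≤ K * τ * τ ^ (-1 - α) := by gcongr; exact hg τ ⟨hτ0, hτmem.2⟩
      _ = K * τ ^ (-α) := by rw [mul_assoc, hpow]
      _ ≤ K * (δ / (2 * ρ)) ^ (-α) := mul_le_mul_of_nonneg_left
          (rpow_le_rpow_of_nonpos (by positivity) hτmem.1 (by linarith)) hK
  calc _ ≤ K * (δ / (2 * ρ)) ^ (-α) * |δ / (ρ - c * δ) - δ / (ρ + c * δ)| :=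
        intervalIntegral.norm_integral_le_of_norm_le_const hbound
    _ ≤ K * (δ / (2 * ρ)) ^ (-α) * (8 * |c * δ| * δ / ρ ^ 2) :=
        mul_le_mul_of_nonneg_left (abs_div_sub_sub_div_add_le hδ.le hρ hc) (by positivity)
    _ = K * (2 * ρ) ^ α * (8 * |c| / ρ ^ 2) * δ ^ (2 - α) := by
        rw [div_rpow hδ.le (by positivity), rpow_neg (by positivity : (0 : ℝ) ≤ 2 * ρ),
          div_inv_eq_mul, abs_mul, abs_of_pos hδ, sub_eq_add_neg, rpow_add hδ, rpow_two]
        ring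

theorem tendsto_integral_between_cutoffs (hα : 0 < α) (hα2 : α < 2) (hρ : 0 < ρ) (c : ℝ)
    (hg : g =O[𝓝[>] 0] fun τ ↦ τ) :
    Tendsto (fun δ ↦ ∫ τ in (δ / (ρ + c * δ))..(δ / (ρ - c * δ)), g τ * τ ^ (-1 - α))
      (𝓝[>] 0) (𝓝 0) := by
  obtain ⟨K, hK0, hK⟩ := hg.exists_pos
  obtain ⟨r, hr, hball⟩ := mem_nhdsGT_iff_exists_Ioo_subset.1 hK.bound
  have hr0 : 0 < r := hr
  have hsmall : ∀ᶠ δ : ℝ in 𝓝[>] 0, |c * δ| < ρ / 2 := nhdsWithin_le_nhds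
    (((by fun_prop : Continuous fun δ : ℝ ↦ |c * δ|).tendsto' 0 0 (by simp)).eventually_lt_const
      (by positivity))
  have hlim : Tendsto (fun δ : ℝ ↦ K * (2 * ρ) ^ α * (8 * |c| / ρ ^ 2) * δ ^ (2 - α))
      (𝓝[>] 0) (𝓝 0) := tendsto_nhdsWithin_of_tendsto_nhds
    (((continuous_rpow_const (by linarith)).const_mul _).tendsto' 0 0
      (by rw [zero_rpow (by linarith), mul_zero]))
  refine squeeze_zero_norm' ?_ hlim
  filter_upwards [hsmall, self_mem_nhdsWithin, Ioo_mem_nhdsGT (by positivity : 0 < r * ρ / 2)]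
    with δ hc hδ hδr
  refine abs_integral_between_cutoffs_le hα hρ hδ hc.le hK0.le fun τ hτ ↦ ?_
  have hτr : τ < r := hτ.2.trans_lt (by rw [div_lt_iff₀ hρ]; linarith [hδr.2])
  simpa [abs_of_pos hτ.1] using hball ⟨hτ.1, hτr⟩

theorem integrableOn_Ioc_secondDiff_mul_rpow (hα : 0 < α) (hα2 : α < 2) (ha : 0 < a)
    (hGc : ContinuousOn G (Icc (-a) a)) (hG : ContDiffAt ℝ 2 G 0) :
    IntegrableOn (fun τ ↦ secondDiff G 0 τ * τ ^ (-1 - α)) (Ioc 0 a) := by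
  have haa : -a ≤ a := by linarith
  obtain ⟨B, hB⟩ := isCompact_Icc.exists_bound_of_continuousOn hGc
  have heq : ∀ τ ∈ Icc (-a) a, IccExtend haa ((Icc (-a) a).domRestrict G) τ = G τ := fun τ hτ ↦
    IccExtend_of_mem _ _ hτ
  have hcont : Continuous (IccExtend haa ((Icc (-a) a).domRestrict G)) :=
    hGc.domRestrict.Icc_extend'
  have hint := integrableOn_secondDiff_mul_rpow (x := (0 : ℝ)) (B := B) hα hα2 hcont.measurable
    (fun τ ↦ hB _ (projIcc (-a) a haa τ).2)
    (hG.congr_of_eventuallyEq (eventually_of_mem (Icc_mem_nhds (by linarith) ha) heq)) 1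
  refine (hint.mono_set Ioc_subset_Ioi_self).congr_fun (fun τ hτ ↦ ?_) measurableSet_Ioc
  have hτ0 : 0 < τ := hτ.1
  simp only [secondDiff, smul_eq_mul, mul_one, zero_add, zero_sub]
  rw [heq τ ⟨by linarith, hτ.2⟩, heq (-τ) ⟨by linarith [hτ.2], by linarith⟩,
    heq 0 ⟨by linarith, ha.le⟩]

theorem intervalIntegrable_mul_rpow {b' : ℝ} (hg : ContinuousOn g (Icc 0 a))
    (hb : b ∈ Ioc 0 a) (hb' : b' ∈ Ioc 0 a) :
    IntervalIntegrable (fun τ ↦ g τ * τ ^ (-1 - α)) volume b b' := by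
  have hsub : uIcc b b' ⊆ Ioc 0 a := ordConnected_Ioc.uIcc_subset hb hb'
  exact ((hg.mono (hsub.trans Ioc_subset_Icc_self)).mul
    (continuousOn_id.rpow_const fun τ hτ ↦ .inl (hsub hτ).1.ne')).intervalIntegrable

theorem tendsto_integral_add_integral_neg (hα : 0 < α) (hα2 : α < 2) (hρ : 0 < ρ) (c : ℝ)
    (ha : 0 < a) (hGc : ContinuousOn G (Icc (-a) a)) (hG : ContDiffAt ℝ 2 G 0) (hG0 : G 0 = 0) :
    Tendsto (fun δ ↦ (∫ τ in (δ / (ρ + c * δ))..a, G τ * τ ^ (-1 - α)) +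
        ∫ τ in (δ / (ρ - c * δ))..a, G (-τ) * τ ^ (-1 - α))
      (𝓝[>] 0) (𝓝 (∫ τ in Ioc 0 a, secondDiff G 0 τ * τ ^ (-1 - α))) := by
  have hb₁ := tendsto_div_add_mul_nhdsGT c hρ
  have hb₂ : Tendsto (fun δ ↦ δ / (ρ - c * δ)) (𝓝[>] 0) (𝓝[>] 0) := by
    simpa only [neg_mul, ← sub_eq_add_neg] using tendsto_div_add_mul_nhdsGT (-c) hρ
  have hGO : (fun τ ↦ G (-τ)) =O[𝓝[>] 0] fun τ ↦ τ := by
    have h0 := (hG.differentiableAt (by simp)).isBigO_sub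
    simp only [hG0, sub_zero] at h0
    have hneg : Tendsto (fun τ : ℝ ↦ -τ) (𝓝 0) (𝓝 0) := by simpa using tendsto_neg (0 : ℝ)
    exact ((h0.comp_tendsto hneg).neg_right.congr_right (by simp)).mono nhdsWithin_le_nhds
  have hmain := ((tendsto_intervalIntegral_nhdsGT ha
    (integrableOn_Ioc_secondDiff_mul_rpow hα hα2 ha hGc hG)).comp hb₁).sub
      (tendsto_integral_between_cutoffs hα hα2 hρ c hGO)
  rw [sub_zero] at hmain
  refine hmain.congr' ?_
  filter_upwards [hb₁.eventually (Ioc_mem_nhdsGT ha), hb₂.eventually (Ioc_mem_nhdsGT ha)]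
    with δ h₁ h₂
  have hGpos : ContinuousOn G (Icc 0 a) := hGc.mono (Icc_subset_Icc_left (by linarith))
  have hGneg : ContinuousOn (fun τ ↦ G (-τ)) (Icc 0 a) :=
    hGc.comp continuousOn_neg fun τ hτ ↦ ⟨by linarith [hτ.2], by linarith [hτ.1]⟩
  have ha' : a ∈ Ioc 0 a := ⟨ha, le_rfl⟩
  have hsplit : ∫ τ in (δ / (ρ + c * δ))..a, secondDiff G 0 τ * τ ^ (-1 - α) =
      (∫ τ in (δ / (ρ + c * δ))..a, G τ * τ ^ (-1 - α)) +
        ∫ τ in (δ / (ρ + c * δ))..a, G (-τ) * τ ^ (-1 - α) := by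
    rw [← intervalIntegral.integral_add (intervalIntegrable_mul_rpow hGpos h₁ ha')
      (intervalIntegrable_mul_rpow hGneg h₁ ha')]
    simp only [secondDiff, zero_add, zero_sub, hG0, mul_zero, sub_zero, add_mul]
  rw [Function.comp_apply, hsplit, add_sub_assoc, intervalIntegral.integral_interval_sub_left
    (intervalIntegrable_mul_rpow hGneg h₁ ha') (intervalIntegrable_mul_rpow hGneg h₁ h₂)]

theorem continuousOn_projIncrement (hca : |c| * a < 1) (hF : ContinuousOn F (Icc (-a) a)) :
    ContinuousOn (projIncrement α c F) (Icc (-a) a) :=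
  (hF.sub continuousOn_const).mul <| ContinuousOn.rpow_const (by fun_prop) fun τ hτ ↦ by
    have hcτ : c * τ ≤ |c| * a := (le_abs_self _).trans
      ((abs_mul c τ).trans_le (mul_le_mul_of_nonneg_left (abs_le.2 hτ) (abs_nonneg c)))
    exact .inl (by linarith)

theorem contDiffAt_projIncrement (hF : ContDiffAt ℝ 2 F 0) :
    ContDiffAt ℝ 2 (projIncrement α c F) 0 :=
  (hF.sub contDiffAt_const).mul (ContDiffAt.rpow_const_of_ne (by fun_prop) (by simp))

theorem integral_Ioi_secondDiff_eq_add (hα : 0 < α) (hδ : 0 < δ) (hfm : Measurable f)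
    (hfB : ∀ t, |f t| ≤ B) :
    ∫ t in Ioi δ, secondDiff f 0 (t • 1) * t ^ (-1 - α) =
      (∫ t in Ioi δ, (f t - f 0) * t ^ (-1 - α)) + ∫ t in Ioi δ, (f (-t) - f 0) * t ^ (-1 - α) := by
  have hneg := integrableOn_Ioi_sub_mul_rpow (f := fun t ↦ f (-t)) hα hδ (by fun_prop)
    fun t ↦ hfB (-t)
  simp only [neg_zero] at hneg
  rw [← integral_add (integrableOn_Ioi_sub_mul_rpow hα hδ hfm hfB) hneg]
  congr 1 with t
  simp only [secondDiff, smul_eq_mul, mul_one, zero_add, zero_sub]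
  ring

theorem contDiffAt_of_eq_comp_projective (hρ : 0 < ρ) (hF : ContDiffAt ℝ 2 F 0)
    (hfF : f =ᶠ[𝓝 0] fun t ↦ F (t / (ρ + c * t))) : ContDiffAt ℝ 2 f 0 :=
  (ContDiffAt.comp (g := F) 0 (by simpa using hF)
    (ContDiffAt.div (by fun_prop) (by fun_prop) (by simp [hρ.ne']))).congr_of_eventuallyEq hfF

/- On a symmetric interval the substitution turns second differences into second differences: the
asymmetry it introduces near `0` disappears in the limit. -/
theorem secondDiffIntegral_projective (hα : 0 < α) (hα2 : α < 2) (hρ : 0 < ρ) (ha : 0 < a)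
    (hca : |c| * a < 1) (hfm : Measurable f) (hfB : ∀ t, |f t| ≤ B)
    (hFc : ContinuousOn F (Icc (-a) a)) (hF : ContDiffAt ℝ 2 F 0)
    (hfF : ∀ t ∈ Icc (-(ρ * a / (1 + c * a))) (ρ * a / (1 - c * a)), f t = F (t / (ρ + c * t))) :
    secondDiffIntegral α f 0 1 =
      ρ ^ (-α) * (∫ τ in Ioc 0 a, secondDiff (projIncrement α c F) 0 τ * τ ^ (-1 - α)) +
        (∫ t in Ioi (ρ * a / (1 - c * a)), (f t - f 0) * t ^ (-1 - α)) +
        ∫ t in Ioi (ρ * a / (1 + c * a)), (f (-t) - f 0) * t ^ (-1 - α) := by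
  have hca' := abs_lt.1 (show |c * a| < 1 by rwa [abs_mul, abs_of_pos ha])
  have ht₁ : 0 < ρ * a / (1 - c * a) := div_pos (by positivity) (by linarith [hca'.2])
  have ht₂ : 0 < ρ * a / (1 + c * a) := div_pos (by positivity) (by linarith [hca'.1])
  have hf : ContDiffAt ℝ 2 f 0 := contDiffAt_of_eq_comp_projective hρ hF
    (eventually_of_mem (Icc_mem_nhds (by linarith) ht₁) hfF)
  have hlhs := tendsto_setIntegral_Ioi_nhdsGT (integrableOn_secondDiff_mul_rpow hα hα2 hfm hfB hf 1)
  have hrhs := (((tendsto_integral_add_integral_neg hα hα2 hρ c ha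
    (continuousOn_projIncrement (α := α) hca hFc) (contDiffAt_projIncrement hF)
    (projIncrement_zero α c F)).const_mul (ρ ^ (-α))).add_const
      (∫ t in Ioi (ρ * a / (1 - c * a)), (f t - f 0) * t ^ (-1 - α))).add_const
      (∫ t in Ioi (ρ * a / (1 + c * a)), (f (-t) - f 0) * t ^ (-1 - α))
  refine tendsto_nhds_unique hlhs (hrhs.congr' ?_)
  have hb₁ := (tendsto_div_add_mul_nhdsGT c hρ).eventually (Ioo_mem_nhdsGT ha)
  have hb₂ := (tendsto_div_add_mul_nhdsGT (-c) hρ).eventually (Ioo_mem_nhdsGT ha)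
  filter_upwards [hb₁, hb₂, self_mem_nhdsWithin] with δ h₁ h₂ (hδ : 0 < δ)
  have hpos := integral_Ioi_projective hα hρ hδ ((div_pos_iff_of_pos_left hδ).1 h₁.1) h₁.2.le
    hca'.2 hfm hfB fun t ht ↦ hfF t ⟨by linarith [ht.1], ht.2⟩
  have hneg := integral_Ioi_projective (f := fun t ↦ f (-t)) (F := fun τ ↦ F (-τ)) hα hρ hδ
    ((div_pos_iff_of_pos_left hδ).1 h₂.1) h₂.2.le (by linarith) (by fun_prop) (fun t ↦ hfB (-t))
    fun t ht ↦ by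
      simp only [neg_mul, sub_neg_eq_add] at ht
      rw [hfF (-t) ⟨by linarith [ht.2], by linarith [ht.1]⟩, neg_mul, mul_neg, neg_div]
  simp only [neg_mul, ← sub_eq_add_neg, sub_neg_eq_add, neg_zero, ← projIncrement_neg] at hneg
  rw [integral_Ioi_secondDiff_eq_add hα hδ hfm hfB, hpos, hneg]
  ring

end Projective

/-! ### Second differences of powers of concave quadratics -/

section Getoor

variable {α p x z : ℝ}

theorem integral_Ioo_mul_deriv_sub_mul_rpow {h h' : ℝ → ℝ} (hα2 : α < 2)
    (hder : ∀ z ∈ Ioo (0 : ℝ) 1, HasDerivAt h (h' z) z) (h0 : h =O[𝓝 0] fun z ↦ z ^ 2)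
    (h1 : ContinuousAt h 1)
    (hint : IntegrableOn (fun z ↦ (z * h' z - α * h z) * z ^ (-1 - α)) (Ioo 0 1)) :
    ∫ z in Ioo (0 : ℝ) 1, (z * h' z - α * h z) * z ^ (-1 - α) = h 1 := by
  have hderiv : ∀ z ∈ Ioo (0 : ℝ) 1, HasDerivAt (fun z ↦ h z * z ^ (-α))
      ((z * h' z - α * h z) * z ^ (-1 - α)) z := fun z hz ↦ by
    have hpow : z ^ (-α) = z * z ^ (-1 - α) := by
      rw [mul_comm, ← rpow_add_one hz.1.ne']; ring_nf
    refine ((hder z hz).mul (hasDerivAt_rpow_const (.inl hz.1.ne'))).congr_deriv ?_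
    rw [hpow, show -α - 1 = -1 - α by ring]
    ring
  have hlim0 : Tendsto (fun z : ℝ ↦ h z * z ^ (-α)) (𝓝[>] 0) (𝓝 0) := by
    have hO : (fun z ↦ h z * z ^ (-α)) =O[𝓝[>] 0] fun z ↦ z ^ (2 - α) := by
      refine ((h0.mono nhdsWithin_le_nhds).mul (isBigO_refl _ _)).congr' .rfl ?_
      filter_upwards [self_mem_nhdsWithin] with z hz
      rw [sub_eq_add_neg, rpow_add hz, rpow_two]
    refine hO.trans_tendsto (tendsto_nhdsWithin_of_tendsto_nhds ?_)
    exact (continuous_rpow_const (by linarith)).tendsto' _ _ (zero_rpow (by linarith))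
  have hlim1 : Tendsto (fun z : ℝ ↦ h z * z ^ (-α)) (𝓝[<] 1) (𝓝 (h 1)) := by
    have := h1.tendsto.mul (continuousAt_rpow_const 1 (-α) (.inl one_ne_zero)).tendsto
    rw [one_rpow, mul_one] at this
    exact this.mono_left nhdsWithin_le_nhds
  rw [← integral_Ioc_eq_integral_Ioo, ← intervalIntegral.integral_of_le zero_le_one,
    intervalIntegral.integral_eq_sub_of_hasDerivAt_of_tendsto one_pos hderiv
      ((intervalIntegrable_iff_integrableOn_Ioo_of_le zero_le_one).2 hint) hlim0 hlim1, sub_zero]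

/-- The function `(1 - y ^ 2) ^ p` in the projective coordinate `z` on `(-1, 1)` which is
centred at `x` and fixes `±1`. -/
noncomputable def mobiusOneSubSqRpow (p x z : ℝ) : ℝ :=
  ((1 - x ^ 2) * (1 - z ^ 2) / (1 + x * z) ^ 2) ^ p

theorem one_add_mul_pos_of_abs_lt_one (hx : |x| < 1) (hz : |z| ≤ 1) : 0 < 1 + x * z := by
  have hxz : |x * z| < 1 := by
    rw [abs_mul]; exact (mul_le_of_le_one_right (abs_nonneg x) hz).trans_lt hx
  linarith [(abs_lt.1 hxz).1]

theorem mobiusOneSubSqRpow_projective {t : ℝ} (p : ℝ) (hx : |x| < 1)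
    (ht : 1 - x ^ 2 - x * t ≠ 0) :
    mobiusOneSubSqRpow p x (t / (1 - x ^ 2 - x * t)) = (1 - (x + t) ^ 2) ^ p := by
  have hρ : 1 - x ^ 2 ≠ 0 := (sub_pos.2 ((sq_lt_one_iff_abs_lt_one x).2 hx)).ne'
  have hden : 1 + x * (t / (1 - x ^ 2 - x * t)) = (1 - x ^ 2) / (1 - x ^ 2 - x * t) := by
    field_simp; ring
  rw [mobiusOneSubSqRpow, hden]
  congr 1
  field_simp
  ring

theorem continuousOn_mobiusOneSubSqRpow (hp : 0 ≤ p) (hx : |x| < 1) :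
    ContinuousOn (mobiusOneSubSqRpow p x) (Icc (-1) 1) :=
  ContinuousOn.rpow_const (ContinuousOn.div (by fun_prop) (by fun_prop) fun z hz ↦
    pow_ne_zero 2 (one_add_mul_pos_of_abs_lt_one hx (abs_le.2 hz)).ne') fun _ _ ↦ .inr hp

theorem contDiffAt_mobiusOneSubSqRpow (p : ℝ) (hx : |x| < 1) :
    ContDiffAt ℝ 2 (mobiusOneSubSqRpow p x) 0 := by
  have hρ : 1 - x ^ 2 ≠ 0 := (sub_pos.2 ((sq_lt_one_iff_abs_lt_one x).2 hx)).ne'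
  exact ContDiffAt.rpow_const_of_ne (ContDiffAt.div (by fun_prop) (by fun_prop) (by simp))
    (by simpa using hρ)

theorem projIncrement_mobiusOneSubSqRpow (p : ℝ) (hx : |x| < 1) (hz : |z| ≤ 1) :
    projIncrement (2 * p) (-x) (mobiusOneSubSqRpow p x) z =
      (1 - x ^ 2) ^ p * ((1 - z ^ 2) ^ p / (1 + x * z) - (1 + x * z) ^ (2 * p - 1)) := by
  have hpos := one_add_mul_pos_of_abs_lt_one hx hz
  have hρ : 0 ≤ 1 - x ^ 2 := (sub_pos.2 ((sq_lt_one_iff_abs_lt_one x).2 hx)).le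
  have hz' : 0 ≤ 1 - z ^ 2 := sub_nonneg.2 ((sq_le_one_iff_abs_le_one z).2 hz)
  have hcancel : (1 + x * z) ^ (2 * p - 1) / (1 + x * z) ^ (2 * p) = (1 + x * z)⁻¹ := by
    rw [← rpow_sub hpos, ← rpow_neg_one]; congr 1; ring
  have hF : mobiusOneSubSqRpow p x z =
      (1 - x ^ 2) ^ p * (1 - z ^ 2) ^ p / (1 + x * z) ^ (2 * p) := by
    rw [mobiusOneSubSqRpow, div_rpow (mul_nonneg hρ hz') (sq_nonneg _), mul_rpow hρ hz',
      ← rpow_two (1 + x * z), ← rpow_mul hpos.le]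
  have hF0 : mobiusOneSubSqRpow p x 0 = (1 - x ^ 2) ^ p := by simp [mobiusOneSubSqRpow]
  rw [projIncrement, hF, hF0, neg_mul, sub_neg_eq_add, div_eq_mul_inv, div_eq_mul_inv, ← hcancel]
  ring

theorem secondDiff_projIncrement_mobiusOneSubSqRpow (p : ℝ) (hx : |x| < 1) (hz : |z| < 1) :
    secondDiff (projIncrement (2 * p) (-x) (mobiusOneSubSqRpow p x)) 0 z =
      (1 - x ^ 2) ^ p * (2 * (1 - z ^ 2) ^ (p - 1) - (1 + x * z) ^ (2 * p - 1) -
          (1 - x * z) ^ (2 * p - 1) -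
        2 * (1 - x ^ 2) * (z ^ 2 * (1 - z ^ 2) ^ (p - 1) / (1 - x ^ 2 * z ^ 2))) := by
  have hadd := one_add_mul_pos_of_abs_lt_one hx hz.le
  have hsub := one_add_mul_pos_of_abs_lt_one hx ((abs_neg z).trans_le hz.le)
  have hz' : 0 < 1 - z ^ 2 := sub_pos.2 ((sq_lt_one_iff_abs_lt_one z).2 hz)
  have hpow : (1 - z ^ 2) ^ p = (1 - z ^ 2) * (1 - z ^ 2) ^ (p - 1) := by
    rw [mul_comm, ← rpow_add_one hz'.ne', sub_add_cancel]
  have hfactor : 1 - x ^ 2 * z ^ 2 = (1 + x * z) * (1 - x * z) := by ring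
  rw [secondDiff, zero_add, zero_sub, projIncrement_zero,
    projIncrement_mobiusOneSubSqRpow p hx hz.le,
    projIncrement_mobiusOneSubSqRpow p hx ((abs_neg z).trans_le hz.le), neg_sq, hpow, hfactor]
  rw [mul_neg, ← sub_eq_add_neg] at hsub ⊢
  field_simp
  ring

theorem hasDerivAt_one_add_mul_rpow {q : ℝ} (hz : 1 + x * z ≠ 0) :
    HasDerivAt (fun z : ℝ ↦ (1 + x * z) ^ q) (q * (x * (1 + x * z) ^ (q - 1))) z :=
  ((((hasDerivAt_id z).const_mul x).const_add 1).rpow_const (.inl hz)).congr_deriv (by simp; ring)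

theorem hasDerivAt_one_sub_sq_rpow (hz : 1 - z ^ 2 ≠ 0) :
    HasDerivAt (fun z : ℝ ↦ (1 - z ^ 2) ^ p) (-(2 * p * (z * (1 - z ^ 2) ^ (p - 1)))) z :=
  (((hasDerivAt_pow 2 z).const_sub 1).rpow_const (.inl hz)).congr_deriv (by simp; ring)

theorem isBigO_one_add_mul_rpow_add_sub (p x : ℝ) :
    (fun z : ℝ ↦ (1 + x * z) ^ (2 * p) + (1 - x * z) ^ (2 * p) - 2 * (1 - z ^ 2) ^ p) =O[𝓝 0]
      fun z ↦ z ^ 2 := by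
  have hC : ContDiffAt ℝ 2 (fun z : ℝ ↦ (1 + x * z) ^ (2 * p) - (1 - z ^ 2) ^ p) 0 :=
    (ContDiffAt.rpow_const_of_ne (by fun_prop) (by simp)).sub
      (ContDiffAt.rpow_const_of_ne (by fun_prop) (by simp))
  refine (secondDiff_isBigO_sq hC).congr (fun z ↦ ?_) fun z ↦ by simp
  simp only [secondDiff, zero_add, zero_sub, neg_sq, mul_neg, ← sub_eq_add_neg]
  simp
  ring

theorem integral_Ioo_one_sub_sq_rpow_sub_rpow (hp : 0 < p) (hp1 : p < 1) (hx : |x| < 1)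
    (hint : IntegrableOn (fun z ↦ (2 * (1 - z ^ 2) ^ (p - 1) - (1 + x * z) ^ (2 * p - 1) -
      (1 - x * z) ^ (2 * p - 1)) * z ^ (-1 - 2 * p)) (Ioo 0 1)) :
    ∫ z in Ioo (0 : ℝ) 1, (2 * (1 - z ^ 2) ^ (p - 1) - (1 + x * z) ^ (2 * p - 1) -
      (1 - x * z) ^ (2 * p - 1)) * z ^ (-1 - 2 * p) =
      ((1 + x) ^ (2 * p) + (1 - x) ^ (2 * p)) / (2 * p) := by
  let h : ℝ → ℝ := fun z ↦ (1 + x * z) ^ (2 * p) + (1 - x * z) ^ (2 * p) - 2 * (1 - z ^ 2) ^ p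
  let h' : ℝ → ℝ := fun z ↦ 2 * p * (x * (1 + x * z) ^ (2 * p - 1) -
    x * (1 - x * z) ^ (2 * p - 1) + 2 * (z * (1 - z ^ 2) ^ (p - 1)))
  have hpos : ∀ z ∈ Ioo (0 : ℝ) 1, 0 < 1 + x * z ∧ 0 < 1 - x * z ∧ 0 < 1 - z ^ 2 := fun z hz ↦ by
    have hz1 : |z| < 1 := by rw [abs_of_pos hz.1]; exact hz.2
    have hsub := one_add_mul_pos_of_abs_lt_one hx ((abs_neg z).trans_le hz1.le)
    rw [mul_neg, ← sub_eq_add_neg] at hsub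
    exact ⟨one_add_mul_pos_of_abs_lt_one hx hz1.le, hsub,
      sub_pos.2 ((sq_lt_one_iff_abs_lt_one z).2 hz1)⟩
  have hder : ∀ z ∈ Ioo (0 : ℝ) 1, HasDerivAt h (h' z) z := fun z hz ↦ by
    obtain ⟨hadd, hsub, hsq⟩ := hpos z hz
    have hneg := hasDerivAt_one_add_mul_rpow (x := -x) (q := 2 * p) (z := z) (by linarith)
    simp only [neg_mul, ← sub_eq_add_neg] at hneg
    exact (((hasDerivAt_one_add_mul_rpow hadd.ne').add hneg).sub
      ((hasDerivAt_one_sub_sq_rpow hsq.ne').const_mul 2)).congr_deriv (by ring)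
  have hkey : EqOn (fun z ↦ (2 * (1 - z ^ 2) ^ (p - 1) - (1 + x * z) ^ (2 * p - 1) -
      (1 - x * z) ^ (2 * p - 1)) * z ^ (-1 - 2 * p))
      (fun z ↦ (2 * p)⁻¹ * ((z * h' z - 2 * p * h z) * z ^ (-1 - 2 * p))) (Ioo 0 1) := fun z hz ↦ by
    obtain ⟨hadd, hsub, hsq⟩ := hpos z hz
    have hlower : ∀ {y : ℝ} (q : ℝ), 0 < y → y ^ q = y * y ^ (q - 1) := fun q hy ↦ by
      rw [mul_comm, ← rpow_add_one hy.ne', sub_add_cancel]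
    simp only [h, h', hlower (2 * p) hadd, hlower (2 * p) hsub, hlower p hsq]
    field_simp
    ring
  have hcont : ContinuousAt h 1 := by
    refine Continuous.continuousAt (.sub (.add ?_ ?_) (.const_mul ?_ 2)) <;>
      exact Continuous.rpow_const (by fun_prop) fun _ ↦ .inr (by positivity)
  have hint' := (integrableOn_congr_fun hkey measurableSet_Ioo).1 hint
  rw [setIntegral_congr_fun measurableSet_Ioo hkey, integral_const_mul,
    integral_Ioo_mul_deriv_sub_mul_rpow (by linarith) hder (isBigO_one_add_mul_rpow_add_sub p x)
      hcont ((integrable_const_mul_iff (by simpa using hp.ne') _).1 hint')]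
  simp [h, zero_rpow hp.ne', div_eq_inv_mul]

theorem integral_secondDiff_projIncrement_mobiusOneSubSqRpow (hp : 0 < p) (hp1 : p < 1)
    (hx : |x| < 1) :
    ∫ z in Ioc (0 : ℝ) 1, secondDiff (projIncrement (2 * p) (-x) (mobiusOneSubSqRpow p x)) 0 z *
        z ^ (-1 - 2 * p) =
      (1 - x ^ 2) ^ p * (((1 + x) ^ (2 * p) + (1 - x) ^ (2 * p)) / (2 * p) -
        (1 - x ^ 2) ^ p * (Gamma p * Gamma (1 - p))) := by
  have hx2 : x ^ 2 < 1 := (sq_lt_one_iff_abs_lt_one x).2 hx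
  have hρ : 0 < 1 - x ^ 2 := sub_pos.2 hx2
  let regular : ℝ → ℝ := fun z ↦ (2 * (1 - z ^ 2) ^ (p - 1) - (1 + x * z) ^ (2 * p - 1) -
    (1 - x * z) ^ (2 * p - 1)) * z ^ (-1 - 2 * p)
  let euler : ℝ → ℝ := fun z ↦ (1 - z ^ 2) ^ (p - 1) * z ^ (1 - 2 * p) / (1 - x ^ 2 * z ^ 2)
  have hkey : EqOn (fun z ↦ secondDiff (projIncrement (2 * p) (-x) (mobiusOneSubSqRpow p x)) 0 z *
      z ^ (-1 - 2 * p)) (fun z ↦ (1 - x ^ 2) ^ p * (regular z - 2 * (1 - x ^ 2) * euler z))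
      (Ioo 0 1) := fun z hz ↦ by
    have hpow : z ^ (1 - 2 * p) = z ^ 2 * z ^ (-1 - 2 * p) := by
      rw [← rpow_two, ← rpow_add hz.1]; congr 1; ring
    simp only [regular, euler, hpow, secondDiff_projIncrement_mobiusOneSubSqRpow p hx
      (by rw [abs_of_pos hz.1]; exact hz.2 : |z| < 1)]
    ring
  have heuler : IntegrableOn euler (Ioo 0 1) :=
    integrableOn_Ioo_one_sub_sq_rpow_mul_rpow_div hp hp1 (sq_nonneg x) hx2
  have hregular : IntegrableOn regular (Ioo 0 1) := by
    have hsecond := (integrableOn_Ioc_secondDiff_mul_rpow (α := 2 * p) (by positivity)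
      (by linarith) one_pos (continuousOn_projIncrement (α := 2 * p) (c := -x) (by simpa using hx)
        (continuousOn_mobiusOneSubSqRpow hp.le hx)) (contDiffAt_projIncrement
          (contDiffAt_mobiusOneSubSqRpow p hx))).mono_set Ioo_subset_Ioc_self
    have hdiff := (integrable_const_mul_iff (rpow_pos_of_pos hρ p).ne'.isUnit _).1
      ((integrableOn_congr_fun hkey measurableSet_Ioo).1 hsecond)
    exact (hdiff.add (heuler.const_mul (2 * (1 - x ^ 2)))).congr (.of_forall fun z ↦ by simp)
  have hpow : (1 - x ^ 2) * (1 - x ^ 2) ^ (p - 1) = (1 - x ^ 2) ^ p := by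
    rw [mul_comm, ← rpow_add_one hρ.ne', sub_add_cancel]
  rw [integral_Ioc_eq_integral_Ioo, setIntegral_congr_fun measurableSet_Ioo hkey,
    integral_const_mul, integral_sub hregular (heuler.const_mul _), integral_const_mul,
    integral_Ioo_one_sub_sq_rpow_sub_rpow hp hp1 hx hregular,
    integral_Ioo_one_sub_sq_rpow_mul_rpow_div hp hp1 (sq_nonneg x) hx2, ← hpow]
  ring

/-- The truncated power `(1 - y ^ 2)₊ ^ p`. -/
noncomputable def oneSubSqRpow (p y : ℝ) : ℝ := max (1 - y ^ 2) 0 ^ p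

theorem abs_oneSubSqRpow_le_one (hp : 0 ≤ p) (y : ℝ) : |oneSubSqRpow p y| ≤ 1 := by
  have h0 : 0 ≤ max (1 - y ^ 2) 0 := le_max_right _ _
  rw [oneSubSqRpow, abs_of_nonneg (rpow_nonneg h0 p)]
  exact rpow_le_one h0 (max_le (by linarith [sq_nonneg y]) zero_le_one) hp

theorem integral_Ioi_oneSubSqRpow_sub (hp : 0 < p) (hx : |x| < 1) :
    ∫ t in Ioi (1 - x), (oneSubSqRpow p (x + t) - oneSubSqRpow p x) * t ^ (-1 - 2 * p) =
      -((1 - x ^ 2) ^ p * ((1 - x) ^ (-(2 * p)) / (2 * p))) := by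
  have hx2 : x ^ 2 < 1 := (sq_lt_one_iff_abs_lt_one x).2 hx
  have hvanish : ∀ t ∈ Ioi (1 - x), (oneSubSqRpow p (x + t) - oneSubSqRpow p x) *
      t ^ (-1 - 2 * p) = -(1 - x ^ 2) ^ p * t ^ (-1 - 2 * p) := fun t (ht : 1 - x < t) ↦ by
    rw [oneSubSqRpow, oneSubSqRpow, max_eq_right (by nlinarith : 1 - (x + t) ^ 2 ≤ 0),
      max_eq_left (by linarith), zero_rpow hp.ne', zero_sub]
  rw [setIntegral_congr_fun measurableSet_Ioi hvanish, integral_const_mul,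
    integral_Ioi_rpow_neg_one_sub (sub_pos.2 (abs_lt.1 hx).2) (by positivity), neg_mul]

/- The second differences of `(1 - y ^ 2)₊ ^ p` with the kernel `t ^ (-1 - 2 * p)` integrate to a
constant on `(-1, 1)`. -/
theorem secondDiffIntegral_oneSubSqRpow (hp : 0 < p) (hp1 : p < 1) (hx : |x| < 1) :
    secondDiffIntegral (2 * p) (oneSubSqRpow p) x 1 = -(Gamma p * Gamma (1 - p)) := by
  have hsub : 0 < 1 - x := sub_pos.2 (abs_lt.1 hx).2
  have hadd : 0 < 1 + x := by linarith [(abs_lt.1 hx).1]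
  have hfactor : 1 - x ^ 2 = (1 - x) * (1 + x) := by ring
  have hρ : 0 < 1 - x ^ 2 := by rw [hfactor]; positivity
  have ht₁ : (1 - x ^ 2) * 1 / (1 - -x * 1) = 1 - x := by
    rw [hfactor, neg_mul, mul_one, mul_one, sub_neg_eq_add, mul_div_cancel_right₀ _ hadd.ne']
  have ht₂ : (1 - x ^ 2) * 1 / (1 + -x * 1) = 1 + x := by
    rw [hfactor, mul_one, mul_one, ← sub_eq_add_neg, mul_div_cancel_left₀ _ hsub.ne']
  have hproj := secondDiffIntegral_projective (α := 2 * p) (ρ := 1 - x ^ 2) (c := -x) (a := 1)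
    (B := 1) (f := fun t ↦ oneSubSqRpow p (x + t)) (F := mobiusOneSubSqRpow p x) (by positivity)
    (by linarith) hρ one_pos (by simpa using hx) (by unfold oneSubSqRpow; fun_prop)
    (fun t ↦ abs_oneSubSqRpow_le_one hp.le _) (continuousOn_mobiusOneSubSqRpow hp.le hx)
    (contDiffAt_mobiusOneSubSqRpow p hx) fun t ht ↦ by
      rw [ht₁, ht₂] at ht
      have hden : 0 < 1 - x ^ 2 - x * t := by
        rcases le_total 0 x with hx0 | hx0
        · nlinarith [mul_le_mul_of_nonneg_left ht.2 hx0]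
        · nlinarith [mul_le_mul_of_nonpos_left ht.1 hx0]
      rw [neg_mul, ← sub_eq_add_neg, mobiusOneSubSqRpow_projective p hx hden.ne', oneSubSqRpow,
        max_eq_left (by nlinarith [ht.1, ht.2])]
  have htail := integral_Ioi_oneSubSqRpow_sub hp ((abs_neg x).trans_lt hx)
  have heven : ∀ y, oneSubSqRpow p (-y) = oneSubSqRpow p y := fun y ↦ by simp [oneSubSqRpow]
  simp only [sub_neg_eq_add, neg_sq, ← heven (-x + _), heven x, neg_add, neg_neg] at htail
  rw [ht₁, ht₂, integral_secondDiff_projIncrement_mobiusOneSubSqRpow hp hp1 hx] at hproj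
  simp only [add_zero, htail, integral_Ioi_oneSubSqRpow_sub hp hx] at hproj
  rw [secondDiffIntegral_congr_line (2 * p) (y := (0 : ℝ)) (k := 1)
    (g := fun t ↦ oneSubSqRpow p (x + t)) fun t ↦ by simp, hproj]
  simp only [hfactor, mul_rpow hsub.le hadd.le, mul_comm 2 p, rpow_neg, hsub.le, hadd.le,
    rpow_mul, rpow_two]
  have hsubp : (1 - x) ^ p ≠ 0 := (rpow_pos_of_pos hsub p).ne'
  have haddp : (1 + x) ^ p ≠ 0 := (rpow_pos_of_pos hadd p).ne'
  field_simp
  ring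

/-- The restriction to a line of the square of a Euclidean norm. -/
def lineQuadratic (X β κ τ : ℝ) : ℝ := X + 2 * β * τ + κ ^ 2 * τ ^ 2

theorem max_sub_lineQuadratic_rpow {X R β κ D : ℝ} (hκ : κ ≠ 0) (hD : 0 < D)
    (hDsq : D ^ 2 = R - X + (β / κ) ^ 2) (p t : ℝ) :
    max (R - lineQuadratic X β κ t) 0 ^ p =
      D ^ (2 * p) * oneSubSqRpow p (β / κ / D + t * (κ / D)) := by
  have hsq : R - lineQuadratic X β κ t = D ^ 2 * (1 - (β / κ / D + t * (κ / D)) ^ 2) := by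
    have hlin : D * (β / κ / D + t * (κ / D)) = β / κ + t * κ := by field_simp
    rw [mul_sub, ← mul_pow, hlin, hDsq, lineQuadratic]
    field_simp
    ring
  rw [hsq, oneSubSqRpow, rpow_mul hD.le, rpow_two, ← mul_rpow (sq_nonneg D) (le_max_right _ _),
    mul_max_of_nonneg _ _ (sq_nonneg D), mul_zero]

theorem secondDiffIntegral_sub_lineQuadratic_rpow {X R β κ : ℝ} (hp : 0 < p) (hp1 : p < 1)
    (hXR : X < R) (hκ : 0 ≤ κ) (hβ : β ^ 2 ≤ X * κ ^ 2) :
    secondDiffIntegral (2 * p) (fun t ↦ max (R - lineQuadratic X β κ t) 0 ^ p) 0 1 =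
      -(Gamma p * Gamma (1 - p)) * κ ^ (2 * p) := by
  rcases hκ.eq_or_lt with rfl | hκ
  · have hβ0 : β = 0 := pow_eq_zero_iff two_ne_zero |>.1 (le_antisymm (by simpa using hβ)
      (sq_nonneg β))
    simp [secondDiffIntegral, secondDiff, lineQuadratic, hβ0, hp.ne', ← two_mul]
  have hpos : 0 < R - X + (β / κ) ^ 2 := add_pos_of_pos_of_nonneg (sub_pos.2 hXR) (sq_nonneg _)
  have hD : 0 < √(R - X + (β / κ) ^ 2) := sqrt_pos.2 hpos
  have hDsq := sq_sqrt hpos.le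
  have hx : |β / κ / √(R - X + (β / κ) ^ 2)| < 1 := by
    rw [← sq_lt_one_iff_abs_lt_one, div_pow, hDsq, div_lt_one hpos]
    linarith
  rw [secondDiffIntegral_congr_line (2 * p)
      (g := fun y ↦ √(R - X + (β / κ) ^ 2) ^ (2 * p) * oneSubSqRpow p y)
      (y := β / κ / √(R - X + (β / κ) ^ 2)) (k := (κ / √(R - X + (β / κ) ^ 2)) • 1) fun t ↦ by
        simpa using max_sub_lineQuadratic_rpow hκ.ne' hD hDsq p t,
    secondDiffIntegral_const_mul, secondDiffIntegral_smul_right _ _ _ _ (div_pos hκ hD),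
    secondDiffIntegral_oneSubSqRpow hp hp1 hx, ← mul_assoc, ← mul_rpow hD.le (div_pos hκ hD).le,
    mul_div_cancel₀ _ hD.ne', mul_comm]

end Getoor

/-! ### The modulus `ω` -/

section Modulus

variable {α ε b : ℝ}

theorem one_le_abs_log (h0 : 0 < ε) (h1 : ε < 1 / 20) : 1 ≤ |log ε| := by
  have hexp : ε ≤ exp (-1) := by
    rw [exp_neg, le_inv_comm₀ h0 (exp_pos 1)]
    have h20 : 20 ≤ ε⁻¹ := by rw [le_inv_comm₀ (by norm_num) h0]; linarith
    linarith [exp_one_lt_d9]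
  have hlog : log ε ≤ -1 := (log_le_iff_le_exp h0).2 hexp
  exact le_abs.2 (Or.inr (by linarith))

theorem le_omegaFn (h0 : 0 < ε) (h1 : ε < 1 / 20) : ε ≤ omegaFn α ε := by
  unfold omegaFn
  split_ifs with h
  · simpa using rpow_le_rpow_of_exponent_ge h0 (by linarith) h.le
  · exact le_mul_of_one_le_right h0.le (one_le_abs_log h0 h1)
  · exact le_rfl

theorem rpow_le_omegaFn (h0 : 0 < ε) (h1 : ε < 1 / 20) : ε ^ α ≤ omegaFn α ε := by
  unfold omegaFn
  split_ifs with h h'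
  · exact le_rfl
  · subst h'
    simpa using le_mul_of_one_le_right h0.le (one_le_abs_log h0 h1)
  · simpa using rpow_le_rpow_of_exponent_ge h0 (by linarith) (not_lt.1 h)

theorem omegaFn_nonneg (h0 : 0 < ε) (h1 : ε < 1 / 20) : 0 ≤ omegaFn α ε :=
  h0.le.trans (le_omegaFn h0 h1)

theorem integrableOn_Ioc_rpow (h0 : 0 < ε) (hb : ε ≤ b) (q : ℝ) :
    IntegrableOn (fun τ : ℝ ↦ τ ^ q) (Ioc ε b) := by
  rw [← intervalIntegrable_iff_integrableOn_Ioc_of_le hb]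
  exact intervalIntegral.intervalIntegrable_rpow (Or.inr (notMem_uIcc_of_lt h0 (h0.trans_le hb)))

theorem integral_Ioc_rpow_neg (h0 : 0 < ε) (hb : ε ≤ b) (hα : α ≠ 1) :
    ∫ τ in Ioc ε b, τ ^ (-α) = (1 - α)⁻¹ * (b ^ (1 - α) - ε ^ (1 - α)) := by
  have hne : -α ≠ -1 := fun h ↦ hα (neg_inj.1 h)
  rw [← intervalIntegral.integral_of_le hb,
    integral_rpow (Or.inr ⟨hne, notMem_uIcc_of_lt h0 (h0.trans_le hb)⟩), neg_add_eq_sub,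
    div_eq_inv_mul]

theorem rpow_mul_integral_Ioc_rpow_neg_le_of_lt_one (h0 : 0 < ε) (hb : ε ≤ b) (hb1 : b ≤ 1)
    (hα : α < 1) : ε ^ α * ∫ τ in Ioc ε b, τ ^ (-α) ≤ (1 - α)⁻¹ * ε ^ α := by
  rw [integral_Ioc_rpow_neg h0 hb hα.ne, mul_comm]
  have hb' : b ^ (1 - α) ≤ 1 := rpow_le_one (h0.le.trans hb) hb1 (sub_nonneg.2 hα.le)
  have hε' : 0 ≤ ε ^ (1 - α) := rpow_nonneg h0.le _
  gcongr
  exact mul_le_of_le_one_right (inv_nonneg.2 (sub_nonneg.2 hα.le)) (by linarith)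

theorem rpow_mul_integral_Ioc_rpow_neg_le_of_one_lt (h0 : 0 < ε) (hb : ε ≤ b)
    (hα : 1 < α) : ε ^ α * ∫ τ in Ioc ε b, τ ^ (-α) ≤ (α - 1)⁻¹ * ε := by
  have hb' : 0 ≤ b ^ (1 - α) := rpow_nonneg (h0.le.trans hb) _
  calc ε ^ α * ∫ τ in Ioc ε b, τ ^ (-α)
      = (α - 1)⁻¹ * (ε ^ α * (ε ^ (1 - α) - b ^ (1 - α))) := by
        rw [integral_Ioc_rpow_neg h0 hb hα.ne', ← neg_sub α 1, inv_neg]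
        ring
    _ ≤ (α - 1)⁻¹ * (ε ^ α * ε ^ (1 - α)) :=
        mul_le_mul_of_nonneg_left (mul_le_mul_of_nonneg_left (by linarith) (rpow_nonneg h0.le α))
          (inv_nonneg.2 (sub_nonneg.2 hα.le))
    _ = (α - 1)⁻¹ * ε := by rw [← rpow_add h0, add_sub_cancel, rpow_one]

theorem integral_Ioc_inv_le_abs_log (h0 : 0 < ε) (hb : ε ≤ b) (hb1 : b ≤ 1) :
    ∫ τ in Ioc ε b, τ⁻¹ ≤ |log ε| := by
  have hb0 : 0 < b := h0.trans_le hb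
  rw [← intervalIntegral.integral_of_le hb, integral_inv (notMem_uIcc_of_lt h0 hb0),
    log_div hb0.ne' h0.ne']
  linarith [log_nonpos hb0.le hb1, neg_le_abs (log ε)]

theorem exists_rpow_mul_integral_Ioc_rpow_neg_le (α : ℝ) :
    ∃ C : ℝ, 0 ≤ C ∧ ∀ ε b : ℝ, 0 < ε → ε < 1 / 20 → ε ≤ b → b ≤ 1 →
      ε ^ α * ∫ τ in Ioc ε b, τ ^ (-α) ≤ C * omegaFn α ε := by
  rcases lt_trichotomy α 1 with hα | rfl | hα
  · refine ⟨(1 - α)⁻¹, inv_nonneg.2 (sub_nonneg.2 hα.le), fun ε b h0 _ hb hb1 ↦ ?_⟩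
    rw [omegaFn, if_pos hα]
    exact rpow_mul_integral_Ioc_rpow_neg_le_of_lt_one h0 hb hb1 hα
  · refine ⟨1, zero_le_one, fun ε b h0 _ hb hb1 ↦ ?_⟩
    rw [omegaFn, if_neg (lt_irrefl _), if_pos rfl, rpow_one, one_mul]
    simp only [rpow_neg_one]
    exact mul_le_mul_of_nonneg_left (integral_Ioc_inv_le_abs_log h0 hb hb1) h0.le
  · refine ⟨(α - 1)⁻¹, inv_nonneg.2 (sub_nonneg.2 hα.le), fun ε b h0 _ hb _ ↦ ?_⟩
    rw [omegaFn, if_neg hα.not_gt, if_neg hα.ne']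
    exact rpow_mul_integral_Ioc_rpow_neg_le_of_one_lt h0 hb hα

theorem abs_setIntegral_le_of_abs_le {H g : ℝ → ℝ} {s : Set ℝ} (hs : MeasurableSet s)
    (hg : IntegrableOn g s) (hH : ∀ τ ∈ s, |H τ| ≤ g τ) : |∫ τ in s, H τ| ≤ ∫ τ in s, g τ := by
  rw [← Real.norm_eq_abs]
  exact norm_integral_le_of_norm_le hg ((ae_restrict_iff' hs).2 (ae_of_all _ hH))

theorem abs_integral_Ioc_zero_le {H : ℝ → ℝ} {K q : ℝ} (h0 : 0 < ε) (hq : q < 1)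
    (hH : ∀ τ ∈ Ioc 0 ε, |H τ| ≤ K * (ε ^ q * τ ^ (-q))) :
    |∫ τ in Ioc 0 ε, H τ| ≤ K * ((1 - q)⁻¹ * ε) := by
  have hint : IntegrableOn (fun τ : ℝ ↦ τ ^ (-q)) (Ioc 0 ε) := by
    rw [← intervalIntegrable_iff_integrableOn_Ioc_of_le h0.le]
    exact intervalIntegral.intervalIntegrable_rpow' (by linarith)
  have hval : ∫ τ in Ioc 0 ε, τ ^ (-q) = (1 - q)⁻¹ * ε ^ (1 - q) := by
    rw [← intervalIntegral.integral_of_le h0.le, integral_rpow (Or.inl (by linarith)),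
      neg_add_eq_sub, zero_rpow (by linarith), sub_zero, div_eq_inv_mul]
  calc |∫ τ in Ioc 0 ε, H τ| ≤ ∫ τ in Ioc 0 ε, K * (ε ^ q * τ ^ (-q)) :=
        abs_setIntegral_le_of_abs_le measurableSet_Ioc ((hint.const_mul _).const_mul _) hH
    _ = K * ((1 - q)⁻¹ * (ε ^ q * ε ^ (1 - q))) := by
        rw [integral_const_mul, integral_const_mul, hval]
        ring
    _ = K * ((1 - q)⁻¹ * ε) := by rw [← rpow_add h0, add_sub_cancel, rpow_one]

theorem exists_abs_integral_Ioc_le_omegaFn (hα2 : α < 2) :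
    ∃ C : ℝ, 0 ≤ C ∧ ∀ (ε b K : ℝ) (H : ℝ → ℝ), 0 < ε → ε < 1 / 20 → ε ≤ b → b ≤ 1 → 0 ≤ K →
      IntegrableOn H (Ioc 0 b) →
      (∀ τ ∈ Ioc 0 ε, |H τ| ≤ K * (ε ^ (α / 2) * τ ^ (-(α / 2)))) →
      (∀ τ ∈ Ioc ε b, |H τ| ≤ K * (ε ^ α * τ ^ (-α))) →
      |∫ τ in Ioc 0 b, H τ| ≤ K * C * omegaFn α ε := by
  obtain ⟨C₁, hC₁, hfar⟩ := exists_rpow_mul_integral_Ioc_rpow_neg_le α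
  have hp : 0 < 1 - α / 2 := by linarith
  refine ⟨(1 - α / 2)⁻¹ + C₁, by positivity, fun ε b K H h0 h1 hb hb1 hK hH hnear hfar' ↦ ?_⟩
  have hsplit : ∫ τ in Ioc 0 b, H τ = (∫ τ in Ioc 0 ε, H τ) + ∫ τ in Ioc ε b, H τ := by
    rw [← Ioc_union_Ioc_eq_Ioc h0.le hb] at hH ⊢
    exact setIntegral_union (Ioc_disjoint_Ioc_of_le le_rfl) measurableSet_Ioc
      (hH.mono_set subset_union_left) (hH.mono_set subset_union_right)
  have hI₁ : |∫ τ in Ioc 0 ε, H τ| ≤ K * ((1 - α / 2)⁻¹ * omegaFn α ε) :=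
    (abs_integral_Ioc_zero_le h0 (by linarith) hnear).trans (by gcongr; exact le_omegaFn h0 h1)
  have hI₂ : |∫ τ in Ioc ε b, H τ| ≤ K * (C₁ * omegaFn α ε) := calc
    |∫ τ in Ioc ε b, H τ| ≤ ∫ τ in Ioc ε b, K * (ε ^ α * τ ^ (-α)) :=
        abs_setIntegral_le_of_abs_le measurableSet_Ioc
          (((integrableOn_Ioc_rpow h0 hb _).const_mul _).const_mul _) hfar'
    _ = K * (ε ^ α * ∫ τ in Ioc ε b, τ ^ (-α)) := by
        rw [integral_const_mul, integral_const_mul]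
    _ ≤ K * (C₁ * omegaFn α ε) := mul_le_mul_of_nonneg_left (hfar ε b h0 h1 hb hb1) hK
  rw [hsplit]
  calc _ ≤ _ := abs_add_le _ _
    _ ≤ _ := add_le_add hI₁ hI₂
    _ = K * ((1 - α / 2)⁻¹ + C₁) * omegaFn α ε := by ring

end Modulus

/-! ### Second differences of the cone profile along a line -/

section ConeLine

variable {α p q ε R s X β κ c τ : ℝ}

/-- The smooth factor of the profile of the cone in the projective coordinate
`X = |w|² / w_d² - 1`, where `s = 1 / cos Θ`. -/
noncomputable def coneFactor (p s X : ℝ) : ℝ :=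
  (2 / ((s + 1) * (√(1 + X) + 1) * (s + √(1 + X)))) ^ p

theorem coneFactor_nonneg (hs : 1 ≤ s) : 0 ≤ coneFactor p s X := by
  have := sqrt_nonneg (1 + X)
  exact rpow_nonneg (by positivity) p

theorem coneFactor_le_one (hp : 0 ≤ p) (hs : 1 ≤ s) : coneFactor p s X ≤ 1 := by
  have hsqrt := sqrt_nonneg (1 + X)
  refine rpow_le_one (by positivity) ?_ hp
  rw [div_le_one (by positivity)]
  calc (2 : ℝ) = (1 + 1) * 1 * 1 := by norm_num
    _ ≤ (s + 1) * (√(1 + X) + 1) * (s + √(1 + X)) := by gcongr <;> linarith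

theorem contDiffAt_coneFactor {E : Type*} [NormedAddCommGroup E] [NormedSpace ℝ E]
    {s X : E → ℝ} {z : E} (hs : ContDiffAt ℝ 2 s z) (hX : ContDiffAt ℝ 2 X z)
    (h1 : 1 ≤ s z) (h2 : 0 < 1 + X z) :
    ContDiffAt ℝ 2 (fun z ↦ coneFactor p (s z) (X z)) z := by
  have := sqrt_pos.2 h2
  have hsqrt' : ContDiffAt ℝ 2 (fun z ↦ √(1 + X z)) z := (contDiffAt_const.add hX).sqrt h2.ne'
  refine ContDiffAt.rpow_const_of_ne (ContDiffAt.div contDiffAt_const ?_ ?_) ?_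
  · fun_prop
  · positivity
  · positivity

theorem lineQuadratic_zero (X β κ : ℝ) : lineQuadratic X β κ 0 = X := by simp [lineQuadratic]

theorem lineQuadratic_nonneg (hX : 0 ≤ X) (hβ : β ^ 2 ≤ X * κ ^ 2) :
    0 ≤ lineQuadratic X β κ τ := by
  have hsq : (√X * |κ| * |τ|) ^ 2 = X * κ ^ 2 * τ ^ 2 := by
    rw [mul_pow, mul_pow, sq_sqrt hX, sq_abs, sq_abs]
  have hβτ : |β * τ| ≤ √X * |κ| * |τ| := by
    refine abs_le_of_sq_le_sq ?_ (by positivity)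
    rw [hsq, mul_pow]
    exact mul_le_mul_of_nonneg_right hβ (sq_nonneg τ)
  calc 0 ≤ (√X - |κ| * |τ|) ^ 2 := sq_nonneg _
    _ = X - 2 * (√X * |κ| * |τ|) + κ ^ 2 * τ ^ 2 := by
        rw [sub_sq, sq_sqrt hX, mul_pow, sq_abs, sq_abs]
        ring
    _ ≤ lineQuadratic X β κ τ := by rw [lineQuadratic]; linarith [(abs_le.1 hβτ).1]

theorem exists_abs_sub_le_and_abs_secondDiff_le {E : Type*} [NormedAddCommGroup E]
    [NormedSpace ℝ E] {S : Set E} {a : ℝ} {ψ : E × ℝ → ℝ} (hS : IsCompact S) (hconv : Convex ℝ S)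
    (hψ : ∀ z ∈ S ×ˢ Icc (-a) a, ContDiffAt ℝ 2 ψ z) :
    ∃ K : ℝ≥0, ∀ z ∈ S, ∀ τ ∈ Icc (-a) a, |ψ (z, τ) - ψ (z, 0)| ≤ K * |τ| ∧
      |secondDiff (fun t ↦ ψ (z, t)) 0 τ| ≤ K * τ ^ 2 := by
  obtain ⟨K, hLip, hK⟩ := exists_abs_secondDiff_le_of_isCompact (hS.prod isCompact_Icc)
    (hconv.prod (convex_Icc (-a) a)) hψ
  refine ⟨K, fun z hz τ hτ ↦ ?_⟩
  have hmem : ∀ t ∈ Icc (-a) a, (z, t) ∈ S ×ˢ Icc (-a) a := fun t ht ↦ ⟨hz, ht⟩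
  have hneg : -τ ∈ Icc (-a) a := ⟨neg_le_neg hτ.2, neg_le.1 hτ.1⟩
  have hzero : (0 : ℝ) ∈ Icc (-a) a := by constructor <;> linarith [hτ.1, hτ.2]
  have hnorm : ‖((0 : E), τ)‖ = |τ| := by simp [Prod.norm_def]
  constructor
  · simpa [Prod.dist_eq, Real.dist_eq] using hLip.dist_le_mul _ (hmem τ hτ) _ (hmem 0 hzero)
  · simpa [secondDiff, hnorm] using hK (z, 0) (hmem 0 hzero) (0, τ) (by simpa using hmem τ hτ)
      (by simpa using hmem (-τ) hneg)

theorem abs_mul_le_of_mem_Icc {x : ℝ} (hx : x ∈ Icc (-1 : ℝ) 1)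
    (hτ : τ ∈ Icc (-(1 / 4) : ℝ) (1 / 4)) : |x * τ| ≤ 1 / 4 := by
  rw [abs_mul]
  exact (mul_le_of_le_one_left (abs_nonneg τ) (abs_le.2 hx)).trans (abs_le.2 hτ)

theorem one_sub_mul_pos_of_mem_Icc (hc : c ∈ Icc (-1 : ℝ) 1)
    (hτ : τ ∈ Icc (-(1 / 4) : ℝ) (1 / 4)) : 0 < 1 - c * τ := by
  linarith [(abs_le.1 (abs_mul_le_of_mem_Icc hc hτ)).2]

theorem exists_abs_secondDiff_one_sub_mul_rpow_le (q : ℝ) :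
    ∃ K : ℝ≥0, ∀ c ∈ Icc (-1 : ℝ) 1, ∀ τ ∈ Icc (-(1 / 4) : ℝ) (1 / 4),
      |secondDiff (fun t ↦ (1 - c * t) ^ q) 0 τ| ≤ K * τ ^ 2 := by
  obtain ⟨K, hK⟩ := exists_abs_sub_le_and_abs_secondDiff_le
    (ψ := fun z : ℝ × ℝ ↦ (1 - z.1 * z.2) ^ q) (isCompact_Icc (a := (-1 : ℝ)) (b := 1))
    (convex_Icc _ _) fun z hz ↦
      ContDiffAt.rpow_const_of_ne (by fun_prop) (one_sub_mul_pos_of_mem_Icc hz.1 hz.2).ne'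
  exact ⟨K, fun c hc τ hτ ↦ (hK c hc τ hτ).2⟩

/-- The smooth part, along a line, of the cone profile weighted by the Jacobian of the projective
substitution. -/
noncomputable def coneWeight (p q s X β κ c τ : ℝ) : ℝ :=
  coneFactor p s (lineQuadratic X β κ τ) * (1 - c * τ) ^ q

theorem coneWeight_zero (p q s X β κ c : ℝ) : coneWeight p q s X β κ c 0 = coneFactor p s X := by
  simp [coneWeight, lineQuadratic_zero]

theorem exists_abs_coneWeight_sub_le_and_abs_secondDiff_le (p q : ℝ) :
    ∃ K : ℝ≥0, ∀ s ∈ Icc (1 : ℝ) 2, ∀ X ∈ Icc (0 : ℝ) 1, ∀ β ∈ Icc (-1 : ℝ) 1,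
      ∀ κ ∈ Icc (0 : ℝ) 2, ∀ c ∈ Icc (-1 : ℝ) 1, ∀ τ ∈ Icc (-(1 / 4) : ℝ) (1 / 4),
      |coneWeight p q s X β κ c τ - coneFactor p s X| ≤ K * |τ| ∧
      |secondDiff (coneWeight p q s X β κ c) 0 τ| ≤ K * τ ^ 2 := by
  let S := Icc (1 : ℝ) 2 ×ˢ Icc (0 : ℝ) 1 ×ˢ Icc (-1 : ℝ) 1 ×ˢ Icc (0 : ℝ) 2 ×ˢ Icc (-1 : ℝ) 1
  let ψ : (ℝ × ℝ × ℝ × ℝ × ℝ) × ℝ → ℝ := fun z ↦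
    coneWeight p q z.1.1 z.1.2.1 z.1.2.2.1 z.1.2.2.2.1 z.1.2.2.2.2 z.2
  have hψ : ∀ z ∈ S ×ˢ Icc (-(1 / 4) : ℝ) (1 / 4), ContDiffAt ℝ 2 ψ z := by
    rintro ⟨⟨s, X, β, κ, c⟩, τ⟩ ⟨⟨hs, hX, hβ, -, hc⟩, hτ⟩
    have hβτ := (abs_le.1 (abs_mul_le_of_mem_Icc hβ hτ)).1
    refine ContDiffAt.mul (contDiffAt_coneFactor (by fun_prop) ?_ hs.1 ?_)
      (ContDiffAt.rpow_const_of_ne (by fun_prop) (one_sub_mul_pos_of_mem_Icc hc hτ).ne')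
    · unfold lineQuadratic
      fun_prop
    · simp only [lineQuadratic]
      linarith [hX.1, mul_nonneg (sq_nonneg κ) (sq_nonneg τ)]
  obtain ⟨K, hK⟩ := exists_abs_sub_le_and_abs_secondDiff_le
    (isCompact_Icc.prod (isCompact_Icc.prod (isCompact_Icc.prod
      (isCompact_Icc.prod isCompact_Icc))))
    ((convex_Icc _ _).prod ((convex_Icc _ _).prod ((convex_Icc _ _).prod
      ((convex_Icc _ _).prod (convex_Icc _ _))))) hψ
  refine ⟨K, fun s hs X hX β hβ κ hκ c hc τ hτ ↦ ?_⟩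
  simpa only [ψ, coneWeight_zero] using hK (s, X, β, κ, c) ⟨hs, hX, hβ, hκ, hc⟩ τ hτ

theorem secondDiff_projIncrement_mul (α c : ℝ) (P M : ℝ → ℝ) (τ : ℝ) :
    secondDiff (projIncrement α c fun t ↦ P t * M t) 0 τ =
      secondDiff (fun t ↦ P t * (M t * (1 - c * t) ^ (α - 1))) 0 τ -
        P 0 * M 0 * secondDiff (fun t ↦ (1 - c * t) ^ (α - 1)) 0 τ := by
  simp only [secondDiff, projIncrement]
  ring

theorem abs_secondDiff_projIncrement_mul_sub_le {P M : ℝ → ℝ} {a b e : ℝ} (hM0 : 0 ≤ M 0)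
    (hM1 : M 0 ≤ 1) (hP : |P τ - P 0| ≤ a) (hP' : |P (-τ) - P 0| ≤ a)
    (hW : |M τ * (1 - c * τ) ^ (α - 1) - M 0| ≤ b)
    (hW' : |M (-τ) * (1 - c * -τ) ^ (α - 1) - M 0| ≤ b)
    (hΔW : |secondDiff (fun t ↦ M t * (1 - c * t) ^ (α - 1)) 0 τ| ≤ e)
    (hΔN : |secondDiff (fun t ↦ (1 - c * t) ^ (α - 1)) 0 τ| ≤ e) :
    |secondDiff (projIncrement α c fun t ↦ P t * M t) 0 τ - M 0 * secondDiff P 0 τ| ≤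
      2 * (a * b) + 2 * (|P 0| * e) := by
  set W : ℝ → ℝ := fun t ↦ M t * (1 - c * t) ^ (α - 1) with hWdef
  set ΔN := secondDiff (fun t ↦ (1 - c * t) ^ (α - 1)) 0 τ
  have hW0 : W 0 = M 0 := by simp [hWdef]
  have hdecomp : secondDiff (projIncrement α c fun t ↦ P t * M t) 0 τ - M 0 * secondDiff P 0 τ =
      (P τ - P 0) * (W τ - M 0) + (P (-τ) - P 0) * (W (-τ) - M 0) +
        (P 0 * secondDiff W 0 τ - P 0 * (M 0 * ΔN)) := by
    rw [secondDiff_projIncrement_mul, secondDiff_mul P W, hW0, zero_add, zero_sub]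
    ring
  have ha : 0 ≤ a := (abs_nonneg _).trans hP
  have h₁ : |(P τ - P 0) * (W τ - M 0)| ≤ a * b := by rw [abs_mul]; gcongr
  have h₂ : |(P (-τ) - P 0) * (W (-τ) - M 0)| ≤ a * b := by rw [abs_mul]; gcongr
  have h₃ : |P 0 * secondDiff W 0 τ| ≤ |P 0| * e := by rw [abs_mul]; gcongr
  have h₄ : |P 0 * (M 0 * ΔN)| ≤ |P 0| * e := by
    rw [abs_mul, abs_mul, abs_of_nonneg hM0]
    gcongr
    exact (mul_le_of_le_one_left (abs_nonneg _) hM1).trans hΔN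
  rw [hdecomp]
  calc _ ≤ a * b + a * b + (|P 0| * e + |P 0| * e) :=
        (abs_add_le _ _).trans (add_le_add ((abs_add_le _ _).trans (add_le_add h₁ h₂))
          ((abs_sub _ _).trans (add_le_add h₃ h₄)))
    _ = _ := by ring

theorem abs_max_rpow_sub_max_rpow_le {a b : ℝ} (hp : 0 ≤ p) (hp1 : p ≤ 1) :
    |max a 0 ^ p - max b 0 ^ p| ≤ |a - b| ^ p := by
  wlog hab : b ≤ a generalizing a b
  · rw [abs_sub_comm, abs_sub_comm a b]
    exact this (le_of_not_ge hab)
  have hmono : max b 0 ^ p ≤ max a 0 ^ p :=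
    rpow_le_rpow (le_max_right _ _) (max_le_max_right 0 hab) hp
  have hmax : max a 0 ≤ max b 0 + (a - b) :=
    max_le (by linarith [le_max_left b 0]) (by linarith [le_max_right b 0])
  have hsub : max a 0 ^ p ≤ max b 0 ^ p + (a - b) ^ p :=
    (rpow_le_rpow (le_max_right _ _) hmax hp).trans
      (rpow_add_le_add_rpow (le_max_right b 0) (sub_nonneg.2 hab) hp hp1)
  rw [abs_of_nonneg (sub_nonneg.2 hmono), abs_of_nonneg (sub_nonneg.2 hab)]
  linarith

/-- The range of the parameters of a line through a point of a cone whose angle is of order `ε`.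
In projective coordinates the cone is `{X < R}`, the line is `τ ↦ lineQuadratic X β κ τ`, and
`1 - c * τ` is the denominator of the inverse projective substitution. -/
structure IsNarrowLine (ε R s X β κ c : ℝ) : Prop where
  pos : 0 < ε
  lt : ε < 1 / 20
  le_sq : R ≤ (3 * ε) ^ 2
  one_le : 1 ≤ s
  le_two : s ≤ 2
  nonneg : 0 ≤ X
  mem : X < R
  slope_sq_le : β ^ 2 ≤ X * κ ^ 2
  speed_nonneg : 0 ≤ κ
  speed_le : κ ≤ 2
  tilt_mem : c ∈ Icc (-1) 1

theorem IsNarrowLine.abs_slope_le (h : IsNarrowLine ε R s X β κ c) : |β| ≤ 6 * ε := by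
  have hε := h.pos
  refine abs_le_of_sq_le_sq ?_ (by positivity)
  calc β ^ 2 ≤ X * κ ^ 2 := h.slope_sq_le
    _ ≤ (3 * ε) ^ 2 * 2 ^ 2 := by
        gcongr
        exacts [h.mem.le.trans h.le_sq, h.speed_nonneg, h.speed_le]
    _ = (6 * ε) ^ 2 := by ring

theorem IsNarrowLine.slope_mem (h : IsNarrowLine ε R s X β κ c) : β ∈ Icc (-1) 1 :=
  abs_le.1 (h.abs_slope_le.trans (by linarith [h.lt]))

theorem IsNarrowLine.mem_Icc (h : IsNarrowLine ε R s X β κ c) : X ∈ Icc 0 1 :=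
  ⟨h.nonneg, by nlinarith [h.mem, h.le_sq, h.lt, h.pos]⟩

/-- The singular factor of the cone profile along a line. -/
noncomputable def lineRpow (p R X β κ τ : ℝ) : ℝ := max (R - lineQuadratic X β κ τ) 0 ^ p

theorem lineRpow_nonneg : 0 ≤ lineRpow p R X β κ τ := rpow_nonneg (le_max_right _ _) p

theorem continuous_lineRpow (hp : 0 ≤ p) : Continuous (lineRpow p R X β κ) := by
  unfold lineRpow lineQuadratic
  exact Continuous.rpow_const (by fun_prop) fun _ ↦ Or.inr hp

theorem contDiffAt_lineRpow (hXR : X < R) : ContDiffAt ℝ 2 (lineRpow p R X β κ) 0 := by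
  have hcont : Continuous fun τ ↦ R - lineQuadratic X β κ τ := by
    unfold lineQuadratic
    fun_prop
  have hpos : 0 < R - lineQuadratic X β κ 0 := by rw [lineQuadratic_zero]; linarith
  refine ContDiffAt.congr_of_eventuallyEq (f := fun τ ↦ (R - lineQuadratic X β κ τ) ^ p)
    (ContDiffAt.rpow_const_of_ne ?_ hpos.ne') ?_
  · unfold lineQuadratic
    fun_prop
  · filter_upwards [hcont.continuousAt.eventually_mem (Ioi_mem_nhds hpos)] with τ hτ
    rw [lineRpow, max_eq_left (le_of_lt hτ)]

theorem max_sub_rpow_le {Y : ℝ} (hp : 0 ≤ p) (hp1 : p ≤ 1) (hε : 0 ≤ ε) (hR : R ≤ (3 * ε) ^ 2)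
    (hY : 0 ≤ Y) : max (R - Y) 0 ^ p ≤ 9 * ε ^ (2 * p) := by
  calc max (R - Y) 0 ^ p ≤ (9 * ε ^ 2) ^ p :=
        rpow_le_rpow (le_max_right _ _) (max_le (by linarith) (by positivity)) hp
    _ = 9 ^ p * ε ^ (2 * p) := by
        rw [mul_rpow (by norm_num) (by positivity), ← rpow_natCast_mul hε]
        norm_num
    _ ≤ 9 * ε ^ (2 * p) := by
        gcongr
        simpa using rpow_le_rpow_of_exponent_le (x := 9) (by norm_num) hp1

theorem IsNarrowLine.lineRpow_le (h : IsNarrowLine ε R s X β κ c) (hp : 0 ≤ p) (hp1 : p ≤ 1) :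
    lineRpow p R X β κ τ ≤ 9 * ε ^ (2 * p) :=
  max_sub_rpow_le hp hp1 h.pos.le h.le_sq (lineQuadratic_nonneg h.nonneg h.slope_sq_le)

theorem IsNarrowLine.abs_lineRpow_sub_le (h : IsNarrowLine ε R s X β κ c) (hp : 0 ≤ p)
    (hp1 : p ≤ 1) : |lineRpow p R X β κ τ - lineRpow p R X β κ 0| ≤ 9 * ε ^ (2 * p) :=
  abs_sub_le_of_nonneg_of_le lineRpow_nonneg (h.lineRpow_le hp hp1) lineRpow_nonneg
    (h.lineRpow_le hp hp1)

theorem IsNarrowLine.abs_lineQuadratic_sub_le (h : IsNarrowLine ε R s X β κ c) (hτ : |τ| ≤ ε) :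
    |lineQuadratic X β κ τ - X| ≤ 16 * (ε * |τ|) := by
  have hκ : κ ^ 2 ≤ 2 ^ 2 := pow_le_pow_left₀ h.speed_nonneg h.speed_le 2
  calc |lineQuadratic X β κ τ - X| = |2 * β * τ + κ ^ 2 * τ ^ 2| := by
        rw [lineQuadratic]
        ring_nf
    _ ≤ 2 * (|β| * |τ|) + κ ^ 2 * (|τ| * |τ|) := by
        refine (abs_add_le _ _).trans_eq ?_
        rw [abs_mul, abs_mul, abs_mul, abs_two, abs_pow, abs_pow, sq_abs, sq |τ|, mul_assoc]
    _ ≤ 2 * (6 * ε * |τ|) + 2 ^ 2 * (ε * |τ|) := by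
        gcongr
        exact h.abs_slope_le
    _ = 16 * (ε * |τ|) := by ring

theorem IsNarrowLine.abs_lineRpow_sub_le_of_abs_le (h : IsNarrowLine ε R s X β κ c) (hp : 0 ≤ p)
    (hp1 : p ≤ 1) (hτ : |τ| ≤ ε) :
    |lineRpow p R X β κ τ - lineRpow p R X β κ 0| ≤ 16 * (ε ^ p * |τ| ^ p) := by
  calc |lineRpow p R X β κ τ - lineRpow p R X β κ 0|
      ≤ |lineQuadratic X β κ τ - X| ^ p := by
        refine (abs_max_rpow_sub_max_rpow_le hp hp1).trans_eq ?_
        rw [lineQuadratic_zero, sub_sub_sub_cancel_left, abs_sub_comm]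
    _ ≤ (16 * (ε * |τ|)) ^ p := rpow_le_rpow (abs_nonneg _) (h.abs_lineQuadratic_sub_le hτ) hp
    _ = 16 ^ p * (ε ^ p * |τ| ^ p) := by
        rw [mul_rpow (by norm_num) (mul_nonneg h.pos.le (abs_nonneg τ)),
          mul_rpow h.pos.le (abs_nonneg τ)]
    _ ≤ 16 * (ε ^ p * |τ| ^ p) := by
        refine mul_le_mul_of_nonneg_right ?_
          (mul_nonneg (rpow_nonneg h.pos.le p) (rpow_nonneg (abs_nonneg τ) p))
        simpa using rpow_le_rpow_of_exponent_le (x := 16) (by norm_num) hp1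

/-- The profile of the cone along a line, in projective coordinates. -/
noncomputable def coneLine (p R s X β κ τ : ℝ) : ℝ :=
  lineRpow p R X β κ τ * coneFactor p s (lineQuadratic X β κ τ)

theorem IsNarrowLine.contDiffAt_coneFactor_lineQuadratic (h : IsNarrowLine ε R s X β κ c) :
    ContDiffAt ℝ 2 (fun τ ↦ coneFactor p s (lineQuadratic X β κ τ)) τ := by
  refine contDiffAt_coneFactor contDiffAt_const ?_ h.one_le ?_
  · unfold lineQuadratic
    fun_prop
  · exact add_pos_of_pos_of_nonneg one_pos (lineQuadratic_nonneg h.nonneg h.slope_sq_le)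

theorem IsNarrowLine.continuous_coneLine (h : IsNarrowLine ε R s X β κ c) (hp : 0 ≤ p) :
    Continuous (coneLine p R s X β κ) :=
  (continuous_lineRpow hp).mul <| continuous_iff_continuousAt.2 fun _ ↦
    h.contDiffAt_coneFactor_lineQuadratic.continuousAt

theorem IsNarrowLine.contDiffAt_coneLine (h : IsNarrowLine ε R s X β κ c) :
    ContDiffAt ℝ 2 (coneLine p R s X β κ) 0 :=
  (contDiffAt_lineRpow h.mem).mul h.contDiffAt_coneFactor_lineQuadratic

theorem exists_abs_secondDiff_projIncrement_coneLine_sub_le (hα : 0 < α) (hα2 : α < 2) :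
    ∃ K : ℝ, 0 ≤ K ∧ ∀ {ε R s X β κ c : ℝ}, IsNarrowLine ε R s X β κ c →
      ∀ τ ∈ Ioc (0 : ℝ) (1 / 4), ∀ a,
      (∀ σ, |σ| = τ → |lineRpow (α / 2) R X β κ σ - lineRpow (α / 2) R X β κ 0| ≤ a) →
      |secondDiff (projIncrement α c (coneLine (α / 2) R s X β κ)) 0 τ -
        coneFactor (α / 2) s X * secondDiff (lineRpow (α / 2) R X β κ) 0 τ| ≤
        K * (τ * a + τ ^ 2 * ε ^ α) := by
  obtain ⟨K₁, hK₁⟩ := exists_abs_coneWeight_sub_le_and_abs_secondDiff_le (α / 2) (α - 1)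
  obtain ⟨K₂, hK₂⟩ := exists_abs_secondDiff_one_sub_mul_rpow_le (α - 1)
  refine ⟨18 * (K₁ + K₂), by positivity, fun {ε R s X β κ c} h τ hτ a ha ↦ ?_⟩
  have hp : 0 ≤ α / 2 := by linarith
  have hτ0 : 0 ≤ τ := hτ.1.le
  have hmem : τ ∈ Icc (-(1 / 4) : ℝ) (1 / 4) := ⟨by linarith, hτ.2⟩
  have hnegmem : -τ ∈ Icc (-(1 / 4) : ℝ) (1 / 4) := ⟨neg_le_neg hτ.2, by linarith⟩
  have hline := hK₁ s ⟨h.one_le, h.le_two⟩ X h.mem_Icc β h.slope_mem κ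
    ⟨h.speed_nonneg, h.speed_le⟩ c h.tilt_mem
  have hP0 : |lineRpow (α / 2) R X β κ 0| ≤ 9 * ε ^ α := by
    rw [abs_of_nonneg lineRpow_nonneg]
    simpa [mul_div_cancel₀] using h.lineRpow_le (τ := 0) hp (by linarith)
  have ha0 : 0 ≤ a := (abs_nonneg _).trans (ha τ (abs_of_nonneg hτ0))
  have hM0 : coneFactor (α / 2) s (lineQuadratic X β κ 0) = coneFactor (α / 2) s X := by
    rw [lineQuadratic_zero]
  have hbound := abs_secondDiff_projIncrement_mul_sub_le (α := α) (c := c) (τ := τ)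
    (P := lineRpow (α / 2) R X β κ) (M := fun t ↦ coneFactor (α / 2) s (lineQuadratic X β κ t))
    (b := K₁ * τ) (e := (K₁ + K₂) * τ ^ 2) (coneFactor_nonneg h.one_le)
    (coneFactor_le_one hp h.one_le) (ha τ (abs_of_nonneg hτ0))
    (ha (-τ) (by rw [abs_neg, abs_of_nonneg hτ0]))
    (by simpa only [coneWeight, hM0, abs_of_nonneg hτ0] using (hline τ hmem).1)
    (by simpa only [coneWeight, hM0, abs_neg, abs_of_nonneg hτ0] using (hline (-τ) hnegmem).1)
    ((hline τ hmem).2.trans (by gcongr; simp))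
    ((hK₂ c h.tilt_mem τ hmem).trans (by gcongr; simp))
  rw [hM0] at hbound
  have := rpow_nonneg h.pos.le α
  have hnn : 0 ≤ 16 * (K₁ : ℝ) * (τ * a) + 18 * K₂ * (τ * a) := by positivity
  calc _ ≤ 2 * (a * (K₁ * τ)) + 2 * (|lineRpow (α / 2) R X β κ 0| * ((K₁ + K₂) * τ ^ 2)) := hbound
    _ ≤ 2 * (a * (K₁ * τ)) + 2 * (9 * ε ^ α * ((K₁ + K₂) * τ ^ 2)) := by gcongr
    _ ≤ 18 * (K₁ + K₂) * (τ * a + τ ^ 2 * ε ^ α) := by linarith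

theorem rpow_add_le_of_mem_Ioc (hα : 0 ≤ α) (hα2 : α < 2) (hε0 : 0 < ε) (hε1 : ε ≤ 1)
    (hτ0 : 0 < τ) (hτ1 : τ ≤ 1) :
    (τ * (16 * (ε ^ (α / 2) * τ ^ (α / 2))) + τ ^ 2 * ε ^ α) * τ ^ (-1 - α) ≤
      17 * (ε ^ (α / 2) * τ ^ (-(α / 2))) := by
  have hsing : τ * τ ^ (α / 2) * τ ^ (-1 - α) = τ ^ (-(α / 2)) := by
    rw [← rpow_one_add' hτ0.le (by linarith), ← rpow_add hτ0]
    ring_nf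
  have hreg : τ ^ 2 * τ ^ (-1 - α) = τ ^ (-(α / 2)) * τ ^ (1 - α / 2) := by
    rw [← rpow_natCast τ 2, ← rpow_add hτ0, ← rpow_add hτ0]
    push_cast
    ring_nf
  have hε : ε ^ α = ε ^ (α / 2) * ε ^ (α / 2) := by rw [← rpow_add hε0, add_halves]
  have hle : ε ^ (α / 2) * τ ^ (1 - α / 2) ≤ 1 :=
    mul_le_one₀ (rpow_le_one hε0.le hε1 (by linarith)) (rpow_nonneg hτ0.le _)
      (rpow_le_one hτ0.le hτ1 (by linarith))
  have hnn : 0 ≤ ε ^ (α / 2) * τ ^ (-(α / 2)) :=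
    mul_nonneg (rpow_nonneg hε0.le _) (rpow_nonneg hτ0.le _)
  calc _ = 16 * ε ^ (α / 2) * (τ * τ ^ (α / 2) * τ ^ (-1 - α)) +
        ε ^ α * (τ ^ 2 * τ ^ (-1 - α)) := by ring
    _ = ε ^ (α / 2) * τ ^ (-(α / 2)) * (16 + ε ^ (α / 2) * τ ^ (1 - α / 2)) := by
        rw [hsing, hreg, hε]
        ring
    _ ≤ ε ^ (α / 2) * τ ^ (-(α / 2)) * (16 + 1) :=
        mul_le_mul_of_nonneg_left (by linarith) hnn
    _ = 17 * (ε ^ (α / 2) * τ ^ (-(α / 2))) := by ring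

theorem add_sq_mul_rpow_le (hε : 0 ≤ ε) (hτ0 : 0 < τ) (hτ1 : τ ≤ 1) :
    (τ * (9 * ε ^ α) + τ ^ 2 * ε ^ α) * τ ^ (-1 - α) ≤ 17 * (ε ^ α * τ ^ (-α)) := by
  have hpow : τ * τ ^ (-1 - α) = τ ^ (-α) := by
    nth_rw 1 [← rpow_one τ]
    rw [← rpow_add hτ0]
    ring_nf
  have hnn : 0 ≤ ε ^ α * τ ^ (-α) := mul_nonneg (rpow_nonneg hε _) (rpow_nonneg hτ0.le _)
  calc _ = ε ^ α * (τ * τ ^ (-1 - α)) * (9 + τ) := by ring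
    _ = ε ^ α * τ ^ (-α) * (9 + τ) := by rw [hpow]
    _ ≤ ε ^ α * τ ^ (-α) * 17 := mul_le_mul_of_nonneg_left (by linarith) hnn
    _ = 17 * (ε ^ α * τ ^ (-α)) := by ring

theorem IsNarrowLine.integrableOn_secondDiff_lineRpow (h : IsNarrowLine ε R s X β κ c)
    (hα : 0 < α) (hα2 : α < 2) :
    IntegrableOn (fun τ ↦ secondDiff (lineRpow (α / 2) R X β κ) 0 τ * τ ^ (-1 - α)) (Ioi 0) := by
  have hp : 0 ≤ α / 2 := by linarith
  have hint := integrableOn_secondDiff_mul_rpow hα hα2 (continuous_lineRpow hp).measurable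
    (fun τ ↦ (abs_of_nonneg lineRpow_nonneg).trans_le (h.lineRpow_le (τ := τ) hp (by linarith)))
    (contDiffAt_lineRpow h.mem) 1
  simpa using hint

theorem IsNarrowLine.integral_secondDiff_lineRpow (h : IsNarrowLine ε R s X β κ c)
    (hα : 0 < α) (hα2 : α < 2) :
    ∫ τ in Ioi 0, secondDiff (lineRpow (α / 2) R X β κ) 0 τ * τ ^ (-1 - α) =
      -(Gamma (α / 2) * Gamma (1 - α / 2) * κ ^ α) := by
  have hGetoor := secondDiffIntegral_sub_lineQuadratic_rpow (p := α / 2) (half_pos hα)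
    (by linarith) h.mem h.speed_nonneg h.slope_sq_le
  rw [mul_div_cancel₀ α two_ne_zero] at hGetoor
  unfold lineRpow
  simpa [secondDiffIntegral] using hGetoor

theorem IsNarrowLine.abs_integral_Ioc_secondDiff_lineRpow_add_le
    (h : IsNarrowLine ε R s X β κ c) (hα : 0 < α) (hα2 : α < 2) :
    |(∫ τ in Ioc 0 (1 / 4), secondDiff (lineRpow (α / 2) R X β κ) 0 τ * τ ^ (-1 - α)) +
      Gamma (α / 2) * Gamma (1 - α / 2) * κ ^ α| ≤ 36 * ((1 / 4) ^ (-α) / α) * ε ^ α := by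
  have hint := h.integrableOn_secondDiff_lineRpow hα hα2
  have hsplit := h.integral_secondDiff_lineRpow hα hα2
  rw [← Ioc_union_Ioi_eq_Ioi (show (0 : ℝ) ≤ 1 / 4 by norm_num), setIntegral_union
    (Ioc_disjoint_Ioi le_rfl) measurableSet_Ioi (hint.mono_set Ioc_subset_Ioi_self)
    (hint.mono_set (Ioi_subset_Ioi (by norm_num)))] at hsplit
  have hbound : ∀ τ, |lineRpow (α / 2) R X β κ τ| ≤ 9 * ε ^ α := fun τ ↦ by
    rw [abs_of_nonneg lineRpow_nonneg]
    simpa [mul_div_cancel₀] using h.lineRpow_le (τ := τ) (half_pos hα).le (by linarith)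
  have htail := abs_integral_Ioi_mul_rpow_le (a := 1 / 4) (by norm_num) hα fun τ _ ↦
    abs_secondDiff_le_of_bounded hbound (x := 0) (h := τ)
  rw [eq_sub_of_add_eq hsplit, sub_add_eq_add_sub, neg_add_cancel, zero_sub, abs_neg]
  exact htail.trans_eq (by ring)

theorem IsNarrowLine.integrableOn_secondDiff_projIncrement (h : IsNarrowLine ε R s X β κ c)
    (hα : 0 < α) (hα2 : α < 2) :
    IntegrableOn (fun τ ↦ secondDiff (projIncrement α c (coneLine (α / 2) R s X β κ)) 0 τ *
      τ ^ (-1 - α)) (Ioc 0 (1 / 4)) := by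
  have hc : |c| * (1 / 4) < 1 := by linarith [abs_le.2 h.tilt_mem]
  exact integrableOn_Ioc_secondDiff_mul_rpow hα hα2 (by norm_num)
    (continuousOn_projIncrement hc (h.continuous_coneLine (half_pos hα).le).continuousOn)
    (contDiffAt_projIncrement h.contDiffAt_coneLine)

theorem exists_abs_integral_secondDiff_projIncrement_sub_le (hα : 0 < α) (hα2 : α < 2) :
    ∃ C : ℝ, 0 ≤ C ∧ ∀ {ε R s X β κ c : ℝ}, IsNarrowLine ε R s X β κ c →
      |∫ τ in Ioc 0 (1 / 4), (secondDiff (projIncrement α c (coneLine (α / 2) R s X β κ)) 0 τ -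
        coneFactor (α / 2) s X * secondDiff (lineRpow (α / 2) R X β κ) 0 τ) * τ ^ (-1 - α)| ≤
        C * omegaFn α ε := by
  obtain ⟨K, hK, hKle⟩ := exists_abs_secondDiff_projIncrement_coneLine_sub_le hα hα2
  obtain ⟨C, hC, hCle⟩ := exists_abs_integral_Ioc_le_omegaFn hα2
  refine ⟨17 * K * C, by positivity, fun {ε R s X β κ c} h ↦ ?_⟩
  have hp : 0 ≤ α / 2 := by linarith
  have hp1 : α / 2 ≤ 1 := by linarith
  have hε := h.pos
  have hε1 := h.lt
  set D : ℝ → ℝ := fun τ ↦ secondDiff (projIncrement α c (coneLine (α / 2) R s X β κ)) 0 τ -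
    coneFactor (α / 2) s X * secondDiff (lineRpow (α / 2) R X β κ) 0 τ with hD
  have hint : IntegrableOn (fun τ ↦ D τ * τ ^ (-1 - α)) (Ioc 0 (1 / 4)) := by
    simp only [hD, sub_mul, mul_assoc]
    exact (h.integrableOn_secondDiff_projIncrement hα hα2).sub
      (((h.integrableOn_secondDiff_lineRpow hα hα2).mono_set Ioc_subset_Ioi_self).const_mul _)
  have hDle : ∀ τ ∈ Ioc (0 : ℝ) (1 / 4), ∀ a b,
      (∀ σ, |σ| = τ → |lineRpow (α / 2) R X β κ σ - lineRpow (α / 2) R X β κ 0| ≤ a) →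
      (τ * a + τ ^ 2 * ε ^ α) * τ ^ (-1 - α) ≤ 17 * b → |D τ * τ ^ (-1 - α)| ≤ 17 * K * b := by
    intro τ hτ a b ha hb
    rw [abs_mul, abs_of_nonneg (rpow_nonneg hτ.1.le _)]
    calc _ ≤ K * (τ * a + τ ^ 2 * ε ^ α) * τ ^ (-1 - α) :=
          mul_le_mul_of_nonneg_right (hKle h τ hτ a ha) (rpow_nonneg hτ.1.le _)
      _ = K * ((τ * a + τ ^ 2 * ε ^ α) * τ ^ (-1 - α)) := by ring
      _ ≤ K * (17 * b) := by gcongr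
      _ = 17 * K * b := by ring
  refine hCle ε (1 / 4) (17 * K) _ hε hε1 (by linarith) (by norm_num) (by positivity) hint
    (fun τ hτ ↦ hDle τ ⟨hτ.1, by linarith [hτ.2]⟩ _ _ (fun σ hσ ↦ ?_)
      (rpow_add_le_of_mem_Ioc hα.le hα2 hε (by linarith) hτ.1 (by linarith [hτ.2])))
    (fun τ hτ ↦ hDle τ ⟨hε.trans hτ.1, hτ.2⟩ _ _ (fun σ _ ↦ ?_)
      (add_sq_mul_rpow_le hε.le (hε.trans hτ.1) (by linarith [hτ.2])))
  · simpa only [hσ] using h.abs_lineRpow_sub_le_of_abs_le hp hp1 (hσ.trans_le hτ.2)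
  · simpa only [mul_div_cancel₀ α two_ne_zero] using h.abs_lineRpow_sub_le hp hp1

theorem exists_abs_integral_projIncrement_coneLine_add_le (hα : 0 < α) (hα2 : α < 2) :
    ∃ C : ℝ, 0 ≤ C ∧ ∀ {ε R s X β κ c : ℝ}, IsNarrowLine ε R s X β κ c →
      |(∫ τ in Ioc 0 (1 / 4), secondDiff (projIncrement α c (coneLine (α / 2) R s X β κ)) 0 τ *
        τ ^ (-1 - α)) + coneFactor (α / 2) s X * (Gamma (α / 2) * Gamma (1 - α / 2) * κ ^ α)| ≤
        C * omegaFn α ε := by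
  obtain ⟨C, hC, hCle⟩ := exists_abs_integral_secondDiff_projIncrement_sub_le hα hα2
  refine ⟨C + 36 * ((1 / 4) ^ (-α) / α), by positivity, fun {ε R s X β κ c} h ↦ ?_⟩
  have hdiff := hCle h
  have hmain := h.abs_integral_Ioc_secondDiff_lineRpow_add_le hα hα2
  simp only [sub_mul, mul_assoc] at hdiff
  rw [integral_sub (h.integrableOn_secondDiff_projIncrement hα hα2)
    (((h.integrableOn_secondDiff_lineRpow hα hα2).mono_set Ioc_subset_Ioi_self).const_mul _),
    integral_const_mul] at hdiff
  set I := ∫ τ in Ioc 0 (1 / 4),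
    secondDiff (projIncrement α c (coneLine (α / 2) R s X β κ)) 0 τ * τ ^ (-1 - α)
  set J := ∫ τ in Ioc 0 (1 / 4), secondDiff (lineRpow (α / 2) R X β κ) 0 τ * τ ^ (-1 - α)
  set M := coneFactor (α / 2) s X
  set g := Gamma (α / 2) * Gamma (1 - α / 2) * κ ^ α
  have hM : |M| ≤ 1 := by
    rw [abs_of_nonneg (coneFactor_nonneg h.one_le)]
    exact coneFactor_le_one (half_pos hα).le h.one_le
  calc |I + M * g| = |(I - M * J) + M * (J + g)| := by ring_nf
    _ ≤ |I - M * J| + |M| * |J + g| := (abs_add_le _ _).trans_eq (by rw [abs_mul])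
    _ ≤ C * omegaFn α ε + 36 * ((1 / 4) ^ (-α) / α) * ε ^ α :=
        add_le_add hdiff ((mul_le_of_le_one_left (abs_nonneg _) hM).trans hmain)
    _ ≤ C * omegaFn α ε + 36 * ((1 / 4) ^ (-α) / α) * omegaFn α ε := by
        gcongr
        exact rpow_le_omegaFn h.pos h.lt
    _ = (C + 36 * ((1 / 4) ^ (-α) / α)) * omegaFn α ε := by ring

theorem abs_integral_Ioi_le_omegaFn {g : ℝ → ℝ} {b : ℝ} (hα : 0 < α) (h0 : 0 < ε)
    (h1 : ε < 1 / 20) (hg : ∀ t, |g t| ≤ 9 * ε ^ α) (hb : 1 / 20 ≤ b) (x : ℝ → ℝ) :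
    |∫ t in Ioi b, (g (x t) - g 0) * t ^ (-1 - α)| ≤
      18 * ((1 / 20) ^ (-α) / α) * omegaFn α ε := by
  have hsub : ∀ t, |g (x t) - g 0| ≤ 18 * ε ^ α := fun t ↦ by
    linarith [abs_sub (g (x t)) (g 0), hg (x t), hg 0]
  have hω := rpow_le_omegaFn (α := α) h0 h1
  have hbα : b ^ (-α) ≤ (1 / 20) ^ (-α) := rpow_le_rpow_of_nonpos (by norm_num) hb (by linarith)
  have : 0 ≤ b ^ (-α) := rpow_nonneg (by linarith) _
  have := omegaFn_nonneg (α := α) h0 h1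
  calc _ ≤ 18 * ε ^ α * (b ^ (-α) / α) :=
        abs_integral_Ioi_mul_rpow_le (by linarith) hα fun t _ ↦ hsub t
    _ ≤ 18 * omegaFn α ε * ((1 / 20) ^ (-α) / α) := by gcongr
    _ = 18 * ((1 / 20) ^ (-α) / α) * omegaFn α ε := by ring

theorem exists_abs_secondDiffIntegral_coneLine_add_le (hα : 0 < α) (hα2 : α < 2) :
    ∃ C : ℝ, 0 ≤ C ∧ ∀ {ε R s X β κ c : ℝ}, IsNarrowLine ε R s X β κ c →
      ∀ ρ ∈ Icc (1 / 4 : ℝ) (1 / 2), ∀ f : ℝ → ℝ, Measurable f → (∀ t, |f t| ≤ 9 * ε ^ α) →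
      (∀ t ∈ Icc (-(ρ * (1 / 4) / (1 + c * (1 / 4)))) (ρ * (1 / 4) / (1 - c * (1 / 4))),
        f t = coneLine (α / 2) R s X β κ (t / (ρ + c * t))) →
      |secondDiffIntegral α f 0 1 +
        ρ ^ (-α) * (coneFactor (α / 2) s X * (Gamma (α / 2) * Gamma (1 - α / 2) * κ ^ α))| ≤
        C * omegaFn α ε := by
  obtain ⟨C, hC, hCle⟩ := exists_abs_integral_projIncrement_coneLine_add_le hα hα2
  refine ⟨(1 / 4) ^ (-α) * C + 36 * ((1 / 20) ^ (-α) / α), by positivity,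
    fun {ε R s X β κ c} h ρ hρ f hfm hfB hf ↦ ?_⟩
  have hρ0 : 0 < ρ := by linarith [hρ.1]
  have hc : |c| * (1 / 4) < 1 := by linarith [abs_le.2 h.tilt_mem]
  have hcut : ∀ y ∈ Icc (3 / 4 : ℝ) (5 / 4), 1 / 20 ≤ ρ * (1 / 4) / y := fun y hy ↦ by
    rw [le_div_iff₀ (by linarith [hy.1])]
    linarith [hy.2, hρ.1]
  have hright := abs_integral_Ioi_le_omegaFn hα h.pos h.lt hfB
    (hcut (1 - c * (1 / 4)) ⟨by linarith [h.tilt_mem.2], by linarith [h.tilt_mem.1]⟩) id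
  have hleft := abs_integral_Ioi_le_omegaFn hα h.pos h.lt hfB
    (hcut (1 + c * (1 / 4)) ⟨by linarith [h.tilt_mem.1], by linarith [h.tilt_mem.2]⟩) Neg.neg
  have hρα : |ρ ^ (-α)| ≤ (1 / 4) ^ (-α) := by
    rw [abs_of_pos (rpow_pos_of_pos hρ0 _)]
    exact rpow_le_rpow_of_nonpos (by norm_num) hρ.1 (by linarith)
  have hnear := mul_le_mul hρα (hCle h) (abs_nonneg _) (by positivity)
  rw [← abs_mul, mul_add] at hnear
  rw [secondDiffIntegral_projective hα hα2 hρ0 (by norm_num) hc hfm hfB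
    (h.continuous_coneLine (half_pos hα).le).continuousOn h.contDiffAt_coneLine hf]
  simp only [id] at hright
  calc _ ≤ (1 / 4) ^ (-α) * (C * omegaFn α ε) + 18 * ((1 / 20) ^ (-α) / α) * omegaFn α ε +
        18 * ((1 / 20) ^ (-α) / α) * omegaFn α ε := by
        rw [abs_le] at hnear hright hleft ⊢
        constructor <;> linarith [hnear.1, hnear.2, hright.1, hright.2, hleft.1, hleft.2]
    _ = _ := by ring

end ConeLine

/-! ### The fractional Laplacian in polar coordinates -/

section Polar

theorem integral_volumeIoiPow {F : Type*} [NormedAddCommGroup F] [NormedSpace ℝ F] (n : ℕ)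
    (g : ℝ → F) :
    ∫ r : Ioi (0 : ℝ), g r ∂Measure.volumeIoiPow n = ∫ r in Ioi (0 : ℝ), r ^ n • g r := by
  simp only [Measure.volumeIoiPow, ENNReal.ofReal]
  rw [integral_withDensity_eq_integral_smul ((measurable_subtype_coe.pow_const _).real_toNNReal),
    integral_subtype_comap measurableSet_Ioi fun a : ℝ ↦ Real.toNNReal (a ^ n) • g a]
  refine setIntegral_congr_fun measurableSet_Ioi fun x hx ↦ ?_
  rw [NNReal.smul_def, Real.coe_toNNReal _ (pow_nonneg (le_of_lt hx) _)]

theorem comp_smul_homeomorphUnitSphereProd {E F : Type*} [NormedAddCommGroup E]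
    [NormedSpace ℝ E] (f : E → F) :
    (fun z : sphere (0 : E) 1 × Ioi (0 : ℝ) ↦ f ((z.2 : ℝ) • (z.1 : E))) ∘
      homeomorphUnitSphereProd E = f ∘ Subtype.val := by
  funext x
  have hx := congrArg Subtype.val ((homeomorphUnitSphereProd E).symm_apply_apply x)
  rw [homeomorphUnitSphereProd_symm_apply_coe] at hx
  exact congrArg f hx

theorem pow_finrank_sub_one_mul_rpow {E : Type*} [NormedAddCommGroup E] [NormedSpace ℝ E]
    [FiniteDimensional ℝ E] [Nontrivial E] {r : ℝ} (hr : 0 < r) (α a : ℝ) :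
    r ^ (Module.finrank ℝ E - 1) * (a * r ^ (-(Module.finrank ℝ E : ℝ) - α)) =
      a * r ^ (-1 - α) := by
  rw [mul_left_comm, ← rpow_natCast, ← rpow_add hr, Nat.cast_pred Module.finrank_pos]
  ring_nf

theorem integral_Ioi_pow_smul_secondDiff {E : Type*} [NormedAddCommGroup E] [NormedSpace ℝ E]
    [FiniteDimensional ℝ E] [Nontrivial E] {u : E → ℝ} {θ : E} {α : ℝ} (h : sphere (0 : E) 1) :
    ∫ r in Ioi (0 : ℝ), r ^ (Module.finrank ℝ E - 1) •
      (secondDiff u θ (r • (h : E)) * ‖r • (h : E)‖ ^ (-(Module.finrank ℝ E : ℝ) - α)) =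
      secondDiffIntegral α u θ h := by
  refine setIntegral_congr_fun measurableSet_Ioi fun r hr ↦ ?_
  rw [norm_smul, norm_eq_of_mem_sphere, mul_one, norm_of_nonneg (le_of_lt hr), smul_eq_mul]
  exact pow_finrank_sub_one_mul_rpow hr _ _

theorem measurableSet_lt_norm {E : Type*} [NormedAddCommGroup E] [MeasurableSpace E]
    [OpensMeasurableSpace E] (δ : ℝ) : MeasurableSet {w : E | δ < ‖w‖} :=
  measurableSet_lt measurable_const measurable_norm

variable {E : Type*} [NormedAddCommGroup E] [NormedSpace ℝ E] [MeasurableSpace E]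
  [BorelSpace E] [FiniteDimensional ℝ E] (μ : Measure E) [μ.IsAddHaarMeasure]

section

variable {F : Type*} [NormedAddCommGroup F]

theorem integrable_smul_toSphere_prod {f : E → F} (hf : Integrable f μ) :
    Integrable (fun z : sphere (0 : E) 1 × Ioi (0 : ℝ) ↦ f ((z.2 : ℝ) • (z.1 : E)))
      (μ.toSphere.prod (.volumeIoiPow (Module.finrank ℝ E - 1))) := by
  rw [← μ.measurePreserving_homeomorphUnitSphereProd.integrable_comp_emb
    (Homeomorph.measurableEmbedding _), comp_smul_homeomorphUnitSphereProd,
    ← integrableOn_iff_comap_subtypeVal (measurableSet_singleton _).compl]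
  exact hf.integrableOn

variable [NormedSpace ℝ F]

theorem integrable_toSphere_integral_Ioi {f : E → F} (hf : Integrable f μ) :
    Integrable (fun h : sphere (0 : E) 1 ↦
      ∫ r in Ioi (0 : ℝ), r ^ (Module.finrank ℝ E - 1) • f (r • (h : E))) μ.toSphere :=
  (integrable_smul_toSphere_prod μ hf).integral_prod_left.congr
    (.of_forall fun h ↦ integral_volumeIoiPow _ fun r : ℝ ↦ f (r • (h : E)))

theorem integral_eq_integral_toSphere [Nontrivial E] {f : E → F} (hf : Integrable f μ) :
    ∫ x, f x ∂μ = ∫ h : sphere (0 : E) 1,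
      (∫ r in Ioi (0 : ℝ), r ^ (Module.finrank ℝ E - 1) • f (r • (h : E))) ∂μ.toSphere := by
  calc ∫ x, f x ∂μ = ∫ x : ({(0)}ᶜ : Set E), f x ∂(μ.comap (↑)) := by
        rw [integral_subtype_comap (measurableSet_singleton _).compl f, restrict_compl_singleton]
    _ = ∫ z : sphere (0 : E) 1 × Ioi (0 : ℝ), f ((z.2 : ℝ) • (z.1 : E))
          ∂μ.toSphere.prod (.volumeIoiPow (Module.finrank ℝ E - 1)) := by
        rw [← μ.measurePreserving_homeomorphUnitSphereProd.integral_comp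
          (Homeomorph.measurableEmbedding _)]
        exact congrArg (integral _) (comp_smul_homeomorphUnitSphereProd f).symm
    _ = _ := by
        rw [integral_prod _ (integrable_smul_toSphere_prod μ hf)]
        exact integral_congr_ae
          (.of_forall fun h ↦ integral_volumeIoiPow _ fun r : ℝ ↦ f (r • (h : E)))

end

variable {u g : E → ℝ} {θ : E} {α B δ : ℝ} [Nontrivial E]

theorem integrableOn_mul_norm_rpow_of_le_min {s : Set E} {K : ℝ} (hα : 0 < α) (hα2 : α < 2)
    (hs : MeasurableSet s) (hg : Measurable g) (hK : ∀ w ∈ s, |g w| ≤ K * min (‖w‖ ^ 2) 1) :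
    IntegrableOn (fun w ↦ g w * ‖w‖ ^ (-(Module.finrank ℝ E : ℝ) - α)) s μ := by
  set N : ℝ := -(Module.finrank ℝ E : ℝ) - α
  have hdom : Integrable (fun w : E ↦ min (‖w‖ ^ 2) 1 * ‖w‖ ^ N) μ := by
    rw [integrable_fun_norm_addHaar μ (f := fun t ↦ min (t ^ 2) 1 * t ^ N)]
    exact (integrableOn_Ioi_min_sq_one_mul_rpow hα hα2).congr_fun
      (fun t ht ↦ (pow_finrank_sub_one_mul_rpow ht _ _).symm) measurableSet_Ioi
  refine (hdom.const_mul K).integrableOn.mono' (by fun_prop) ((ae_restrict_iff' hs).2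
    (.of_forall fun w hw ↦ ?_))
  rw [norm_mul, Real.norm_eq_abs, Real.norm_of_nonneg (by positivity), ← mul_assoc]
  exact mul_le_mul_of_nonneg_right (hK w hw) (by positivity)

theorem integrable_secondDiff_mul_norm_rpow (hα : 0 < α) (hα2 : α < 2) (hm : Measurable u)
    (hB : ∀ x, |u x| ≤ B) (hu : ContDiffAt ℝ 2 u θ) :
    Integrable (fun w ↦ secondDiff u θ w * ‖w‖ ^ (-(Module.finrank ℝ E : ℝ) - α)) μ := by
  obtain ⟨K, hK⟩ := exists_abs_secondDiff_le_min hB hu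
  rw [← integrableOn_univ]
  refine integrableOn_mul_norm_rpow_of_le_min μ hα hα2 .univ ?_ fun w _ ↦ hK w
  unfold secondDiff
  fun_prop

theorem integrableOn_mul_norm_rpow_of_bounded (hα : 0 < α) (hα2 : α < 2) (hδ : 0 < δ)
    (hm : Measurable g) (hB : ∀ x, |g x| ≤ B) :
    IntegrableOn (fun w ↦ g w * ‖w‖ ^ (-(Module.finrank ℝ E : ℝ) - α)) {w | δ < ‖w‖} μ := by
  refine integrableOn_mul_norm_rpow_of_le_min μ (K := B / min (δ ^ 2) 1) hα hα2
    (measurableSet_lt_norm δ) hm fun w hw ↦ (hB w).trans ?_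
  have hB0 : 0 ≤ B := (abs_nonneg _).trans (hB w)
  have hmin : min (δ ^ 2) 1 ≤ min (‖w‖ ^ 2) 1 :=
    min_le_min_right 1 (pow_le_pow_left₀ hδ.le (le_of_lt hw) 2)
  rw [div_mul_eq_mul_div, le_div_iff₀ (by positivity)]
  exact mul_le_mul_of_nonneg_left hmin hB0

theorem tendsto_setIntegral_lt_norm {F : Type*} [NormedAddCommGroup F] [NormedSpace ℝ F]
    {g : E → F} (hg : Integrable g μ) :
    Tendsto (fun δ : ℝ ↦ ∫ w in {w | δ < ‖w‖}, g w ∂μ) (𝓝[>] 0) (𝓝 (∫ w, g w ∂μ)) := by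
  have hcover : AECover μ (𝓝[>] (0 : ℝ)) fun δ ↦ {w : E | δ < ‖w‖} := by
    refine ⟨?_, measurableSet_lt_norm⟩
    filter_upwards [Measure.ae_ne μ 0] with w hw
    exact mem_nhdsWithin_of_mem_nhds (Iio_mem_nhds (norm_pos_iff.2 hw))
  exact hcover.integral_tendsto_of_countably_generated hg

theorem setIntegral_sub_mul_norm_rpow_eq (hα : 0 < α) (hα2 : α < 2) (hδ : 0 < δ)
    (hm : Measurable u) (hB : ∀ x, |u x| ≤ B) :
    ∫ y in {y | δ < ‖y - θ‖}, (u y - u θ) * ‖y - θ‖ ^ (-(Module.finrank ℝ E : ℝ) - α) ∂μ =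
      2⁻¹ * ∫ w in {w | δ < ‖w‖}, secondDiff u θ w * ‖w‖ ^ (-(Module.finrank ℝ E : ℝ) - α) ∂μ := by
  set N : ℝ := -(Module.finrank ℝ E : ℝ) - α
  set S : Set E := {w | δ < ‖w‖}
  have hS : MeasurableSet S := measurableSet_lt_norm δ
  have hbd : ∀ x, |u x - u θ| ≤ B + B := fun x ↦
    (abs_sub _ _).trans (add_le_add (hB x) (hB θ))
  have hright := integrableOn_mul_norm_rpow_of_bounded μ (g := fun w ↦ u (θ + w) - u θ) hα hα2 hδ
    (by fun_prop) (fun w ↦ hbd _)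
  have hleft := integrableOn_mul_norm_rpow_of_bounded μ (g := fun w ↦ u (θ - w) - u θ) hα hα2 hδ
    (by fun_prop) (fun w ↦ hbd _)
  have htranslate : ∫ y in {y | δ < ‖y - θ‖}, (u y - u θ) * ‖y - θ‖ ^ N ∂μ =
      ∫ w in S, (u (θ + w) - u θ) * ‖w‖ ^ N ∂μ := by
    rw [← integral_indicator (measurableSet_lt measurable_const (by fun_prop)),
      ← integral_indicator hS, ← integral_add_left_eq_self _ θ]
    simp [S, indicator]
  have hreflect : ∫ w in S, (u (θ + w) - u θ) * ‖w‖ ^ N ∂μ =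
      ∫ w in S, (u (θ - w) - u θ) * ‖w‖ ^ N ∂μ := by
    rw [← integral_indicator hS, ← integral_indicator hS, ← integral_neg_eq_self]
    simp [S, indicator, sub_eq_add_neg]
  have hadd : ∫ w in S, secondDiff u θ w * ‖w‖ ^ N ∂μ =
      (∫ w in S, (u (θ + w) - u θ) * ‖w‖ ^ N ∂μ) +
      ∫ w in S, (u (θ - w) - u θ) * ‖w‖ ^ N ∂μ := by
    rw [← integral_add hright hleft]
    congr 1 with w
    rw [secondDiff]
    ring
  rw [hadd, ← hreflect, htranslate]
  ring

theorem integrable_secondDiffIntegral_toSphere (hα : 0 < α) (hα2 : α < 2) (hm : Measurable u)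
    (hB : ∀ x, |u x| ≤ B) (hu : ContDiffAt ℝ 2 u θ) :
    Integrable (fun h : sphere (0 : E) 1 ↦ secondDiffIntegral α u θ h) μ.toSphere := by
  simpa only [integral_Ioi_pow_smul_secondDiff] using
    integrable_toSphere_integral_Ioi μ (integrable_secondDiff_mul_norm_rpow μ hα hα2 hm hB hu)

theorem tendsto_setIntegral_sub_mul_norm_rpow (hα : 0 < α) (hα2 : α < 2) (hm : Measurable u)
    (hB : ∀ x, |u x| ≤ B) (hu : ContDiffAt ℝ 2 u θ) :
    Tendsto (fun δ ↦ ∫ y in {y | δ < ‖y - θ‖},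
        (u y - u θ) * ‖y - θ‖ ^ (-(Module.finrank ℝ E : ℝ) - α) ∂μ)
      (𝓝[>] 0) (𝓝 (2⁻¹ * ∫ h : sphere (0 : E) 1, secondDiffIntegral α u θ h ∂μ.toSphere)) := by
  have hint := integrable_secondDiff_mul_norm_rpow μ hα hα2 hm hB hu
  simp only [← integral_Ioi_pow_smul_secondDiff]
  rw [← integral_eq_integral_toSphere μ hint]
  refine ((tendsto_setIntegral_lt_norm μ hint).const_mul 2⁻¹).congr' ?_
  filter_upwards [self_mem_nhdsWithin] with δ hδ
  exact (setIntegral_sub_mul_norm_rpow_eq μ hα hα2 hδ hm hB).symm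

end Polar

theorem fracLapAt_integral_secondDiffIntegral {d : ℕ} [Nontrivial (Ed d)] {u : Ed d → ℝ}
    {θ : Ed d} {α B : ℝ} (hα : 0 < α) (hα2 : α < 2) (hm : Measurable u) (hB : ∀ x, |u x| ≤ B)
    (hu : ContDiffAt ℝ 2 u θ) :
    fracLapAt d α u θ (fracConst d α * (2⁻¹ * ∫ h : sphere (0 : Ed d) 1,
      secondDiffIntegral α u θ h ∂(volume : Measure (Ed d)).toSphere)) := by
  have hlim := tendsto_setIntegral_sub_mul_norm_rpow volume hα hα2 hm hB hu
  rw [finrank_euclideanSpace_fin] at hlim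
  exact hlim.const_mul _

/-! ### Moments of the distance to the axis over the unit sphere -/

section TransverseMoment

variable {n : ℕ} {α : ℝ}

theorem pow_pred_smul_rpow_mul_exp (hn : 1 ≤ n) (α : ℝ) {r : ℝ} (hr : 0 < r) :
    r ^ (n - 1) • (r ^ α * exp (-r ^ 2)) = r ^ ((n : ℝ) - 1 + α) * exp (-r ^ (2 : ℝ)) := by
  rw [smul_eq_mul, ← mul_assoc, rpow_add hr, ← Nat.cast_pred (by lia), rpow_natCast, rpow_two]

theorem integral_Ioi_pow_pred_smul_rpow_mul_exp (hn : 1 ≤ n) (hα : 0 < α) :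
    ∫ r in Ioi (0 : ℝ), r ^ (n - 1) • (r ^ α * exp (-r ^ 2)) =
      1 / 2 * Gamma ((n + α) / 2) := by
  have hn1 : (1 : ℝ) ≤ n := by exact_mod_cast hn
  rw [setIntegral_congr_fun measurableSet_Ioi fun r hr ↦ pow_pred_smul_rpow_mul_exp hn α hr,
    integral_rpow_mul_exp_neg_rpow two_pos (by linarith)]
  ring_nf

theorem integrable_norm_rpow_mul_exp (hn : 1 ≤ n) (hα : 0 < α) :
    Integrable fun x : Ed n ↦ ‖x‖ ^ α * exp (-‖x‖ ^ 2) := by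
  have : Nonempty (Fin n) := ⟨⟨0, hn⟩⟩
  have hn1 : (1 : ℝ) ≤ n := by exact_mod_cast hn
  rw [integrable_fun_norm_addHaar volume (f := fun r : ℝ ↦ r ^ α * exp (-r ^ 2)),
    finrank_euclideanSpace_fin]
  exact (integrableOn_rpow_mul_exp_neg_rpow (by linarith) two_pos).congr_fun
    (fun r hr ↦ (pow_pred_smul_rpow_mul_exp hn α hr).symm) measurableSet_Ioi

theorem integral_norm_rpow_mul_exp (hn : 1 ≤ n) (hα : 0 < α) :
    ∫ x : Ed n, ‖x‖ ^ α * exp (-‖x‖ ^ 2) =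
      π ^ ((n : ℝ) / 2) * Gamma ((n + α) / 2) / Gamma ((n : ℝ) / 2) := by
  have : Nonempty (Fin n) := ⟨⟨0, hn⟩⟩
  have : (0 : ℝ) < n := by exact_mod_cast hn
  have : 0 < Gamma ((n : ℝ) / 2) := Gamma_pos_of_pos (by positivity)
  have hball : volume.real (ball (0 : Ed n) 1) =
      π ^ ((n : ℝ) / 2) / ((n : ℝ) / 2 * Gamma ((n : ℝ) / 2)) := by
    rw [measureReal_def, EuclideanSpace.volume_ball, Fintype.card_fin, ENNReal.ofReal_one, one_pow,
      one_mul, ENNReal.toReal_ofReal (by positivity), Gamma_add_one (by positivity), sqrt_eq_rpow,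
      ← rpow_mul_natCast pi_pos.le]
    ring_nf
  rw [integral_fun_norm_addHaar volume (fun r : ℝ ↦ r ^ α * exp (-r ^ 2)),
    finrank_euclideanSpace_fin, integral_Ioi_pow_pred_smul_rpow_mul_exp hn hα, hball,
    nsmul_eq_mul, smul_eq_mul]
  field_simp

/-- The measurable identification of `ℝⁿ⁺¹` with `ℝ × ℝⁿ` that splits off the last coordinate. -/
noncomputable def splitLast (n : ℕ) : Ed (n + 1) ≃ᵐ ℝ × Ed n :=
  ((MeasurableEquiv.toLp 2 (Fin (n + 1) → ℝ)).symm.trans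
    (MeasurableEquiv.piFinSuccAbove (fun _ ↦ ℝ) (Fin.last n))).trans
    ((MeasurableEquiv.refl ℝ).prodCongr (MeasurableEquiv.toLp 2 (Fin n → ℝ)))

theorem measurePreserving_splitLast (n : ℕ) : MeasurePreserving (splitLast n) :=
  ((EuclideanSpace.volume_preserving_symm_measurableEquiv_toLp _).trans
    (volume_preserving_piFinSuccAbove (fun _ ↦ ℝ) (Fin.last n))).trans
    ((MeasurePreserving.id volume).prod
      (EuclideanSpace.volume_preserving_symm_measurableEquiv_toLp (Fin n)).symm)

theorem splitLast_fst (x : Ed (n + 1)) : (splitLast n x).1 = x (Fin.last n) := rfl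

theorem splitLast_snd_apply (x : Ed (n + 1)) (i : Fin n) :
    (splitLast n x).2 i = x i.castSucc := by
  rw [← Fin.succAbove_last]
  rfl

theorem tnorm_nonneg {d : ℕ} (x : Ed d) : 0 ≤ tnorm d x := sqrt_nonneg _

theorem tnorm_sq_eq_sum {d : ℕ} (x : Ed d) :
    tnorm d x ^ 2 = ∑ i : Fin d, if (i : ℕ) < d - 1 then x i ^ 2 else 0 :=
  sq_sqrt (Finset.sum_nonneg fun i _ ↦ by split_ifs <;> positivity)

theorem tnorm_sq_eq_sum_castSucc (x : Ed (n + 1)) :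
    tnorm (n + 1) x ^ 2 = ∑ i : Fin n, x i.castSucc ^ 2 := by
  rw [tnorm_sq_eq_sum, Fin.sum_univ_castSucc]
  simp

theorem norm_splitLast_snd (x : Ed (n + 1)) : ‖(splitLast n x).2‖ = tnorm (n + 1) x := by
  rw [← sq_eq_sq₀ (norm_nonneg _) (tnorm_nonneg x), tnorm_sq_eq_sum_castSucc,
    EuclideanSpace.real_norm_sq_eq]
  simp only [splitLast_snd_apply]

theorem norm_sq_eq_tnorm_sq_add (x : Ed (n + 1)) :
    ‖x‖ ^ 2 = tnorm (n + 1) x ^ 2 + x (Fin.last n) ^ 2 := by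
  rw [tnorm_sq_eq_sum_castSucc, EuclideanSpace.real_norm_sq_eq, Fin.sum_univ_castSucc]

theorem tnorm_smul {d : ℕ} (r : ℝ) (x : Ed d) : tnorm d (r • x) = |r| * tnorm d x := by
  rw [← sq_eq_sq₀ (tnorm_nonneg _) (mul_nonneg (abs_nonneg r) (tnorm_nonneg x)), mul_pow, sq_abs,
    tnorm_sq_eq_sum, tnorm_sq_eq_sum, Finset.mul_sum]
  refine Finset.sum_congr rfl fun i _ ↦ ?_
  rw [PiLp.smul_apply, smul_eq_mul, mul_ite, mul_pow, mul_zero]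

theorem tnorm_rpow_mul_exp_eq (x : Ed (n + 1)) :
    tnorm (n + 1) x ^ α * exp (-‖x‖ ^ 2) = exp (-(splitLast n x).1 ^ 2) *
      (‖(splitLast n x).2‖ ^ α * exp (-‖(splitLast n x).2‖ ^ 2)) := by
  rw [splitLast_fst, norm_splitLast_snd, norm_sq_eq_tnorm_sq_add, neg_add, exp_add]
  ring

theorem integrable_tnorm_rpow_mul_exp (hn : 1 ≤ n) (hα : 0 < α) :
    Integrable fun x : Ed (n + 1) ↦ tnorm (n + 1) x ^ α * exp (-‖x‖ ^ 2) := by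
  have hgauss : Integrable fun t : ℝ ↦ exp (-t ^ 2) := by
    simpa using integrable_exp_neg_mul_sq one_pos
  simp only [tnorm_rpow_mul_exp_eq]
  exact ((measurePreserving_splitLast n).integrable_comp_emb
    (splitLast n).measurableEmbedding).2 (hgauss.mul_prod (integrable_norm_rpow_mul_exp hn hα))

theorem integral_tnorm_rpow_mul_exp (hn : 1 ≤ n) (hα : 0 < α) :
    ∫ x : Ed (n + 1), tnorm (n + 1) x ^ α * exp (-‖x‖ ^ 2) =
      √π * (π ^ ((n : ℝ) / 2) * Gamma ((n + α) / 2) / Gamma ((n : ℝ) / 2)) := by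
  have hgauss : ∫ t : ℝ, exp (-t ^ 2) = √π := by simpa using integral_gaussian 1
  simp only [tnorm_rpow_mul_exp_eq]
  rw [(measurePreserving_splitLast n).integral_comp (splitLast n).measurableEmbedding
      fun z : ℝ × Ed n ↦ exp (-z.1 ^ 2) * (‖z.2‖ ^ α * exp (-‖z.2‖ ^ 2)),
    Measure.volume_eq_prod, integral_prod_mul (fun t : ℝ ↦ exp (-t ^ 2))
      fun z : Ed n ↦ ‖z‖ ^ α * exp (-‖z‖ ^ 2), hgauss, integral_norm_rpow_mul_exp hn hα]

theorem integral_Ioi_tnorm_rpow_mul_exp_smul {d : ℕ} (hd : 1 ≤ d) (hα : 0 < α)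
    (h : sphere (0 : Ed d) 1) :
    ∫ r in Ioi (0 : ℝ), r ^ (Module.finrank ℝ (Ed d) - 1) •
      (tnorm d (r • (h : Ed d)) ^ α * exp (-‖r • (h : Ed d)‖ ^ 2)) =
      tnorm d (h : Ed d) ^ α * (1 / 2 * Gamma ((d + α) / 2)) := by
  rw [← integral_Ioi_pow_pred_smul_rpow_mul_exp hd hα, ← integral_const_mul,
    finrank_euclideanSpace_fin]
  refine setIntegral_congr_fun measurableSet_Ioi fun r (hr : 0 < r) ↦ ?_
  simp only [tnorm_smul, norm_smul, norm_eq_of_mem_sphere, norm_eq_abs, abs_of_pos hr, mul_one,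
    smul_eq_mul]
  rw [mul_rpow hr.le (tnorm_nonneg _)]
  ring

theorem integral_sphere_tnorm_rpow {d : ℕ} (hd : 2 ≤ d) (hα : 0 < α) :
    ∫ h : sphere (0 : Ed d) 1, tnorm d (h : Ed d) ^ α ∂(volume : Measure (Ed d)).toSphere =
      2 * π ^ ((d : ℝ) / 2) * Gamma (((d : ℝ) - 1 + α) / 2) /
        (Gamma (((d : ℝ) - 1) / 2) * Gamma (((d : ℝ) + α) / 2)) := by
  obtain ⟨n, rfl⟩ : ∃ n, d = n + 1 := ⟨d - 1, by lia⟩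
  have hn : 1 ≤ n := by lia
  have : (0 : ℝ) < n := by exact_mod_cast hn
  have hgauss := integral_tnorm_rpow_mul_exp hn hα
  rw [integral_eq_integral_toSphere volume (integrable_tnorm_rpow_mul_exp hn hα)] at hgauss
  simp only [integral_Ioi_tnorm_rpow_mul_exp_smul n.succ_pos hα, integral_mul_const] at hgauss
  have : 0 < Gamma (((n + 1 : ℕ) + α) / 2) := Gamma_pos_of_pos (by positivity)
  have hΓ' : 0 < Gamma ((n : ℝ) / 2) := Gamma_pos_of_pos (by positivity)
  have hπ : π ^ (((n + 1 : ℕ) : ℝ) / 2) = √π * π ^ ((n : ℝ) / 2) := by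
    rw [sqrt_eq_rpow, ← rpow_add pi_pos]
    push_cast
    ring_nf
  rw [mul_div_assoc', eq_div_iff hΓ'.ne'] at hgauss
  rw [hπ, Nat.cast_succ, add_sub_cancel_right, ← Nat.cast_succ, eq_div_iff (by positivity)]
  linarith

end TransverseMoment

/-! ### The shifted cone and the function `u` -/

section Cone

variable {d : ℕ} {α ε : ℝ}

theorem lastCoord_eq_inner (x : Ed d) : lastCoord d x = ⟪eLast d, x⟫ := by
  unfold lastCoord eLast
  split_ifs <;> simp [EuclideanSpace.inner_single_left]

theorem lastCoord_add (x y : Ed d) : lastCoord d (x + y) = lastCoord d x + lastCoord d y := by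
  simp only [lastCoord_eq_inner, inner_add_right]

theorem lastCoord_smul (r : ℝ) (x : Ed d) : lastCoord d (r • x) = r * lastCoord d x := by
  simp only [lastCoord_eq_inner, inner_smul_right]

theorem contDiff_lastCoord {n : WithTop ℕ∞} : ContDiff ℝ n (lastCoord d) := by
  simp only [funext lastCoord_eq_inner]
  exact contDiff_const.inner ℝ contDiff_id

theorem tnorm_sq_eq_sub (x : Ed d) : tnorm d x ^ 2 = ‖x‖ ^ 2 - lastCoord d x ^ 2 := by
  cases d with
  | zero => simp [tnorm_sq_eq_sum, lastCoord, Subsingleton.elim x 0]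
  | succ n => simp [norm_sq_eq_tnorm_sq_add, lastCoord, Fin.last]

theorem abs_lastCoord_le_norm (x : Ed d) : |lastCoord d x| ≤ ‖x‖ := by
  refine abs_le_of_sq_le_sq ?_ (norm_nonneg x)
  linarith [tnorm_sq_eq_sub x, sq_nonneg (tnorm d x)]

theorem tnorm_le_norm (x : Ed d) : tnorm d x ≤ ‖x‖ := by
  refine le_of_sq_le_sq ?_ (norm_nonneg x)
  linarith [tnorm_sq_eq_sub x, sq_nonneg (lastCoord d x)]

theorem continuous_tnorm : Continuous (tnorm d) := by
  unfold tnorm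
  refine continuous_sqrt.comp (continuous_finsetSum _ fun i _ ↦ ?_)
  split_ifs <;> fun_prop

theorem norm_eLast (hd : 1 ≤ d) : ‖eLast d‖ = 1 := by
  simp [eLast, Nat.lt_of_succ_le hd]

theorem lastCoord_eLast (hd : 1 ≤ d) : lastCoord d (eLast d) = 1 := by
  rw [lastCoord_eq_inner, real_inner_self_eq_norm_sq, norm_eLast hd, one_pow]

theorem norm_sub_lastCoord_smul_eLast (hd : 1 ≤ d) (x : Ed d) :
    ‖x - lastCoord d x • eLast d‖ = tnorm d x := by
  rw [← sq_eq_sq₀ (norm_nonneg _) (tnorm_nonneg x), norm_sub_sq_real, tnorm_sq_eq_sub,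
    inner_smul_right, real_inner_comm, ← lastCoord_eq_inner, norm_smul, norm_eLast hd, norm_eq_abs,
    mul_one, sq_abs]
  ring

theorem norm_sq_half_smul_eLast_add (hd : 1 ≤ d) {w : Ed d} (hw : ‖w‖ = 1 / 2) :
    ‖(1 / 2 : ℝ) • eLast d + w‖ ^ 2 = 1 / 2 + lastCoord d w := by
  rw [norm_add_sq_real, real_inner_smul_left, ← lastCoord_eq_inner, norm_smul, norm_eLast hd, hw,
    norm_of_nonneg (by norm_num)]
  ring

theorem inversion_involutive : Function.Involutive (inversion d) := by
  intro x
  rcases eq_or_ne x 0 with rfl | hx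
  · simp only [inversion, smul_zero]
  · have hx' : ‖x‖ ≠ 0 := norm_ne_zero_iff.2 hx
    have hnorm : ((‖x‖ ^ 2)⁻¹ * ‖x‖) ^ 2 = (‖x‖ ^ 2)⁻¹ := by field_simp
    simp only [inversion, norm_smul, smul_smul, norm_inv, norm_pow, norm_norm]
    rw [hnorm, inv_inv, mul_inv_cancel₀ (pow_ne_zero 2 hx'), one_smul]

theorem Lspindle_eq_preimage : Lspindle d ε = inversion d ⁻¹' Vcone d (2 * arctan ε) :=
  congrFun (image_eq_preimage_of_inverse inversion_involutive.leftInverse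
    inversion_involutive.rightInverse) _

theorem inversion_half_smul_eLast_add_mem_Lspindle_iff {w : Ed d} :
    inversion d ((1 / 2 : ℝ) • eLast d + w) ∈ Lspindle d ε ↔ w ∈ cone d (2 * arctan ε) := by
  rw [Lspindle_eq_preimage, mem_preimage, inversion_involutive, Vcone, mem_ofPred_eq,
    add_sub_cancel_left]

theorem measurable_inversion : Measurable (inversion d) := by
  unfold inversion
  fun_prop

theorem measurable_ystar : Measurable (ystar d) := by
  have := measurable_inversion (d := d)
  unfold ystar
  fun_prop

theorem measurable_uFn : Measurable (uFn d α ε) := by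
  have hcone : MeasurableSet (cone d (2 * arctan ε)) :=
    measurableSet_lt (by fun_prop) (contDiff_lastCoord (n := 0)).continuous.measurable
  have hspindle : MeasurableSet (Lspindle d ε) := by
    rw [Lspindle_eq_preimage]
    exact measurable_inversion ((measurable_id.sub_const _) hcone)
  have htnorm : Measurable fun y ↦ tnorm d (ystar d y) :=
    continuous_tnorm.measurable.comp measurable_ystar
  have hprofile : Measurable fun y ↦
      Cexit d α * max (ε ^ 2 - tnorm d (ystar d y) ^ 2) 0 ^ (α / 2) := by fun_prop
  have hsStar : Measurable (sStar d α ε) := by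
    unfold sStar
    exact Measurable.ite hspindle hprofile measurable_const
  unfold uFn
  exact Measurable.ite (measurableSet_singleton 0) measurable_const
    (hsStar.comp measurable_inversion)

theorem Cexit_pos (hd : 2 ≤ d) (hα : 0 < α) : 0 < Cexit d α := by
  have hd2 : (2 : ℝ) ≤ d := by exact_mod_cast hd
  have := Gamma_pos_of_pos (s := ((d : ℝ) - 1) / 2) (by linarith)
  have := Gamma_pos_of_pos (s := ((d : ℝ) - 1 + α) / 2) (by linarith)
  have := Gamma_pos_of_pos (s := 1 + α / 2) (by linarith)
  unfold Cexit
  positivity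

theorem abs_uFn_le (hα : 0 ≤ α) (hε : 0 ≤ ε) (hC : 0 ≤ Cexit d α) (y : Ed d) :
    |uFn d α ε y| ≤ Cexit d α * ε ^ α := by
  have hbound : 0 ≤ Cexit d α * ε ^ α := mul_nonneg hC (rpow_nonneg hε α)
  unfold uFn sStar
  split_ifs with h0 hy
  · rwa [abs_zero]
  · rw [abs_of_nonneg (by positivity)]
    refine mul_le_mul_of_nonneg_left ?_ hC
    calc max (ε ^ 2 - tnorm d (ystar d (inversion d y)) ^ 2) 0 ^ (α / 2)
        ≤ (ε ^ 2) ^ (α / 2) := by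
          refine rpow_le_rpow (le_max_right _ _) (max_le ?_ (sq_nonneg ε)) (by positivity)
          exact sub_le_self _ (sq_nonneg _)
      _ = ε ^ α := by
          rw [← rpow_natCast_mul hε, Nat.cast_ofNat, mul_div_cancel₀ α two_ne_zero]
  · rwa [abs_zero]

/-- The secant of the opening angle `2 arctan ε` of the cone. -/
noncomputable def coneSec (ε : ℝ) : ℝ := (1 + ε ^ 2) / (1 - ε ^ 2)

theorem one_le_coneSec (hε : ε ^ 2 < 1) : 1 ≤ coneSec ε := by
  rw [coneSec, le_div_iff₀ (by linarith)]
  linarith [sq_nonneg ε]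

theorem coneSec_sub_one_div_add_one (hε : ε ^ 2 < 1) :
    (coneSec ε - 1) / (coneSec ε + 1) = ε ^ 2 := by
  have hne : 1 - ε ^ 2 ≠ 0 := by linarith
  rw [coneSec]
  field_simp
  ring

theorem cos_two_mul_arctan (ε : ℝ) : cos (2 * arctan ε) = (coneSec ε)⁻¹ := by
  have h : 1 + ε ^ 2 ≠ 0 := by positivity
  rw [cos_two_mul, cos_sq_arctan, coneSec, inv_div]
  field_simp
  ring

theorem mem_cone_two_mul_arctan_iff (hε : ε ^ 2 < 1) {w : Ed d} :
    w ∈ cone d (2 * arctan ε) ↔ ‖w‖ < lastCoord d w * coneSec ε := by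
  rw [cone, mem_ofPred_eq, cos_two_mul_arctan, ← div_eq_mul_inv,
    div_lt_iff₀ (one_pos.trans_le (one_le_coneSec hε))]

theorem lastCoord_pos_of_mem_cone (hε : ε ^ 2 < 1) {w : Ed d} (hw : w ∈ cone d (2 * arctan ε)) :
    0 < lastCoord d w :=
  pos_of_mul_pos_left ((norm_nonneg w).trans_lt ((mem_cone_two_mul_arctan_iff hε).1 hw))
    (zero_le_one.trans (one_le_coneSec hε))

/-- The point where the ray through `w` meets the hyperplane at height `1`, relative to the
axis. -/
noncomputable def axialSlope (d : ℕ) (w : Ed d) : Ed d := (lastCoord d w)⁻¹ • w - eLast d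

theorem one_add_norm_axialSlope_sq (hd : 1 ≤ d) {w : Ed d} (hw : lastCoord d w ≠ 0) :
    1 + ‖axialSlope d w‖ ^ 2 = (‖w‖ / lastCoord d w) ^ 2 := by
  rw [axialSlope, norm_sub_sq_real, real_inner_smul_left, real_inner_comm, ← lastCoord_eq_inner,
    inv_mul_cancel₀ hw, norm_smul, norm_eLast hd, norm_inv, norm_eq_abs, mul_pow, inv_pow, sq_abs]
  ring

theorem norm_axialSlope_sq_lt_of_mem_cone (hd : 1 ≤ d) (hε : ε ^ 2 < 1) {w : Ed d}
    (hw : w ∈ cone d (2 * arctan ε)) : ‖axialSlope d w‖ ^ 2 < coneSec ε ^ 2 - 1 := by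
  have hpos := lastCoord_pos_of_mem_cone hε hw
  have hlt : (‖w‖ / lastCoord d w) ^ 2 < coneSec ε ^ 2 :=
    pow_lt_pow_left₀ ((div_lt_iff₀' hpos).2 ((mem_cone_two_mul_arctan_iff hε).1 hw))
      (by positivity) two_ne_zero
  linarith [one_add_norm_axialSlope_sq hd hpos.ne']

theorem contDiffAt_norm_axialSlope_sq {w : Ed d} (hw : lastCoord d w ≠ 0) {n : WithTop ℕ∞} :
    ContDiffAt ℝ n (fun y ↦ ‖axialSlope d y‖ ^ 2) w :=
  (((contDiff_lastCoord.contDiffAt.inv hw).smul contDiffAt_id).sub contDiffAt_const).norm_sq ℝ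

theorem tnorm_sq_ystar_inversion (hd : 1 ≤ d) {w : Ed d} (hw : 0 < lastCoord d w) :
    tnorm d (ystar d (inversion d ((1 / 2 : ℝ) • eLast d + w))) ^ 2 =
      (‖w‖ - lastCoord d w) / (‖w‖ + lastCoord d w) := by
  have hpos : 0 < ‖w‖ := hw.trans_le ((le_abs_self _).trans (abs_lastCoord_le_norm w))
  have hunit : ‖(2 * ‖w‖)⁻¹ • w‖ = 1 / 2 := by
    rw [norm_smul, norm_of_nonneg (by positivity)]
    field_simp
  have hpolar : ‖(1 / 2 : ℝ) • eLast d + (2 * ‖w‖)⁻¹ • w‖ ^ 2 =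
      (‖w‖ + lastCoord d w) / (2 * ‖w‖) := by
    rw [norm_sq_half_smul_eLast_add hd hunit, lastCoord_smul]
    field_simp
  have : 0 < ‖w‖ + lastCoord d w := by positivity
  rw [ystar, inversion_involutive, add_sub_cancel_left, inversion, tnorm_smul, mul_pow, sq_abs,
    tnorm_sq_eq_sub, hpolar, lastCoord_add, lastCoord_smul, lastCoord_smul, lastCoord_eLast hd]
  field_simp
  ring

theorem uFn_half_smul_eLast_add (hd : 1 ≤ d) (hα : 0 < α) (hε : ε ^ 2 < 1) {w : Ed d}
    (hw : 0 < lastCoord d w) :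
    uFn d α ε ((1 / 2 : ℝ) • eLast d + w) = Cexit d α *
      max (ε ^ 2 - (‖w‖ - lastCoord d w) / (‖w‖ + lastCoord d w)) 0 ^ (α / 2) := by
  have hne : (1 / 2 : ℝ) • eLast d + w ≠ 0 := by
    intro h
    have h0 := congrArg (lastCoord d) h
    rw [lastCoord_add, lastCoord_smul, lastCoord_eLast hd, lastCoord_eq_inner 0,
      inner_zero_right] at h0
    linarith
  rw [uFn, if_neg hne, sStar, tnorm_sq_ystar_inversion hd hw,
    inversion_half_smul_eLast_add_mem_Lspindle_iff, mem_cone_two_mul_arctan_iff hε]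
  split_ifs with hcone
  · rfl
  have hsec := coneSec_sub_one_div_add_one hε
  have hsec1 := one_le_coneSec hε
  have hnonpos : ε ^ 2 - (‖w‖ - lastCoord d w) / (‖w‖ + lastCoord d w) ≤ 0 := by
    rw [← hsec, sub_nonpos, div_le_div_iff₀ (by positivity) (by positivity)]
    nlinarith
  rw [max_eq_right hnonpos, zero_rpow (by positivity), mul_zero]

theorem div_add_one_sub_div_add_one {P Q : ℝ} (hP : 0 < P) (hQ : 0 < Q) :
    (P - 1) / (P + 1) - (Q - 1) / (Q + 1) =
      (P ^ 2 - Q ^ 2) * (2 / ((P + 1) * (Q + 1) * (P + Q))) := by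
  field_simp
  ring

theorem uFn_eq_coneFactor (hd : 1 ≤ d) (hα : 0 < α) (hε : ε ^ 2 < 1) {w : Ed d}
    (hw : 0 < lastCoord d w) :
    uFn d α ε ((1 / 2 : ℝ) • eLast d + w) = Cexit d α *
      (max (coneSec ε ^ 2 - 1 - ‖axialSlope d w‖ ^ 2) 0 ^ (α / 2) *
        coneFactor (α / 2) (coneSec ε) (‖axialSlope d w‖ ^ 2)) := by
  have hQ : 0 < ‖w‖ / lastCoord d w :=
    div_pos (hw.trans_le ((le_abs_self _).trans (abs_lastCoord_le_norm w))) hw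
  have hP : 0 < coneSec ε := one_pos.trans_le (one_le_coneSec hε)
  have hslope := one_add_norm_axialSlope_sq hd hw.ne'
  have hQdiv : (‖w‖ - lastCoord d w) / (‖w‖ + lastCoord d w) =
      (‖w‖ / lastCoord d w - 1) / (‖w‖ / lastCoord d w + 1) := by field_simp
  rw [uFn_half_smul_eLast_add hd hα hε hw, hQdiv, ← coneSec_sub_one_div_add_one hε,
    div_add_one_sub_div_add_one hP hQ, coneFactor, hslope, sqrt_sq hQ.le,
    ← mul_rpow (le_max_right _ _) (by positivity), max_mul_of_nonneg _ _ (by positivity),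
    zero_mul, sub_sub, hslope]

theorem contDiffAt_uFn (hd : 1 ≤ d) (hα : 0 < α) (hε : ε ^ 2 < 1) {w : Ed d}
    (hw : w ∈ cone d (2 * arctan ε)) :
    ContDiffAt ℝ 2 (uFn d α ε) ((1 / 2 : ℝ) • eLast d + w) := by
  set e : Ed d := (1 / 2 : ℝ) • eLast d
  have hpos := lastCoord_pos_of_mem_cone hε hw
  have hlt := norm_axialSlope_sq_lt_of_mem_cone hd hε hw
  have hX : ContDiffAt ℝ 2 (fun y ↦ ‖axialSlope d y‖ ^ 2) w :=
    contDiffAt_norm_axialSlope_sq hpos.ne'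
  have hsmooth : ContDiffAt ℝ 2 (fun y ↦ Cexit d α *
      ((coneSec ε ^ 2 - 1 - ‖axialSlope d y‖ ^ 2) ^ (α / 2) *
        coneFactor (α / 2) (coneSec ε) (‖axialSlope d y‖ ^ 2))) w :=
    contDiffAt_const.mul (((contDiffAt_const.sub hX).rpow_const_of_ne (by linarith)).mul
      (contDiffAt_coneFactor contDiffAt_const hX (one_le_coneSec hε) (by positivity)))
  have htranslate : ContDiffAt ℝ 2 (fun y ↦ uFn d α ε (e + y)) w := by
    refine hsmooth.congr_of_eventuallyEq ?_
    filter_upwards [continuousAt_const.eventually_lt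
        (contDiff_lastCoord (n := 0)).continuous.continuousAt hpos,
      hX.continuousAt.eventually_lt continuousAt_const hlt] with y hy hylt
    rw [uFn_eq_coneFactor hd hα hε hy, max_eq_left (by linarith)]
  have hsub : ContDiffAt ℝ 2 (fun y : Ed d ↦ y - e) (e + w) := by fun_prop
  simpa [Function.comp_def] using
    ContDiffAt.comp (e + w) (by rwa [add_sub_cancel_left]) hsub (g := fun y ↦ uFn d α ε (e + y))

/-- The velocity of `axialSlope` along the line `w + ℝ h`, in the projective parameter of
`axialSlope_add_smul`. -/
noncomputable def slopeVelocity (d : ℕ) (w h : Ed d) : Ed d :=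
  h - (lastCoord d h / lastCoord d w) • w

theorem axialSlope_add_smul {w h : Ed d} {t : ℝ} (hw : lastCoord d w ≠ 0)
    (ht : lastCoord d w + lastCoord d h * t ≠ 0) :
    axialSlope d (w + t • h) = axialSlope d w +
      (t / (lastCoord d w + lastCoord d h * t)) • slopeVelocity d w h := by
  have hlast : lastCoord d (w + t • h) = lastCoord d w + lastCoord d h * t := by
    rw [lastCoord_add, lastCoord_smul, mul_comm t]
  rw [axialSlope, axialSlope, slopeVelocity, hlast, smul_sub, smul_smul, smul_add, smul_smul]
  match_scalars <;> field_simp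
  ring

theorem norm_axialSlope_add_smul_sq {w h : Ed d} {t : ℝ} (hw : lastCoord d w ≠ 0)
    (ht : lastCoord d w + lastCoord d h * t ≠ 0) :
    ‖axialSlope d (w + t • h)‖ ^ 2 = lineQuadratic (‖axialSlope d w‖ ^ 2)
      ⟪axialSlope d w, slopeVelocity d w h⟫ ‖slopeVelocity d w h‖
      (t / (lastCoord d w + lastCoord d h * t)) := by
  rw [axialSlope_add_smul hw ht, norm_add_sq_real, inner_smul_right, norm_smul, mul_pow,
    norm_eq_abs, sq_abs, lineQuadratic]
  ring

theorem abs_norm_slopeVelocity_sub_tnorm_le (hd : 1 ≤ d) (w : Ed d) {h : Ed d} (hh : ‖h‖ = 1) :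
    |‖slopeVelocity d w h‖ - tnorm d h| ≤ ‖axialSlope d w‖ := by
  have hlast : |lastCoord d h| ≤ 1 := (abs_lastCoord_le_norm h).trans_eq hh
  have hdiff : slopeVelocity d w h - (h - lastCoord d h • eLast d) =
      (-lastCoord d h) • axialSlope d w := by
    rw [axialSlope, slopeVelocity]
    module
  calc |‖slopeVelocity d w h‖ - tnorm d h|
      ≤ ‖slopeVelocity d w h - (h - lastCoord d h • eLast d)‖ := by
        rw [← norm_sub_lastCoord_smul_eLast hd]
        exact abs_norm_sub_norm_le _ _
    _ = |lastCoord d h| * ‖axialSlope d w‖ := by rw [hdiff, norm_smul, norm_neg, norm_eq_abs]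
    _ ≤ ‖axialSlope d w‖ := mul_le_of_le_one_left (norm_nonneg _) hlast

end Cone

/-! ### Second differences of `u` along lines -/

section UFnLines

variable {d : ℕ} {α ε ρ c t : ℝ} {w h : Ed d}

theorem coneSec_le_one_add (h0 : 0 < ε) (h1 : ε < 1 / 20) : coneSec ε ≤ 1 + 3 * ε := by
  rw [coneSec, div_le_iff₀ (by nlinarith)]
  nlinarith [mul_pos h0 h0]

theorem coneSec_sq_sub_one_le (h0 : 0 < ε) (h1 : ε < 1 / 20) :
    coneSec ε ^ 2 - 1 ≤ (3 * ε) ^ 2 := by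
  have hε : 9 / 10 ≤ 1 - ε ^ 2 := by nlinarith
  have hsec : coneSec ε ^ 2 - 1 = (2 * ε / (1 - ε ^ 2)) ^ 2 := by
    rw [coneSec]
    field_simp
    ring
  rw [hsec]
  refine pow_le_pow_left₀ (by positivity) ?_ 2
  rw [div_le_iff₀ (by linarith)]
  nlinarith

theorem norm_axialSlope_le (hd : 1 ≤ d) (h0 : 0 < ε) (h1 : ε < 1 / 20)
    (hw : w ∈ cone d (2 * arctan ε)) : ‖axialSlope d w‖ ≤ 3 * ε := by
  refine le_of_sq_le_sq ?_ (by positivity)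
  linarith [norm_axialSlope_sq_lt_of_mem_cone hd (by nlinarith) hw, coneSec_sq_sub_one_le h0 h1]

theorem lastCoord_mem_Icc_of_mem_cone (h0 : 0 < ε) (h1 : ε < 1 / 20)
    (hw : w ∈ cone d (2 * arctan ε)) (hn : ‖w‖ = 1 / 2) :
    lastCoord d w ∈ Icc (1 / 2 - ε) (1 / 2) := by
  have hlt := (mem_cone_two_mul_arctan_iff (by nlinarith)).1 hw
  have hle : lastCoord d w ≤ 1 / 2 := hn ▸ (le_abs_self _).trans (abs_lastCoord_le_norm w)
  have hsec : coneSec ε ≤ 1 + 2 * ε := by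
    rw [coneSec, div_le_iff₀ (by nlinarith)]
    nlinarith [mul_pos h0 h0]
  have hpos := lastCoord_pos_of_mem_cone (by nlinarith) hw
  have := mul_le_mul_of_nonneg_left hsec hpos.le
  exact ⟨by nlinarith, hle⟩

theorem norm_slopeVelocity_le_two (hd : 1 ≤ d) (h0 : 0 < ε) (h1 : ε < 1 / 20)
    (hw : w ∈ cone d (2 * arctan ε)) (hh : ‖h‖ = 1) : ‖slopeVelocity d w h‖ ≤ 2 := by
  have hdiff := (abs_norm_slopeVelocity_sub_tnorm_le hd w hh).trans (norm_axialSlope_le hd h0 h1 hw)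
  linarith [le_of_abs_le hdiff, (tnorm_le_norm h).trans_eq hh]

theorem isNarrowLine_of_mem_cone (hd : 1 ≤ d) (h0 : 0 < ε) (h1 : ε < 1 / 20)
    (hw : w ∈ cone d (2 * arctan ε)) (hh : ‖h‖ = 1) :
    IsNarrowLine ε (coneSec ε ^ 2 - 1) (coneSec ε) (‖axialSlope d w‖ ^ 2)
      ⟪axialSlope d w, slopeVelocity d w h⟫ ‖slopeVelocity d w h‖ (lastCoord d h) where
  pos := h0
  lt := h1
  le_sq := coneSec_sq_sub_one_le h0 h1
  one_le := one_le_coneSec (by nlinarith)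
  le_two := by linarith [coneSec_le_one_add h0 h1]
  nonneg := sq_nonneg _
  mem := norm_axialSlope_sq_lt_of_mem_cone hd (by nlinarith) hw
  slope_sq_le := by
    rw [← mul_pow, sq_le_sq, abs_of_nonneg (mul_nonneg (norm_nonneg _) (norm_nonneg _))]
    exact abs_real_inner_le_norm _ _
  speed_nonneg := norm_nonneg _
  speed_le := norm_slopeVelocity_le_two hd h0 h1 hw hh
  tilt_mem := abs_le.1 ((abs_lastCoord_le_norm h).trans_eq hh)

theorem add_mul_pos_of_mem_Icc (hρ : 0 < ρ) (hc : c ∈ Icc (-1) 1)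
    (ht : t ∈ Icc (-(ρ * (1 / 4) / (1 + c * (1 / 4)))) (ρ * (1 / 4) / (1 - c * (1 / 4)))) :
    0 < ρ + c * t := by
  obtain ⟨ht1, ht2⟩ := ht
  obtain ⟨hc1, hc2⟩ := hc
  rw [neg_le, le_div_iff₀ (by linarith)] at ht1
  rw [le_div_iff₀ (by linarith)] at ht2
  nlinarith

theorem uFn_line_eq_coneLine (hd : 1 ≤ d) (hα : 0 < α) (hε : ε ^ 2 < 1) (hw : 0 < lastCoord d w)
    (ht : 0 < lastCoord d w + lastCoord d h * t) :
    uFn d α ε ((1 / 2 : ℝ) • eLast d + w + t • h) = Cexit d α *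
      coneLine (α / 2) (coneSec ε ^ 2 - 1) (coneSec ε) (‖axialSlope d w‖ ^ 2)
        ⟪axialSlope d w, slopeVelocity d w h⟫ ‖slopeVelocity d w h‖
        (t / (lastCoord d w + lastCoord d h * t)) := by
  have hlast : 0 < lastCoord d (w + t • h) := by
    rwa [lastCoord_add, lastCoord_smul, mul_comm t]
  rw [add_assoc, uFn_eq_coneFactor hd hα hε hlast, norm_axialSlope_add_smul_sq hw.ne' ht.ne',
    coneLine, lineRpow]

theorem exists_abs_secondDiffIntegral_uFn_add_coneFactor_le (hd : 2 ≤ d) (hα : 0 < α)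
    (hα2 : α < 2) :
    ∃ C : ℝ, 0 ≤ C ∧ ∀ {ε : ℝ} {w h : Ed d}, 0 < ε → ε < 1 / 20 → w ∈ cone d (2 * arctan ε) →
      ‖w‖ = 1 / 2 → ‖h‖ = 1 →
      |secondDiffIntegral α (uFn d α ε) ((1 / 2 : ℝ) • eLast d + w) h +
        Cexit d α * (lastCoord d w ^ (-α) * (coneFactor (α / 2) (coneSec ε)
          (‖axialSlope d w‖ ^ 2) * (Gamma (α / 2) * Gamma (1 - α / 2) *
            ‖slopeVelocity d w h‖ ^ α)))| ≤ Cexit d α * (C * omegaFn α ε) := by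
  have hd1 : 1 ≤ d := by lia
  have hC0 := Cexit_pos hd hα
  obtain ⟨C, hC, hmain⟩ := exists_abs_secondDiffIntegral_coneLine_add_le hα hα2
  refine ⟨C, hC, fun {ε w h} h0 h1 hw hn hh ↦ ?_⟩
  have hε : ε ^ 2 < 1 := by nlinarith
  have hline := isNarrowLine_of_mem_cone hd1 h0 h1 hw hh
  have hρ := lastCoord_mem_Icc_of_mem_cone h0 h1 hw hn
  have hρ0 : 0 < lastCoord d w := by linarith [hρ.1]
  set θ : Ed d := (1 / 2 : ℝ) • eLast d + w with hθ
  set f : ℝ → ℝ := fun t ↦ (Cexit d α)⁻¹ * uFn d α ε (θ + t • h) with hf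
  have hbound : ∀ t, |f t| ≤ 9 * ε ^ α := fun t ↦ by
    rw [hf, abs_mul, abs_of_pos (inv_pos.2 hC0), inv_mul_le_iff₀ hC0]
    refine (abs_uFn_le hα.le h0.le hC0.le _).trans (mul_le_mul_of_nonneg_left ?_ hC0.le)
    linarith [rpow_nonneg h0.le α]
  have hmeas : Measurable f := (measurable_uFn.comp (by fun_prop)).const_mul _
  have hscale : secondDiffIntegral α f 0 1 =
      (Cexit d α)⁻¹ * secondDiffIntegral α (uFn d α ε) θ h := by
    rw [← secondDiffIntegral_const_mul]
    exact secondDiffIntegral_congr_line α fun t ↦ by simp [hf]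
  have hkey := hmain hline _ ⟨by linarith [hρ.1], hρ.2⟩ f hmeas hbound fun t ht ↦ by
    simp only [hf, hθ]
    rw [uFn_line_eq_coneLine hd1 hα hε hρ0
      (add_mul_pos_of_mem_Icc hρ0 hline.tilt_mem ht), inv_mul_cancel_left₀ hC0.ne']
  rw [hscale] at hkey
  have := mul_le_mul_of_nonneg_left hkey hC0.le
  rwa [← abs_of_pos hC0, ← abs_mul, abs_of_pos hC0, mul_add, mul_inv_cancel_left₀ hC0.ne'] at this

end UFnLines

/-! ### The limit of narrow cones -/

section NarrowLimit

variable {d : ℕ} {α ε ρ q s a b p x : ℝ} {w h : Ed d}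

theorem abs_rpow_sub_one_le (hp : 0 ≤ p) (hp1 : p ≤ 1) (hx : 0 < x) : |x ^ p - 1| ≤ |x - 1| := by
  rcases le_total 1 x with h1x | hx1
  · rw [abs_of_nonneg (sub_nonneg.2 (one_le_rpow h1x hp)), abs_of_nonneg (sub_nonneg.2 h1x)]
    linarith [rpow_le_self_of_one_le h1x hp1]
  · rw [abs_of_nonpos (sub_nonpos.2 (rpow_le_one hx.le hx1 hp)), abs_of_nonpos (sub_nonpos.2 hx1)]
    linarith [self_le_rpow_of_le_one hx.le hx1 hp1]

theorem abs_eight_mul_sq_div_sub_one_le (h0 : 0 < ε) (h1 : ε < 1 / 20)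
    (hs : s ∈ Icc 1 (1 + 3 * ε)) (hq : q ∈ Icc 1 (1 + 3 * ε)) :
    |8 * q ^ 2 / ((s + 1) * (q + 1) * (s + q)) - 1| ≤ 20 * ε := by
  obtain ⟨hs1, hs2⟩ := hs
  obtain ⟨hq1, hq2⟩ := hq
  have hlower : 8 ≤ (s + 1) * (q + 1) * (s + q) := by
    have : 4 ≤ (s + 1) * (q + 1) := by nlinarith
    nlinarith
  have hupper : (s + 1) * (q + 1) * (s + q) ≤ 8 + 80 * ε := by
    calc (s + 1) * (q + 1) * (s + q)
        ≤ (1 + 3 * ε + 1) * (1 + 3 * ε + 1) * (1 + 3 * ε + (1 + 3 * ε)) := by gcongr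
      _ ≤ 8 + 80 * ε := by nlinarith [mul_pos h0 h0, mul_pos (mul_pos h0 h0) h0]
  generalize (s + 1) * (q + 1) * (s + q) = D at hlower hupper
  have hD : 0 < D := by linarith
  rw [div_sub_one hD.ne', abs_div, abs_of_pos hD, div_le_iff₀ hD, abs_le]
  constructor <;> nlinarith [mul_pos h0 h0]

theorem rpow_neg_mul_coneFactor (hρ : 0 < ρ) (hs : 1 ≤ s) :
    ρ ^ (-α) * coneFactor (α / 2) s ((1 / 2 / ρ) ^ 2 - 1) =
      (8 * (1 / 2 / ρ) ^ 2 / ((s + 1) * (1 / 2 / ρ + 1) * (s + 1 / 2 / ρ))) ^ (α / 2) := by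
  have hρα : ρ ^ (-α) = (4 * (1 / 2 / ρ) ^ 2) ^ (α / 2) := by
    have hsq : 4 * (1 / 2 / ρ) ^ 2 = ρ ^ (-2 : ℝ) := by
      rw [rpow_neg hρ.le, rpow_two]
      field_simp
      norm_num
    rw [hsq, ← rpow_mul hρ.le]
    ring_nf
  rw [coneFactor, add_sub_cancel, sqrt_sq (by positivity), hρα,
    ← mul_rpow (by positivity) (by positivity)]
  ring_nf

theorem abs_rpow_neg_mul_coneFactor_sub_one_le (hα : 0 < α) (hα2 : α < 2) (h0 : 0 < ε)
    (h1 : ε < 1 / 20) (hs : s ∈ Icc 1 (1 + 3 * ε)) (hρ : ρ ∈ Icc (1 / 2 - ε) (1 / 2)) :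
    |ρ ^ (-α) * coneFactor (α / 2) s ((1 / 2 / ρ) ^ 2 - 1) - 1| ≤ 20 * ε := by
  have hρ0 : 0 < ρ := by linarith [hρ.1]
  have hq : 1 / 2 / ρ ∈ Icc 1 (1 + 3 * ε) := by
    constructor
    · rw [le_div_iff₀ hρ0]
      linarith [hρ.2]
    · rw [div_le_iff₀ hρ0]
      nlinarith [hρ.1]
  have := hs.1
  rw [rpow_neg_mul_coneFactor hρ0 hs.1]
  exact (abs_rpow_sub_one_le (by linarith) (by linarith) (by positivity)).trans
    (abs_eight_mul_sq_div_sub_one_le h0 h1 hs hq)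

theorem abs_rpow_neg_two_mul_sub_one_le (hα : 0 < α) (hα2 : α < 2) (h1 : ε < 1 / 20) (hx : 0 ≤ x)
    (hx2 : x ^ 2 ∈ Icc (1 - ε) 1) : |x ^ (-(2 * α)) - 1| ≤ 3 * ε := by
  have h0 : 0 ≤ ε := by linarith [hx2.1, hx2.2]
  have hy : 0 < x ^ 2 := by linarith [hx2.1]
  have hpow : x ^ (-(2 * α)) = (x ^ 2) ^ (-α) := by
    rw [← rpow_natCast_mul hx, Nat.cast_ofNat, mul_neg]
  have hlower : 1 ≤ (x ^ 2) ^ (-α) :=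
    one_le_rpow_of_pos_of_le_one_of_nonpos hy hx2.2 (by linarith)
  have hupper : (x ^ 2) ^ (-α) ≤ 1 + 3 * ε := by
    refine (rpow_le_rpow_of_exponent_ge hy hx2.2 (by linarith : (-2 : ℝ) ≤ -α)).trans ?_
    rw [rpow_neg hy.le, rpow_two, inv_le_iff_one_le_mul₀ (by positivity)]
    have := pow_le_pow_left₀ (by linarith) hx2.1 2
    nlinarith [mul_nonneg h0 h0]
  rw [hpow, abs_of_nonneg (by linarith)]
  linarith

theorem rpow_sub_rpow_le_mul_sub (hα : 1 ≤ α) (hb : 0 ≤ b) (hba : b ≤ a) :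
    a ^ α - b ^ α ≤ α * a ^ (α - 1) * (a - b) := by
  rcases (hb.trans hba).eq_or_lt with rfl | ha
  · simp [le_antisymm hba hb]
  have hbernoulli := one_add_mul_self_le_rpow_one_add (s := b / a - 1)
    (by linarith [div_nonneg hb ha.le]) hα
  rw [add_sub_cancel, div_rpow hb ha.le, le_div_iff₀ (by positivity)] at hbernoulli
  have hexpand : (1 + α * (b / a - 1)) * a ^ α = a ^ α - α * a ^ (α - 1) * (a - b) := by
    rw [rpow_sub_one ha.ne']
    field_simp
    ring
  linarith

theorem rpow_sub_rpow_le_omegaFn (hα : 0 < α) (hα2 : α < 2) (h0 : 0 < ε) (h1 : ε < 1 / 20)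
    (hb : 0 ≤ b) (hba : b ≤ a) (ha : a ≤ 2) (hab : a - b ≤ 3 * ε) :
    a ^ α - b ^ α ≤ 12 * omegaFn α ε := by
  have hab0 : 0 ≤ a - b := sub_nonneg.2 hba
  have hω := omegaFn_nonneg (α := α) h0 h1
  rcases le_total α 1 with hα1 | hα1
  · have hsubadd := rpow_add_le_add_rpow hab0 hb hα.le hα1
    rw [sub_add_cancel] at hsubadd
    calc a ^ α - b ^ α ≤ (a - b) ^ α := by linarith
      _ ≤ (3 * ε) ^ α := by gcongr
      _ = 3 ^ α * ε ^ α := mul_rpow (by norm_num) h0.le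
      _ ≤ 3 * omegaFn α ε := by
        gcongr
        exacts [rpow_le_self_of_one_le (by norm_num) hα1, rpow_le_omegaFn h0 h1]
      _ ≤ 12 * omegaFn α ε := by linarith
  · have ha0 : 0 ≤ a := hb.trans hba
    have hpow : a ^ (α - 1) ≤ 2 :=
      (rpow_le_rpow ha0 ha (by linarith)).trans
        (rpow_le_self_of_one_le (by norm_num) (by linarith))
    calc a ^ α - b ^ α ≤ α * a ^ (α - 1) * (a - b) := rpow_sub_rpow_le_mul_sub hα1 hb hba
      _ ≤ 2 * 2 * (3 * ε) := by gcongr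
      _ ≤ 12 * omegaFn α ε := by linarith [le_omegaFn (α := α) h0 h1]

theorem abs_rpow_sub_rpow_le_omegaFn (hα : 0 < α) (hα2 : α < 2) (h0 : 0 < ε) (h1 : ε < 1 / 20)
    (ha : a ∈ Icc 0 2) (hb : b ∈ Icc 0 2) (hab : |a - b| ≤ 3 * ε) :
    |a ^ α - b ^ α| ≤ 12 * omegaFn α ε := by
  wlog hba : b ≤ a generalizing a b
  · rw [abs_sub_comm] at hab ⊢
    exact this hb ha hab (le_of_not_ge hba)
  rw [abs_of_nonneg (sub_nonneg.2 (rpow_le_rpow hb.1 hba hα.le))]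
  exact rpow_sub_rpow_le_omegaFn hα hα2 h0 h1 hb.1 hba ha.2 ((le_abs_self _).trans hab)

theorem abs_coneFactor_mul_slopeVelocity_sub_tnorm_le (hd : 1 ≤ d) (hα : 0 < α) (hα2 : α < 2)
    (h0 : 0 < ε) (h1 : ε < 1 / 20) (hw : w ∈ cone d (2 * arctan ε)) (hn : ‖w‖ = 1 / 2)
    (hh : ‖h‖ = 1) :
    |lastCoord d w ^ (-α) * coneFactor (α / 2) (coneSec ε) (‖axialSlope d w‖ ^ 2) *
      ‖slopeVelocity d w h‖ ^ α - tnorm d h ^ α| ≤ 92 * omegaFn α ε := by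
  have hε : ε ^ 2 < 1 := by nlinarith
  have hX : ‖axialSlope d w‖ ^ 2 = (1 / 2 / lastCoord d w) ^ 2 - 1 := by
    rw [← hn, ← one_add_norm_axialSlope_sq hd (lastCoord_pos_of_mem_cone hε hw).ne',
      add_sub_cancel_left]
  have hκ := norm_slopeVelocity_le_two hd h0 h1 hw hh
  have hfactor := abs_rpow_neg_mul_coneFactor_sub_one_le hα hα2 h0 h1
    ⟨one_le_coneSec hε, coneSec_le_one_add h0 h1⟩ (lastCoord_mem_Icc_of_mem_cone h0 h1 hw hn)
  have hspeed := abs_rpow_sub_rpow_le_omegaFn hα hα2 h0 h1 ⟨norm_nonneg _, hκ⟩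
    ⟨tnorm_nonneg h, by linarith [tnorm_le_norm h]⟩
    ((abs_norm_slopeVelocity_sub_tnorm_le hd w hh).trans (norm_axialSlope_le hd h0 h1 hw))
  have hκα : ‖slopeVelocity d w h‖ ^ α ≤ 4 := by
    calc ‖slopeVelocity d w h‖ ^ α ≤ 2 ^ α := by gcongr
      _ ≤ 2 ^ (2 : ℝ) := rpow_le_rpow_of_exponent_le (by norm_num) hα2.le
      _ = 4 := by norm_num
  have hκα0 : 0 ≤ ‖slopeVelocity d w h‖ ^ α := by positivity
  rw [← hX] at hfactor
  set N := lastCoord d w ^ (-α) * coneFactor (α / 2) (coneSec ε) (‖axialSlope d w‖ ^ 2)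
  calc |N * ‖slopeVelocity d w h‖ ^ α - tnorm d h ^ α|
      = |(N - 1) * ‖slopeVelocity d w h‖ ^ α +
          (‖slopeVelocity d w h‖ ^ α - tnorm d h ^ α)| := by ring_nf
    _ ≤ |N - 1| * ‖slopeVelocity d w h‖ ^ α + |‖slopeVelocity d w h‖ ^ α - tnorm d h ^ α| := by
        rw [← abs_of_nonneg hκα0, ← abs_mul, abs_of_nonneg hκα0]
        exact abs_add_le _ _
    _ ≤ 20 * ε * 4 + 12 * omegaFn α ε := by gcongr
    _ ≤ 92 * omegaFn α ε := by linarith [le_omegaFn (α := α) h0 h1]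

theorem exists_abs_secondDiffIntegral_uFn_add_le (hd : 2 ≤ d) (hα : 0 < α) (hα2 : α < 2) :
    ∃ C : ℝ, 0 ≤ C ∧ ∀ {ε : ℝ} {w h : Ed d}, 0 < ε → ε < 1 / 20 → w ∈ cone d (2 * arctan ε) →
      ‖w‖ = 1 / 2 → ‖h‖ = 1 →
      |secondDiffIntegral α (uFn d α ε) ((1 / 2 : ℝ) • eLast d + w) h +
        Cexit d α * (Gamma (α / 2) * Gamma (1 - α / 2)) * tnorm d h ^ α| ≤ C * omegaFn α ε := by
  obtain ⟨C, hC, hmain⟩ := exists_abs_secondDiffIntegral_uFn_add_coneFactor_le hd hα hα2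
  set B := Cexit d α * (Gamma (α / 2) * Gamma (1 - α / 2))
  have hC0 := Cexit_pos hd hα
  have hB : 0 < B := mul_pos hC0
    (mul_pos (Gamma_pos_of_pos (by linarith)) (Gamma_pos_of_pos (by linarith)))
  refine ⟨Cexit d α * C + B * 92, by positivity, fun {ε w h} h0 h1 hw hn hh ↦ ?_⟩
  have hline := hmain h0 h1 hw hn hh
  have hlimit := abs_coneFactor_mul_slopeVelocity_sub_tnorm_le (by lia) hα hα2 h0 h1 hw hn hh
  set J := secondDiffIntegral α (uFn d α ε) ((1 / 2 : ℝ) • eLast d + w) h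
  set N := lastCoord d w ^ (-α) * coneFactor (α / 2) (coneSec ε) (‖axialSlope d w‖ ^ 2)
  have hline' : |J + B * (N * ‖slopeVelocity d w h‖ ^ α)| ≤ Cexit d α * (C * omegaFn α ε) := by
    convert hline using 2
    ring
  calc |J + B * tnorm d h ^ α|
      = |J + B * (N * ‖slopeVelocity d w h‖ ^ α) -
          B * (N * ‖slopeVelocity d w h‖ ^ α - tnorm d h ^ α)| := by ring_nf
    _ ≤ |J + B * (N * ‖slopeVelocity d w h‖ ^ α)| +
          B * |N * ‖slopeVelocity d w h‖ ^ α - tnorm d h ^ α| := by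
        refine (abs_sub _ _).trans_eq ?_
        rw [abs_mul B, abs_of_pos hB]
    _ ≤ Cexit d α * (C * omegaFn α ε) + B * (92 * omegaFn α ε) := by gcongr
    _ = (Cexit d α * C + B * 92) * omegaFn α ε := by ring

theorem fracConst_pos (hα : 0 < α) (hα2 : α < 2) : 0 < fracConst d α := by
  have := Gamma_pos_of_pos (s := 1 - α / 2) (by linarith)
  have := Gamma_pos_of_pos (s := ((d : ℝ) + α) / 2) (by positivity)
  unfold fracConst
  positivity

theorem fracConst_div_two_mul_Cexit (hd : 2 ≤ d) (hα : 0 < α) (hα2 : α < 2) :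
    fracConst d α / 2 * (Cexit d α * (Gamma (α / 2) * Gamma (1 - α / 2)) *
      ∫ h : sphere (0 : Ed d) 1, tnorm d (h : Ed d) ^ α ∂(volume : Measure (Ed d)).toSphere) =
      1 := by
  have : (2 : ℝ) ≤ d := by exact_mod_cast hd
  have := Gamma_pos_of_pos (s := ((d : ℝ) - 1) / 2) (by linarith)
  have := Gamma_pos_of_pos (s := ((d : ℝ) - 1 + α) / 2) (by linarith)
  have := Gamma_pos_of_pos (s := α / 2) (by linarith)
  have hG := Gamma_pos_of_pos (s := 1 - α / 2) (by linarith)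
  have := Gamma_pos_of_pos (s := ((d : ℝ) + α) / 2) (by linarith)
  rw [integral_sphere_tnorm_rpow hd hα, fracConst, Cexit, add_comm 1 (α / 2),
    Gamma_add_one (by positivity), neg_div, rpow_neg pi_pos.le, rpow_sub two_pos, rpow_one]
  generalize Gamma (1 - α / 2) = G at hG ⊢
  field_simp

theorem nontrivial_Ed (hd : 1 ≤ d) : Nontrivial (Ed d) :=
  Module.nontrivial_of_finrank_pos (R := ℝ) (by rw [finrank_euclideanSpace_fin]; exact hd)

theorem integrable_tnorm_rpow_toSphere (hα : 0 ≤ α) :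
    Integrable (fun h : sphere (0 : Ed d) 1 ↦ tnorm d (h : Ed d) ^ α)
      (volume : Measure (Ed d)).toSphere :=
  ((continuous_tnorm.comp continuous_subtype_val).rpow_const
    fun _ ↦ .inr hα).integrable_of_hasCompactSupport (.of_compactSpace _)

theorem abs_norm_rpow_neg_two_mul_sub_one_le (hd : 1 ≤ d) (hα : 0 < α) (hα2 : α < 2) (h0 : 0 < ε)
    (h1 : ε < 1 / 20) (hw : w ∈ cone d (2 * arctan ε)) (hn : ‖w‖ = 1 / 2) :
    |‖(1 / 2 : ℝ) • eLast d + w‖ ^ (-(2 * α)) - 1| ≤ 3 * ε := by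
  have hρ := lastCoord_mem_Icc_of_mem_cone h0 h1 hw hn
  refine abs_rpow_neg_two_mul_sub_one_le hα hα2 h1 (norm_nonneg _) ?_
  rw [norm_sq_half_smul_eLast_add hd hn]
  constructor <;> linarith [hρ.1, hρ.2]

theorem exists_abs_integral_secondDiffIntegral_uFn_add_le (hd : 2 ≤ d) (hα : 0 < α)
    (hα2 : α < 2) :
    ∃ C : ℝ, 0 ≤ C ∧ ∀ {ε : ℝ} {w : Ed d}, 0 < ε → ε < 1 / 20 → w ∈ cone d (2 * arctan ε) →
      ‖w‖ = 1 / 2 →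
      |fracConst d α * (2⁻¹ * ∫ h : sphere (0 : Ed d) 1, secondDiffIntegral α (uFn d α ε)
        ((1 / 2 : ℝ) • eLast d + w) h ∂(volume : Measure (Ed d)).toSphere) + 1| ≤
        C * omegaFn α ε := by
  obtain ⟨C, hC, hline⟩ := exists_abs_secondDiffIntegral_uFn_add_le hd hα hα2
  have hd1 : 1 ≤ d := by lia
  have := nontrivial_Ed hd1
  set σ := (volume : Measure (Ed d)).toSphere
  have hA := fracConst_pos (d := d) hα hα2
  refine ⟨fracConst d α / 2 * (C * σ.real univ), by positivity, fun {ε w} h0 h1 hw hn ↦ ?_⟩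
  have hint := integrable_secondDiffIntegral_toSphere volume hα hα2 measurable_uFn
    (abs_uFn_le hα.le h0.le (Cexit_pos hd hα).le)
    (contDiffAt_uFn hd1 hα (by nlinarith) hw)
  have hbound := norm_integral_le_of_norm_le_const (μ := σ)
    (.of_forall fun h ↦ (norm_eq_abs _).trans_le (hline h0 h1 hw hn (norm_eq_of_mem_sphere h)))
  rw [integral_add hint ((integrable_tnorm_rpow_toSphere hα.le).const_mul _), integral_const_mul,
    norm_eq_abs] at hbound
  have hone := fracConst_div_two_mul_Cexit hd hα hα2
  set B := Cexit d α * (Gamma (α / 2) * Gamma (1 - α / 2))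
  set T := ∫ h : sphere (0 : Ed d) 1, tnorm d (h : Ed d) ^ α ∂σ
  set J := ∫ h : sphere (0 : Ed d) 1,
    secondDiffIntegral α (uFn d α ε) ((1 / 2 : ℝ) • eLast d + w) h ∂σ
  calc |fracConst d α * (2⁻¹ * J) + 1| = |fracConst d α / 2 * (J + B * T)| := by
        rw [mul_add, hone]
        ring_nf
    _ = fracConst d α / 2 * |J + B * T| := by rw [abs_mul, abs_of_pos (half_pos hA)]
    _ ≤ fracConst d α / 2 * (C * omegaFn α ε * σ.real univ) := by gcongr
    _ = fracConst d α / 2 * (C * σ.real univ) * omegaFn α ε := by ring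

end NarrowLimit

theorem tan_half_mem_Ioo {Θ : ℝ} (hΘ : Θ ∈ Ioo 0 (2 * arctan (1 / 20))) :
    tan (Θ / 2) ∈ Ioo 0 (1 / 20) := by
  have := arctan_lt_pi_div_two (1 / 20)
  refine ⟨tan_pos_of_pos_of_lt_pi_div_two (by linarith [hΘ.1]) (by linarith [hΘ.2]), ?_⟩
  rw [← tan_arctan (1 / 20)]
  exact tan_lt_tan_of_lt_of_lt_pi_div_two (by linarith [hΘ.1, pi_pos]) this (by linarith [hΘ.2])

theorem two_mul_arctan_tan_half {Θ : ℝ} (hΘ : Θ ∈ Ioo (-π) π) : 2 * arctan (tan (Θ / 2)) = Θ := by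
  rw [arctan_tan (by linarith [hΘ.1]) (by linarith [hΘ.2])]
  ring

/-- `Δ^{α/2} u(θ) = -|θ|^{-2α} + O(ω(ε))` for `θ` on the sphere of radius `1/2`
centered at `e_d/2`, inside the shifted cone `V_Θ`; here `u(y) = s*_ε(Ty)`, `u(0)=0`,
and `ε = tan(Θ/2)`. -/
theorem fracLap_uFn (d : ℕ) (hd : 2 ≤ d) (α : ℝ) (hα : 0 < α) (hα2 : α < 2) :
    ∃ C : ℝ, 0 < C ∧ ∃ Θ₀ ∈ Set.Ioo (0 : ℝ) π, ∀ Θ ∈ Set.Ioo (0 : ℝ) Θ₀,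
      Real.tan (Θ / 2) < 1 / 20 ∧
      ∀ θ ∈ Vcone d Θ, ‖θ - (1 / 2 : ℝ) • eLast d‖ = 1 / 2 →
        ∃ L : ℝ, fracLapAt d α (uFn d α (Real.tan (Θ / 2))) θ L ∧
          |L + ‖θ‖ ^ (-(2 * α))| ≤ C * omegaFn α (Real.tan (Θ / 2)) := by
  have hd1 : 1 ≤ d := by lia
  have := nontrivial_Ed hd1
  have hpi := arctan_lt_pi_div_two (1 / 20)
  obtain ⟨C, hC, hsphere⟩ := exists_abs_integral_secondDiffIntegral_uFn_add_le hd hα hα2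
  refine ⟨C + 3, by positivity, 2 * arctan (1 / 20), ⟨by positivity, by linarith⟩, fun Θ hΘ ↦ ?_⟩
  obtain ⟨h0, h1⟩ := tan_half_mem_Ioo hΘ
  refine ⟨h1, fun θ hθ hn ↦ ?_⟩
  have hw : θ - (1 / 2 : ℝ) • eLast d ∈ cone d (2 * arctan (tan (Θ / 2))) := by
    rwa [two_mul_arctan_tan_half ⟨by linarith [hΘ.1, pi_pos], by linarith [hΘ.2]⟩]
  generalize tan (Θ / 2) = ε at h0 h1 hw ⊢
  have hsmooth := contDiffAt_uFn hd1 hα (by nlinarith) hw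
  have hint := hsphere h0 h1 hw hn
  have hnorm := abs_norm_rpow_neg_two_mul_sub_one_le hd1 hα hα2 h0 h1 hw hn
  rw [add_sub_cancel] at hsmooth hint hnorm
  refine ⟨_, fracLapAt_integral_secondDiffIntegral hα hα2 measurable_uFn
    (abs_uFn_le hα.le h0.le (Cexit_pos hd hα).le) hsmooth, ?_⟩
  rw [abs_le] at hint hnorm ⊢
  constructor <;> linarith [hint.1, hint.2, hnorm.1, hnorm.2, le_omegaFn (α := α) h0 h1]
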